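/- Let ν ≥ 1, let N ⊆ ℝ^ν be a compact connected smooth embedded submanifold without boundary with base point b ∈ N, and let 2 ≤ p < m be real numbers with m an integer. Assume that either (a) π_ℓ(N, b) is infinite for some ℓ ∈ {1, …, ⌊p−1⌋}, or (b) p is an integer and π_{p−1}(N, b) is nontrivial. Then there exists a map u : B^{m−1} → N, smooth on the open unit ball B^{m−1} ⊆ ℝ^{m−1}, with E^{1−1/p, p}_{B^{m−1}}(u) < ∞, such that every map U : B^{m−1} × [0,1) → N that is continuous, is C^1 on B^{m−1} × (0,1), and satisfies U(x, 0) = u(x) for all x ∈ B^{m−1}, has ∫_{B^{m−1}×(0,1)} ‖DU‖^p = ∞. -/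

import Mathlib

open Metric Set MeasureTheory Filter
open scoped ENNReal Topology

noncomputable section

/-- `N ⊆ ℝ^ν` is a smooth embedded submanifold without boundary: around each of its points
there is a smooth local diffeomorphism of the ambient space flattening `N` onto a
`d`-dimensional coordinate subspace. -/
def IsSmoothSubmanifold {ν : ℕ} (N : Set (EuclideanSpace ℝ (Fin ν))) : Prop :=
  ∃ d : ℕ, ∀ x ∈ N, ∃ (U V : Set (EuclideanSpace ℝ (Fin ν)))
      (φ ψ : EuclideanSpace ℝ (Fin ν) → EuclideanSpace ℝ (Fin ν)),
    IsOpen U ∧ IsOpen V ∧ x ∈ U ∧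
    ContDiffOn ℝ (⊤ : ℕ∞) φ U ∧ ContDiffOn ℝ (⊤ : ℕ∞) ψ V ∧
    MapsTo φ U V ∧ MapsTo ψ V U ∧
    (∀ y ∈ U, ψ (φ y) = y) ∧ (∀ z ∈ V, φ (ψ z) = z) ∧
    (∀ y ∈ U, (y ∈ N ↔ ∀ i : Fin ν, d ≤ (i : ℕ) → φ y i = 0))

/-- The Gagliardo fractional energy `E^{s,p}_A(u)`. -/
def gagliardoE {l ν : ℕ} (s p : ℝ) (A : Set (EuclideanSpace ℝ (Fin l)))
    (u : EuclideanSpace ℝ (Fin l) → EuclideanSpace ℝ (Fin ν)) : ℝ≥0∞ :=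
  ∫⁻ x in A, ∫⁻ y in A, ENNReal.ofReal (‖u y - u x‖ ^ p / ‖y - x‖ ^ ((l : ℝ) + s * p))

/-- `f` is `C^1` on the closed set `A` in the sense that it is (the restriction of)
a `C^1` map on an open neighborhood of `A`. -/
def C1OnNhd {E F : Type*} [NormedAddCommGroup E] [NormedSpace ℝ E]
    [NormedAddCommGroup F] [NormedSpace ℝ F] (f : E → F) (A : Set E) : Prop :=
  ∃ V : Set E, IsOpen V ∧ A ⊆ V ∧ ContDiffOn ℝ 1 f V

/-- `f` is `C^∞` on the closed set `A` in the sense that it is (the restriction of)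
a smooth map on an open neighborhood of `A`. -/
def SmoothOnNhd {E F : Type*} [NormedAddCommGroup E] [NormedSpace ℝ E]
    [NormedAddCommGroup F] [NormedSpace ℝ F] (f : E → F) (A : Set E) : Prop :=
  ∃ V : Set E, IsOpen V ∧ A ⊆ V ∧ ContDiffOn ℝ (⊤ : ℕ∞) f V

/-- The `C^1` extension `p`-energy `E^{1,p}_ext(u)` of a map `u : B̄^l → N`:
the infimum (in `ℝ≥0∞`, so `sInf ∅ = ∞`) of `∫_{B^l × (0,1)} ‖DU‖^p` over all `C^1` maps
`U : B̄^l × [0,1] → N` with `U(·,0) = u`. -/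
def extEnergy {l ν : ℕ} (p : ℝ) (N : Set (EuclideanSpace ℝ (Fin ν)))
    (u : EuclideanSpace ℝ (Fin l) → EuclideanSpace ℝ (Fin ν)) : ℝ≥0∞ :=
  sInf { e | ∃ U : EuclideanSpace ℝ (Fin l) × ℝ → EuclideanSpace ℝ (Fin ν),
    C1OnNhd U (closedBall 0 1 ×ˢ Icc (0 : ℝ) 1) ∧
    MapsTo U (closedBall 0 1 ×ˢ Icc (0 : ℝ) 1) N ∧
    (∀ x ∈ closedBall (0 : EuclideanSpace ℝ (Fin l)) 1, U (x, 0) = u x) ∧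
    e = ∫⁻ z in ball (0 : EuclideanSpace ℝ (Fin l)) 1 ×ˢ Ioo (0 : ℝ) 1,
          ENNReal.ofReal (‖fderiv ℝ U z‖ ^ p) }

/-- `f` and `g`, mapping `B̄^l` into `N` and agreeing on `S^{l-1}`, are homotopic within `N`
relative to the sphere `S^{l-1}`. -/
def HomotopicRelSphere {l ν : ℕ} (N : Set (EuclideanSpace ℝ (Fin ν)))
    (f g : EuclideanSpace ℝ (Fin l) → EuclideanSpace ℝ (Fin ν)) : Prop :=
  ∃ H : EuclideanSpace ℝ (Fin l) × ℝ → EuclideanSpace ℝ (Fin ν),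
    ContinuousOn H (closedBall 0 1 ×ˢ Icc (0 : ℝ) 1) ∧
    MapsTo H (closedBall 0 1 ×ˢ Icc (0 : ℝ) 1) N ∧
    (∀ x ∈ closedBall (0 : EuclideanSpace ℝ (Fin l)) 1, H (x, 0) = f x ∧ H (x, 1) = g x) ∧
    (∀ x ∈ sphere (0 : EuclideanSpace ℝ (Fin l)) 1, ∀ t ∈ Icc (0 : ℝ) 1, H (x, t) = f x)

/-- The topological `p`-energy `E^{1,p}_top(u)` of `u : B̄^l → N` with `u = b` on `S^{l-1}`:
the infimum (in `ℝ≥0∞`) of `∫_{B^l} ‖Dw‖^p` over all `C^1` maps `w : B̄^l → N` with `w = b` on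
`S^{l-1}` that are homotopic to `u` relative to `S^{l-1}`. -/
def topEnergy {l ν : ℕ} (p : ℝ) (N : Set (EuclideanSpace ℝ (Fin ν)))
    (b : EuclideanSpace ℝ (Fin ν))
    (u : EuclideanSpace ℝ (Fin l) → EuclideanSpace ℝ (Fin ν)) : ℝ≥0∞ :=
  sInf { e | ∃ w : EuclideanSpace ℝ (Fin l) → EuclideanSpace ℝ (Fin ν),
    C1OnNhd w (closedBall 0 1) ∧ MapsTo w (closedBall 0 1) N ∧
    (∀ x ∈ sphere (0 : EuclideanSpace ℝ (Fin l)) 1, w x = b) ∧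
    HomotopicRelSphere N w u ∧
    e = ∫⁻ x in ball (0 : EuclideanSpace ℝ (Fin l)) 1, ENNReal.ofReal (‖fderiv ℝ w x‖ ^ p) }

/-!
Smooth maps of the cube that are `b` near the boundary represent the classes of `π_l(N, b)`. When
`l < p`, Morrey's inequality shows that only finitely many classes have representatives below a
given `p`-energy, and that the energy of nontrivial classes is bounded below. Let `T` be the infimum
of the energy in a class and `f` a nearly minimizing representative. In an extension `U` of
`f (· / δ)`, the restriction of `U` to the graph of a roof of height `r` over a cube represents the
class of `f` again for every `r ≥ (l + 1) δ`, hence has energy at least a multiple of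
`T r ^ (l - p)`; integrating in `r`, the extension energy is at least a multiple of
`T ∫ r ^ (l - p) dr`, whereas the Gagliardo energy, an interpolation between the uniform bound on
`f` and its Dirichlet energy, grows only like `T ^ (1 - 1 / p)`. If `π_l` is infinite, `T` can be
taken arbitrarily large with `δ` fixed; if `l = p - 1`, the integral is `log (1 / δ)`. Rotating `f`
about a sphere fills up the remaining dimensions at bounded cost. So the ratio of the two energies
is unbounded, and since rescaling by `s` multiplies both by the same power of `s`, which tends to
`0` with `s`, disjoint small copies placed along a sequence converging to a boundary point have
summable Gagliardo energies and unbounded extension energies.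
-/

section NearestPoint

/-- `π` sends every point of the ambient space to a point of `N` at minimal distance. -/
structure IsNearestPointMap {X : Type*} [PseudoMetricSpace X] (N : Set X) (π : X → X) : Prop where
  mem : ∀ y, π y ∈ N
  dist_le : ∀ y, ∀ q ∈ N, dist (π y) y ≤ dist q y

theorem exists_isNearestPointMap_of_isCompact {X : Type*} [PseudoMetricSpace X] {N : Set X}
    (hN : IsCompact N) (hne : N.Nonempty) : ∃ π, IsNearestPointMap N π := by
  choose π hmem hmin using fun y =>
    hN.exists_isMinOn hne (f := fun q => dist q y) (by fun_prop)
  exact ⟨π, hmem, fun y q hq => hmin y hq⟩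

namespace IsNearestPointMap

theorem apply_of_mem {X : Type*} [MetricSpace X] {N : Set X} {π : X → X}
    (hπ : IsNearestPointMap N π) {x : X} (hx : x ∈ N) : π x = x :=
  dist_le_zero.1 <| (hπ.dist_le x x hx).trans_eq (dist_self x)

variable {X : Type*} [PseudoMetricSpace X] {N : Set X} {π : X → X}

theorem dist_apply_le_two_mul (hπ : IsNearestPointMap N π) {x : X} (hx : x ∈ N) (y : X) :
    dist (π y) x ≤ 2 * dist y x := by
  linarith [hπ.dist_le y x hx, dist_triangle (π y) y x, dist_comm x y]

theorem tendsto_nhds (hπ : IsNearestPointMap N π) {x : X} (hx : x ∈ N) :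
    Tendsto π (𝓝 x) (𝓝 x) := by
  have hlim : Tendsto (fun y => 2 * dist y x) (𝓝 x) (𝓝 0) := by
    simpa using (tendsto_iff_dist_tendsto_zero.1 (tendsto_id (x := 𝓝 x))).const_mul 2
  exact tendsto_iff_dist_tendsto_zero.2 <|
    squeeze_zero (fun _ => dist_nonneg) (hπ.dist_apply_le_two_mul hx) hlim

end IsNearestPointMap

/-- The inverse function theorem in the form: the local inverse is smooth on a whole
neighbourhood of `f a`, which `ContDiffAt ℝ ∞` at the single point `f a` would not give. -/
theorem exists_contDiffOn_leftInverse {E F : Type*}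
    [NormedAddCommGroup E] [NormedSpace ℝ E] [CompleteSpace E]
    [NormedAddCommGroup F] [NormedSpace ℝ F] {f : E → F} {s : Set E} (hs : IsOpen s)
    (hf : ContDiffOn ℝ (⊤ : ℕ∞) f s) {a : E} (ha : a ∈ s) {f' : E ≃L[ℝ] F}
    (hf' : fderiv ℝ f a = f') :
    ∃ (g : F → E) (t : Set F), IsOpen t ∧ f a ∈ t ∧ ContDiffOn ℝ (⊤ : ℕ∞) g t ∧
      ∀ᶠ x in 𝓝 a, g (f x) = x := by
  have hfs : ∀ x ∈ s, ContDiffAt ℝ (⊤ : ℕ∞) f x := fun x hx => hf.contDiffAt (hs.mem_nhds hx)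
  have hder : ∀ x ∈ s, HasFDerivAt f (fderiv ℝ f x) x := fun x hx =>
    ((hfs x hx).differentiableAt (by simp)).hasFDerivAt
  let e := (hfs a ha).toOpenPartialHomeomorph f (hf' ▸ hder a ha) (by simp)
  have hae : a ∈ e.source := (hfs a ha).mem_toOpenPartialHomeomorph_source _ (by simp)
  have hinv : ∀ᶠ x in 𝓝 a, x ∈ s ∧ fderiv ℝ f x ∈ range ((↑) : (E ≃L[ℝ] F) → E →L[ℝ] F) := by
    have hcont : ContinuousAt (fderiv ℝ f) a :=
      (hf.continuousOn_fderiv_of_isOpen hs (by simp)).continuousAt (hs.mem_nhds ha)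
    exact (hs.eventually_mem ha).and (hcont.eventually (hf' ▸ ContinuousLinearEquiv.nhds f'))
  obtain ⟨o, ho, hoo, hao⟩ := _root_.eventually_nhds_iff.1 hinv
  refine ⟨e.symm, e.target ∩ e.symm ⁻¹' o, e.symm.isOpen_inter_preimage hoo,
    ⟨e.map_source hae, ?_⟩, fun y hy => ?_, ?_⟩
  · rwa [mem_preimage, show f a = e a from rfl, e.left_inv hae]
  · obtain ⟨hys, f'', hf''⟩ := ho _ hy.2
    exact (e.contDiffAt_symm hy.1 (f₀' := f'') (hf'' ▸ hder _ hys) (hfs _ hys)).contDiffWithinAt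
  · filter_upwards [e.open_source.mem_nhds hae] with x hx using e.left_inv hx

variable {H F : Type*} [NormedAddCommGroup H] [NormedSpace ℝ H]
  [NormedAddCommGroup F] [InnerProductSpace ℝ F]

/-- `σ : H → F` parametrises `N` smoothly and immersively near `x = σ s₀`, with a left inverse `τ`
that is continuous at `x`. -/
structure IsLocalParametrization (N : Set F) (σ : H → F) (τ : F → H) (V : Set H) (x : F) :
    Prop where
  isOpen : IsOpen V
  mem : τ x ∈ V
  contDiffOn : ContDiffOn ℝ (⊤ : ℕ∞) σ V
  mapsTo : MapsTo σ V N
  continuousAt : ContinuousAt τ x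
  right_inv : ∀ᶠ y in 𝓝 x, y ∈ N → σ (τ y) = y
  injective_fderiv : Function.Injective (fderiv ℝ σ (τ x))

/-- The pair `(s, y)` is sent to `(0, y)` iff `σ s - y` is normal to the image of `σ` at `s`. -/
def normalEquation (σ : H → F) (w : H × F) : (H →L[ℝ] ℝ) × F :=
  (innerSL ℝ (σ w.1 - w.2) ∘L fderiv ℝ σ w.1, w.2)

theorem contDiffOn_normalEquation {σ : H → F} {V : Set H} (hV : IsOpen V)
    (hσ : ContDiffOn ℝ (⊤ : ℕ∞) σ V) :
    ContDiffOn ℝ (⊤ : ℕ∞) (normalEquation σ) (V ×ˢ univ) := by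
  have hfst : MapsTo Prod.fst (V ×ˢ (univ : Set F)) V := fun w hw => hw.1
  have hres : ContDiffOn ℝ (⊤ : ℕ∞) (fun w : H × F => σ w.1 - w.2) (V ×ˢ univ) :=
    (hσ.comp contDiffOn_fst hfst).sub contDiffOn_snd
  have hder : ContDiffOn ℝ (⊤ : ℕ∞) (fun w : H × F => fderiv ℝ σ w.1) (V ×ˢ univ) :=
    (hσ.fderiv_of_isOpen hV (by simp)).comp contDiffOn_fst hfst
  exact (((innerSL ℝ).contDiff.comp_contDiffOn hres).clm_comp hder).prodMk contDiffOn_snd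

/-- At a point of the image the residual `σ s - y` vanishes, so the second derivative of `σ` does
not contribute. -/
theorem hasFDerivAt_normalEquation {σ : H → F} {s : H} (hσ : DifferentiableAt ℝ σ s)
    (hσ' : DifferentiableAt ℝ (fderiv ℝ σ) s) :
    ∃ L : H × F →L[ℝ] (H →L[ℝ] ℝ) × F, HasFDerivAt (normalEquation σ) L (s, σ s) ∧
      ∀ w, L w = (innerSL ℝ (fderiv ℝ σ s w.1 - w.2) ∘L fderiv ℝ σ s, w.2) := by
  have hres : HasFDerivAt (fun w : H × F => σ w.1 - w.2)
      (fderiv ℝ σ s ∘L .fst ℝ H F - .snd ℝ H F) (s, σ s) :=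
    (hσ.hasFDerivAt.comp (s, σ s) hasFDerivAt_fst).sub hasFDerivAt_snd
  have hder : HasFDerivAt (fun w : H × F => fderiv ℝ σ w.1)
      (fderiv ℝ (fderiv ℝ σ) s ∘L .fst ℝ H F) (s, σ s) :=
    hσ'.hasFDerivAt.comp (s, σ s) hasFDerivAt_fst
  refine ⟨_, (((innerSL ℝ).hasFDerivAt.comp (s, σ s) hres).clm_comp hder).prodMk
    hasFDerivAt_snd, fun w => ?_⟩
  ext v
  · simp only [ContinuousLinearMap.prod_apply, ContinuousLinearMap.coe_comp, Function.comp_apply,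
      add_apply, sub_self, map_zero, zero_apply]
    exact zero_add _
  · rfl

theorem injective_of_normalEquation_fderiv {J : H →L[ℝ] F} (hJ : Function.Injective J)
    {L : H × F →L[ℝ] (H →L[ℝ] ℝ) × F}
    (hL : ∀ w, L w = (innerSL ℝ (J w.1 - w.2) ∘L J, w.2)) : Function.Injective L := by
  refine (injective_iff_map_eq_zero L).2 fun ⟨ζ, η⟩ h0 => ?_
  rw [hL, Prod.mk_eq_zero] at h0
  obtain ⟨hJζ, rfl : η = 0⟩ := h0
  have hself : inner ℝ (J ζ) (J ζ) = 0 := by simpa using congr($hJζ ζ)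
  rw [Prod.mk_eq_zero]
  exact ⟨(injective_iff_map_eq_zero J).1 hJ ζ (inner_self_eq_zero.1 hself), rfl⟩

theorem normalEquation_eq_of_isLocalMin {σ : H → F} {s : H} (hσ : DifferentiableAt ℝ σ s) {y : F}
    (hmin : IsLocalMin (fun s' => ‖σ s' - y‖ ^ 2) s) : normalEquation σ (s, y) = (0, y) := by
  have hder := hmin.hasFDerivAt_eq_zero (hσ.hasFDerivAt.sub_const y).norm_sq
  rw [← Nat.cast_smul_eq_nsmul ℝ, smul_eq_zero_iff_right (by norm_num)] at hder
  exact congr(($hder, y))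

namespace IsLocalParametrization

variable {N : Set F} {σ : H → F} {τ : F → H} {V : Set H} {x : F}

theorem differentiableAt (h : IsLocalParametrization N σ τ V x) {s : H} (hs : s ∈ V) :
    DifferentiableAt ℝ σ s :=
  (h.contDiffOn.contDiffAt (h.isOpen.mem_nhds hs)).differentiableAt (by simp)

theorem exists_leftInverse_normalEquation [FiniteDimensional ℝ H] [FiniteDimensional ℝ F]
    (h : IsLocalParametrization N σ τ V x) (hx : σ (τ x) = x) :
    ∃ (g : (H →L[ℝ] ℝ) × F → H × F) (t : Set ((H →L[ℝ] ℝ) × F)), IsOpen t ∧ (0, x) ∈ t ∧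
      ContDiffOn ℝ (⊤ : ℕ∞) g t ∧ ∀ᶠ w in 𝓝 (τ x, x), g (normalEquation σ w) = w := by
  have : CompleteSpace H := FiniteDimensional.complete ℝ H
  have : CompleteSpace F := FiniteDimensional.complete ℝ F
  have hσ' : DifferentiableAt ℝ (fderiv ℝ σ) (τ x) :=
    ((h.contDiffOn.fderiv_of_isOpen (m := (⊤ : ℕ∞)) h.isOpen (by simp)).contDiffAt
      (h.isOpen.mem_nhds h.mem)).differentiableAt (by simp)
  obtain ⟨L, hL, hLw⟩ := hasFDerivAt_normalEquation (h.differentiableAt h.mem) hσ'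
  have hrank : Module.finrank ℝ (H × F) = Module.finrank ℝ ((H →L[ℝ] ℝ) × F) := by
    rw [Module.finrank_prod, Module.finrank_prod,
      ← (LinearMap.toContinuousLinearMap (𝕜 := ℝ) (E := H) (F' := ℝ)).finrank_eq,
      Module.finrank_linearMap, Module.finrank_self, mul_one]
  let L' : (H × F) ≃L[ℝ] (H →L[ℝ] ℝ) × F := (LinearMap.linearEquivOfInjective (L : _ →ₗ[ℝ] _)
    (injective_of_normalEquation_fderiv h.injective_fderiv hLw) hrank).toContinuousLinearEquiv
  have hL' : fderiv ℝ (normalEquation σ) (τ x, σ (τ x)) = L' := hL.fderiv.trans (by ext <;> rfl)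
  have hzero : normalEquation σ (τ x, x) = (0, x) := by ext <;> simp [normalEquation, hx]
  rw [hx] at hL'
  rw [← hzero]
  exact exists_contDiffOn_leftInverse (h.isOpen.prod isOpen_univ)
    (contDiffOn_normalEquation h.isOpen h.contDiffOn) ⟨h.mem, mem_univ _⟩ hL'

/-- The parameter `s` of the nearest point to `y` solves the normal equation, hence it depends
smoothly on `y` by the inverse function theorem. -/
theorem exists_contDiffOn_nearestPoint [FiniteDimensional ℝ H] [FiniteDimensional ℝ F]
    (h : IsLocalParametrization N σ τ V x) (hx : x ∈ N) {π : F → F}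
    (hπ : IsNearestPointMap N π) :
    ∃ W, IsOpen W ∧ x ∈ W ∧ ContDiffOn ℝ (⊤ : ℕ∞) π W := by
  obtain ⟨g, t, ht, hxt, hg, hgσ⟩ :=
    h.exists_leftInverse_normalEquation (h.right_inv.self_of_nhds hx)
  have hπx : Tendsto π (𝓝 x) (𝓝 x) := hπ.tendsto_nhds hx
  have hτπ : Tendsto (fun y => τ (π y)) (𝓝 x) (𝓝 (τ x)) := h.continuousAt.tendsto.comp hπx
  have hnear : ∀ᶠ y in 𝓝 x, (0, y) ∈ t ∧ τ (π y) ∈ V ∧ σ (τ (π y)) = π y ∧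
      g (normalEquation σ (τ (π y), y)) = (τ (π y), y) := by
    filter_upwards [(Continuous.prodMk_right (0 : H →L[ℝ] ℝ)).continuousAt.eventually
        (ht.mem_nhds hxt), hτπ.eventually (h.isOpen.mem_nhds h.mem), hπx.eventually h.right_inv,
      (hτπ.prodMk_nhds tendsto_id).eventually hgσ] with y h1 h2 h3 h4
      using ⟨h1, h2, h3 (hπ.mem y), h4⟩
  obtain ⟨W, hW, hWo, hxW⟩ := _root_.eventually_nhds_iff.1 hnear
  have hsolve : ∀ y ∈ W, g (0, y) = (τ (π y), y) := by
    intro y hy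
    obtain ⟨-, hV, hστ, hgy⟩ := hW y hy
    have hmin : IsLocalMin (fun s => ‖σ s - y‖ ^ 2) (τ (π y)) := by
      filter_upwards [h.isOpen.mem_nhds hV] with s hs
      have hle := hπ.dist_le y (σ s) (h.mapsTo hs)
      rw [dist_eq_norm, dist_eq_norm] at hle
      rw [hστ]
      gcongr
    rwa [normalEquation_eq_of_isLocalMin (h.differentiableAt hV) hmin] at hgy
  have hformula : EqOn π (fun y => σ (g (0, y)).1) W := fun y hy => by
    simp only [hsolve y hy, (hW y hy).2.2.1]
  refine ⟨W, hWo, hxW, ContDiffOn.congr ?_ hformula⟩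
  refine h.contDiffOn.comp (contDiff_fst.comp_contDiffOn (hg.comp
    (contDiff_prodMk_right 0).contDiffOn fun y hy => (hW y hy).1)) fun y hy => ?_
  simpa only [hsolve y hy] using (hW y hy).2.1

end IsLocalParametrization

theorem injective_fderiv_of_leftInverse {E G : Type*} [NormedAddCommGroup E] [NormedSpace ℝ E]
    [NormedAddCommGroup G] [NormedSpace ℝ G] {f : E → G} {g : G → E} {a : E}
    (hf : DifferentiableAt ℝ f a) (hg : DifferentiableAt ℝ g (f a))
    (hgf : ∀ᶠ x in 𝓝 a, g (f x) = x) : Function.Injective (fderiv ℝ f a) := by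
  have hid : fderiv ℝ g (f a) ∘L fderiv ℝ f a = .id ℝ E :=
    (hg.hasFDerivAt.comp a hf.hasFDerivAt).unique ((hasFDerivAt_id a).congr_of_eventuallyEq hgf)
  exact Function.LeftInverse.injective fun v => congr($hid v)

/-- The coordinate subspace `{z | z i = 0 for i ≥ d}` onto which charts of a `d`-dimensional
submanifold flatten it. -/
def coordinateSubspace (ν d : ℕ) : Submodule ℝ (EuclideanSpace ℝ (Fin ν)) where
  carrier := {z | ∀ i : Fin ν, d ≤ (i : ℕ) → z i = 0}
  add_mem' hz hw i hi := by simp [hz i hi, hw i hi]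
  zero_mem' i _ := by simp
  smul_mem' c z hz i hi := by simp [hz i hi]

theorem IsSmoothSubmanifold.exists_isLocalParametrization {ν : ℕ}
    {N : Set (EuclideanSpace ℝ (Fin ν))} (hN : IsSmoothSubmanifold N)
    {x : EuclideanSpace ℝ (Fin ν)} (hx : x ∈ N) :
    ∃ (S : Submodule ℝ (EuclideanSpace ℝ (Fin ν))) (σ : S → EuclideanSpace ℝ (Fin ν))
      (τ : EuclideanSpace ℝ (Fin ν) → S) (V : Set S), IsLocalParametrization N σ τ V x := by
  obtain ⟨d, hd⟩ := hN
  obtain ⟨U, V, φ, ψ, hU, hV, hxU, hφ, hψ, hφm, hψm, hψφ, hφψ, hiff⟩ := hd x hx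
  let S := coordinateSubspace ν d
  have hS : ∀ z : S, S.orthogonalProjectionOnto (z : EuclideanSpace ℝ (Fin ν)) = z :=
    S.orthogonalProjectionOnto_mem_subspace_eq_self
  have hproj : ∀ y ∈ U, y ∈ N →
      (S.orthogonalProjectionOnto (φ y) : EuclideanSpace ℝ (Fin ν)) = φ y :=
    fun y hyU hy => S.starProjection_eq_self_iff.2 ((hiff y hyU).1 hy)
  have hφx : ContDiffAt ℝ (⊤ : ℕ∞) φ x := hφ.contDiffAt (hU.mem_nhds hxU)
  have hψx : DifferentiableAt ℝ ψ (φ x) :=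
    (hψ.contDiffAt (hV.mem_nhds (hφm hxU))).differentiableAt (by simp)
  refine ⟨S, fun s => ψ s, fun y => S.orthogonalProjectionOnto (φ y), (↑) ⁻¹' V,
    hV.preimage continuous_subtype_val, ?_,
    hψ.comp S.subtypeL.contDiff.contDiffOn (mapsTo_preimage _ V), fun s hs => ?_,
    S.orthogonalProjectionOnto.continuous.continuousAt.comp hφx.continuousAt, ?_, ?_⟩
  · rw [mem_preimage, hproj x hxU hx]
    exact hφm hxU
  · exact (hiff _ (hψm hs)).2 ((hφψ _ hs).symm ▸ s.2)
  · filter_upwards [hU.mem_nhds hxU] with y hyU hy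
    rw [hproj y hyU hy, hψφ y hyU]
  · have hτx := hproj x hxU hx
    have hσ : DifferentiableAt ℝ (fun s : S => ψ s) (S.orthogonalProjectionOnto (φ x)) :=
      (hτx.symm ▸ hψx).comp _ S.subtypeL.differentiableAt
    refine injective_fderiv_of_leftInverse (g := fun y => S.orthogonalProjectionOnto (φ y)) hσ ?_ ?_
    · rw [hτx, hψφ x hxU]
      exact S.orthogonalProjectionOnto.differentiableAt.comp x (hφx.differentiableAt (by simp))
    · filter_upwards [(hV.preimage continuous_subtype_val).mem_nhds
        (show (S.orthogonalProjectionOnto (φ x) : EuclideanSpace ℝ (Fin ν)) ∈ V from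
          hτx.symm ▸ hφm hxU)] with s hs
      rw [hφψ _ hs, hS]

theorem IsSmoothSubmanifold.exists_contDiffOn_nearestPoint {ν : ℕ}
    {N : Set (EuclideanSpace ℝ (Fin ν))} (hN : IsSmoothSubmanifold N)
    {π : EuclideanSpace ℝ (Fin ν) → EuclideanSpace ℝ (Fin ν)} (hπ : IsNearestPointMap N π) :
    ∃ W, IsOpen W ∧ N ⊆ W ∧ ContDiffOn ℝ (⊤ : ℕ∞) π W := by
  have hlocal : ∀ x ∈ N, ∃ W, IsOpen W ∧ x ∈ W ∧ ContDiffOn ℝ (⊤ : ℕ∞) π W := fun x hx =>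
    have ⟨_, _, _, _, h⟩ := hN.exists_isLocalParametrization hx
    h.exists_contDiffOn_nearestPoint hx hπ
  choose! W hWo hxW hπW using hlocal
  refine ⟨⋃ x ∈ N, W x, isOpen_biUnion hWo, fun x hx => mem_biUnion hx (hxW x hx), ?_⟩
  intro y hy
  obtain ⟨x, hx, hyx⟩ := mem_iUnion₂.1 hy
  exact ((hπW x hx).contDiffAt ((hWo x hx).mem_nhds hyx)).contDiffWithinAt

end NearestPoint

section CubeLoop

variable {X : Type*} [TopologicalSpace X] {N : Set X} {b : N} {l : ℕ}

/-- A continuous map `ℝ^l → N` equal to `b` outside the open cube `(-1, 1)^l`, which is the unit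
ball of `Fin l → ℝ`. Unlike the loops `GenLoop` on `[0, 1]^l` of homotopy theory, these are defined
on a whole vector space, so that they can be mollified and differentiated. -/
structure CubeLoop (b : N) (l : ℕ) where
  toFun : (Fin l → ℝ) → X
  continuous : Continuous toFun
  mem : ∀ x, toFun x ∈ N
  eq_base : ∀ x, 1 ≤ ‖x‖ → toFun x = b

instance : CoeFun (CubeLoop b l) fun _ => (Fin l → ℝ) → X := ⟨CubeLoop.toFun⟩

/-- The affine identification of `[0, 1]^l` with `[-1, 1]^l`. -/
def centeredCube (q : Fin l → unitInterval) : Fin l → ℝ := fun i => 2 * (q i : ℝ) - 1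

theorem continuous_centeredCube : Continuous (centeredCube (l := l)) := by
  unfold centeredCube
  fun_prop

theorem centeredCube_mem_closedBall (q : Fin l → unitInterval) :
    centeredCube q ∈ closedBall (0 : Fin l → ℝ) 1 := by
  refine mem_closedBall_zero_iff.2 ((pi_norm_le_iff_of_nonneg zero_le_one).2 fun i => ?_)
  rw [Real.norm_eq_abs, abs_le, centeredCube]
  constructor <;> linarith [(q i).2.1, (q i).2.2]

theorem centeredCube_mem_sphere {q : Fin l → unitInterval} (hq : q ∈ Cube.boundary (Fin l)) :
    centeredCube q ∈ sphere (0 : Fin l → ℝ) 1 := by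
  refine mem_sphere_zero_iff_norm.2 <|
    (mem_closedBall_zero_iff.1 (centeredCube_mem_closedBall q)).antisymm ?_
  obtain ⟨i, hi⟩ := hq
  refine le_trans ?_ (norm_le_pi_norm (centeredCube q) i)
  rcases hi with hi | hi <;> norm_num [centeredCube, hi]

/-- The left inverse of `centeredCube` obtained by clamping each coordinate to `[-1, 1]`. -/
def clampedCube (x : Fin l → ℝ) : Fin l → unitInterval :=
  fun i => projIcc 0 1 zero_le_one ((x i + 1) / 2)

theorem continuous_clampedCube : Continuous (clampedCube (l := l)) :=
  continuous_pi fun i => continuous_projIcc.comp (by fun_prop)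

theorem clampedCube_centeredCube (q : Fin l → unitInterval) :
    clampedCube (centeredCube q) = q := by
  funext i
  simp [clampedCube, centeredCube]

theorem clampedCube_mem_boundary {x : Fin l → ℝ} (hx : 1 ≤ ‖x‖) :
    clampedCube x ∈ Cube.boundary (Fin l) := by
  obtain ⟨i, hi⟩ : ∃ i, 1 ≤ ‖x i‖ := by
    contrapose! hx
    exact (pi_norm_lt_iff one_pos).2 hx
  refine ⟨i, ?_⟩
  rcases le_abs.1 hi with h | h
  · exact .inr (projIcc_of_right_le _ (by linarith))
  · exact .inl (projIcc_of_le_left _ (by linarith))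

namespace CubeLoop

theorem eventuallyEq_base (g : CubeLoop b l) {x : Fin l → ℝ} (hx : x ∉ closedBall 0 1) :
    g =ᶠ[𝓝 x] fun _ => (b : X) := by
  filter_upwards [isClosed_closedBall.isOpen_compl.mem_nhds hx] with y hy
  exact g.eq_base y (not_le.1 fun h => hy (mem_closedBall_zero_iff.2 h)).le

/-- The loop on `[0, 1]^l` underlying a cube loop. -/
def genLoop (g : CubeLoop b l) : GenLoop (Fin l) N b :=
  ⟨⟨fun q => ⟨g (centeredCube q), g.mem _⟩,
    (g.continuous.comp continuous_centeredCube).subtype_mk _⟩,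
    fun _ hq => Subtype.ext (g.eq_base _ (mem_sphere_zero_iff_norm.1
      (centeredCube_mem_sphere hq)).ge)⟩

/-- The element of `π_l(N, b)` represented by a cube loop. -/
def homotopyClass (g : CubeLoop b l) : HomotopyGroup (Fin l) N b :=
  Quotient.mk _ g.genLoop

theorem homotopyClass_surjective :
    Function.Surjective (homotopyClass : CubeLoop b l → HomotopyGroup (Fin l) N b) := by
  refine Quotient.ind fun γ => ⟨⟨fun x => γ (clampedCube x),
    continuous_subtype_val.comp (γ.1.continuous.comp continuous_clampedCube),
    fun x => (γ (clampedCube x)).2,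
    fun x hx => congrArg _ (γ.2 _ (clampedCube_mem_boundary hx))⟩, congrArg (Quotient.mk _) ?_⟩
  ext q
  exact congr(((γ $(clampedCube_centeredCube q) : N) : X))

theorem homotopyClass_eq_of_homotopy {g₀ g₁ : CubeLoop b l} (H : ℝ × (Fin l → ℝ) → X)
    (hH : ContinuousOn H (Icc 0 1 ×ˢ closedBall 0 1))
    (hHN : MapsTo H (Icc 0 1 ×ˢ closedBall 0 1) N)
    (hHb : ∀ s ∈ Icc (0 : ℝ) 1, ∀ x ∈ sphere (0 : Fin l → ℝ) 1, H (s, x) = b)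
    (hH₀ : ∀ x ∈ closedBall (0 : Fin l → ℝ) 1, H (0, x) = g₀ x)
    (hH₁ : ∀ x ∈ closedBall (0 : Fin l → ℝ) 1, H (1, x) = g₁ x) :
    g₀.homotopyClass = g₁.homotopyClass := by
  have hmem : ∀ q : unitInterval × (Fin l → unitInterval),
      ((q.1 : ℝ), centeredCube q.2) ∈ Icc (0 : ℝ) 1 ×ˢ closedBall (0 : Fin l → ℝ) 1 :=
    fun q => ⟨q.1.2, centeredCube_mem_closedBall q.2⟩
  have hcont : Continuous fun q : unitInterval × (Fin l → unitInterval) =>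
      ((q.1 : ℝ), centeredCube q.2) :=
    (continuous_subtype_val.comp continuous_fst).prodMk
      (continuous_centeredCube.comp continuous_snd)
  refine Quotient.sound ⟨⟨⟨⟨fun q => ⟨H (q.1, centeredCube q.2), hHN (hmem q)⟩,
    (hH.comp_continuous hcont hmem).subtype_mk _⟩,
    fun q => Subtype.ext (hH₀ _ (centeredCube_mem_closedBall q)),
    fun q => Subtype.ext (hH₁ _ (centeredCube_mem_closedBall q))⟩, fun t q hq => ?_⟩⟩
  exact Subtype.ext ((hHb t t.2 _ (centeredCube_mem_sphere hq)).trans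
    (congrArg Subtype.val (g₀.genLoop.2 q hq)).symm)

/-- The constant loop. -/
def const (b : N) (l : ℕ) : CubeLoop b l :=
  ⟨fun _ => b, continuous_const, fun _ => b.2, fun _ _ => rfl⟩

/-- Extension by `b` of a map on the closed cube. -/
def ofContinuousOn (w : (Fin l → ℝ) → X) (hw : ContinuousOn w (closedBall 0 1))
    (hwN : MapsTo w (closedBall 0 1) N) (hwb : ∀ x ∈ sphere 0 1, w x = b) : CubeLoop b l where
  toFun x := if ‖x‖ ≤ 1 then w x else b
  continuous := by
    have hclosed : {x : Fin l → ℝ | ‖x‖ ≤ 1} = closedBall 0 1 := by ext; simp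
    refine continuous_if (fun x hx => hwb x ?_) ?_ continuousOn_const
    · exact mem_sphere_zero_iff_norm.2 (frontier_le_subset_eq continuous_norm continuous_const hx)
    · rwa [hclosed, isClosed_closedBall.closure_eq]
  mem x := by
    split_ifs with hx
    exacts [hwN (mem_closedBall_zero_iff.2 hx), b.2]
  eq_base x hx := by
    split_ifs with hx'
    exacts [hwb x (mem_sphere_zero_iff_norm.2 (hx'.antisymm hx)), rfl]

/-- The loop `x ↦ g (c x)`, concentrated in a smaller cube. -/
def dilate (g : CubeLoop b l) {c : ℝ} (hc : 1 ≤ c) : CubeLoop b l where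
  toFun x := g (c • x)
  continuous := g.continuous.comp (continuous_const_smul c)
  mem _ := g.mem _
  eq_base x hx := g.eq_base _ <| by
    rw [norm_smul, Real.norm_of_nonneg (zero_le_one.trans hc)]
    exact one_le_mul_of_one_le_of_one_le hc hx

theorem homotopyClass_dilate (g : CubeLoop b l) {c : ℝ} (hc : 1 ≤ c) :
    (g.dilate hc).homotopyClass = g.homotopyClass := by
  refine homotopyClass_eq_of_homotopy (fun q => g (((1 - q.1) * c + q.1) • q.2))
    (g.continuous.comp (by fun_prop)).continuousOn (fun _ _ => g.mem _) (fun s hs x hx => ?_)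
    (fun x _ => by simp [dilate]) fun x _ => by simp
  have hs1 : 1 ≤ (1 - s) * c + s := by nlinarith [hs.2]
  refine g.eq_base _ ?_
  rw [norm_smul, mem_sphere_zero_iff_norm.1 hx, mul_one]
  exact hs1.trans (le_abs_self _)

end CubeLoop

end CubeLoop

section Retraction

section DerivativeBounds

variable {E F G : Type*} [NormedAddCommGroup E] [NormedSpace ℝ E] [NormedAddCommGroup F]
  [NormedSpace ℝ F] [NormedAddCommGroup G] [NormedSpace ℝ G]

theorem enorm_fderiv_comp_le {g : F → G} {f : E → F} {x : E} (hg : DifferentiableAt ℝ g (f x))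
    (hf : DifferentiableAt ℝ f x) :
    ‖fderiv ℝ (fun y => g (f y)) x‖ₑ ≤ ‖fderiv ℝ g (f x)‖ₑ * ‖fderiv ℝ f x‖ₑ := by
  rw [fderiv_fun_comp x hg hf]
  exact ContinuousLinearMap.opENorm_comp_le _ _

theorem exists_enorm_fderiv_le_of_isCompact {f : E → F} {K : Set E} (hK : IsCompact K)
    (hf : ∀ x ∈ K, ContDiffAt ℝ 1 f x) :
    ∃ C : NNReal, ∀ x ∈ K, ‖fderiv ℝ f x‖ₑ ≤ C := by
  have hcont : ContinuousOn (fderiv ℝ f) K := fun x hx =>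
    ((hf x hx).fderiv_right (m := 0) (by simp)).continuousAt.continuousWithinAt
  obtain ⟨C, hC⟩ := hK.exists_bound_of_continuousOn hcont
  exact ⟨C.toNNReal, fun x hx => by
    rw [← ofReal_norm]
    exact ENNReal.ofReal_le_ofReal (hC x hx)⟩

end DerivativeBounds

variable {F : Type*} [NormedAddCommGroup F] [NormedSpace ℝ F] {N : Set F}

/-- A nearest point map onto `N` that is smooth, with derivative bounded by `lipConst`, on a closed
tube around `N`. -/
structure TubularRetraction (N : Set F) where
  toFun : F → F
  radius : ℝ
  lipConst : NNReal
  radius_pos : 0 < radius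
  isNearestPointMap : IsNearestPointMap N toFun
  contDiffAt : ∀ y ∈ cthickening radius N, ContDiffAt ℝ (⊤ : ℕ∞) toFun y
  enorm_fderiv_le : ∀ y ∈ cthickening radius N, ‖fderiv ℝ toFun y‖ₑ ≤ lipConst

instance : CoeFun (TubularRetraction N) fun _ => F → F := ⟨TubularRetraction.toFun⟩

theorem IsSmoothSubmanifold.nonempty_tubularRetraction {ν : ℕ}
    {N : Set (EuclideanSpace ℝ (Fin ν))} (hN : IsSmoothSubmanifold N) (hc : IsCompact N)
    (hne : N.Nonempty) : Nonempty (TubularRetraction N) := by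
  obtain ⟨π, hπ⟩ := exists_isNearestPointMap_of_isCompact hc hne
  obtain ⟨W, hW, hNW, hπW⟩ := hN.exists_contDiffOn_nearestPoint hπ
  obtain ⟨ε, hε, hεW⟩ := hc.exists_cthickening_subset_open hW hNW
  have hsmooth : ∀ y ∈ cthickening ε N, ContDiffAt ℝ (⊤ : ℕ∞) π y :=
    fun y hy => hπW.contDiffAt (hW.mem_nhds (hεW hy))
  obtain ⟨L, hL⟩ := exists_enorm_fderiv_le_of_isCompact hc.cthickening
    fun y hy => (hsmooth y hy).of_le (by exact_mod_cast le_top)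
  exact ⟨⟨π, ε, L, hε, hπ, hsmooth, hL⟩⟩

/-- The segment joining two points of `N` at distance at most the radius stays in the tube, so it
can be retracted to `N`. -/
theorem TubularRetraction.homotopyClass_eq_of_dist_le (P : TubularRetraction N) {b : N} {l : ℕ}
    {g₀ g₁ : CubeLoop b l} (h : ∀ x, dist (g₁ x) (g₀ x) ≤ P.radius) :
    g₀.homotopyClass = g₁.homotopyClass := by
  have htube : ∀ q ∈ Icc (0 : ℝ) 1 ×ˢ closedBall (0 : Fin l → ℝ) 1,
      AffineMap.lineMap (g₀ q.2) (g₁ q.2) q.1 ∈ cthickening P.radius N := fun q hq => by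
    refine mem_cthickening_of_dist_le _ (g₀ q.2) _ N (g₀.mem _) ?_
    rw [dist_lineMap_left, Real.norm_of_nonneg hq.1.1, dist_comm]
    exact (mul_le_of_le_one_left dist_nonneg hq.1.2).trans (h _)
  have hcont : Continuous fun q : ℝ × (Fin l → ℝ) => AffineMap.lineMap (g₀ q.2) (g₁ q.2) q.1 :=
    (g₀.continuous.comp continuous_snd).lineMap (g₁.continuous.comp continuous_snd) continuous_fst
  refine CubeLoop.homotopyClass_eq_of_homotopy
    (fun q => P (AffineMap.lineMap (g₀ q.2) (g₁ q.2) q.1))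
    (fun q hq => ((P.contDiffAt _ (htube q hq)).continuousAt.comp_of_eq
      hcont.continuousAt rfl).continuousWithinAt)
    (fun _ _ => P.isNearestPointMap.mem _) (fun s _ x hx => ?_) (fun x _ => ?_) fun x _ => ?_
  · have hx1 := (mem_sphere_zero_iff_norm.1 hx).ge
    simp [g₀.eq_base x hx1, g₁.eq_base x hx1, P.isNearestPointMap.apply_of_mem b.2]
  · simp [P.isNearestPointMap.apply_of_mem (g₀.mem x)]
  · simp [P.isNearestPointMap.apply_of_mem (g₁.mem x)]

/-- A tubular retraction together with a smooth map `collapse` of `N` into itself, close to the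
identity, that sends a neighbourhood of `b` to `b`. Composing with `collapse` makes a map constant
near the points where it takes the value `b`. -/
structure CollapsingRetraction (b : N) extends TubularRetraction N where
  collapse : F → F
  collapseRadius : ℝ
  collapseRadius_pos : 0 < collapseRadius
  collapse_mem : ∀ y, collapse y ∈ N
  collapse_eq_base : ∀ y : F, dist y b < collapseRadius → collapse y = b
  dist_collapse_le : ∀ y ∈ N, dist (collapse y) y ≤ radius
  contDiffAt_collapse : ∀ y ∈ N, ContDiffAt ℝ (⊤ : ℕ∞) collapse y
  enorm_fderiv_collapse_le : ∀ y ∈ N, ‖fderiv ℝ collapse y‖ₑ ≤ lipConst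

section Push

variable [FiniteDimensional ℝ F]

/-- The map that moves the points near `b` onto `b` along rays, at a rate given by the bump
function `β`. -/
def pushToward (b : F) (β : ContDiffBump b) (v : F) : F := v - β v • (v - b)

variable {b : F} {β : ContDiffBump b}

theorem contDiff_pushToward : ContDiff ℝ (⊤ : ℕ∞) (pushToward b β) :=
  contDiff_id.sub (β.contDiff.smul (contDiff_id.sub contDiff_const))

theorem dist_pushToward_le (v : F) : dist (pushToward b β v) v ≤ β.rOut := by
  rw [pushToward, dist_self_sub_left, norm_smul, Real.norm_of_nonneg β.nonneg, ← dist_eq_norm]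
  rcases le_total (dist v b) β.rOut with h | h
  · exact (mul_le_of_le_one_left dist_nonneg β.le_one).trans h
  · simpa [β.zero_of_le_dist h] using β.rOut_pos.le

theorem pushToward_eq {v : F} (hv : dist v b ≤ β.rIn) : pushToward b β v = b := by
  simp [pushToward, β.one_of_mem_closedBall hv]

end Push

theorem TubularRetraction.nonempty_collapsingRetraction [FiniteDimensional ℝ F]
    (P : TubularRetraction N) (hc : IsCompact N) (b : N) : Nonempty (CollapsingRetraction b) := by
  have hr := P.radius_pos
  let β : ContDiffBump (b : F) := ⟨P.radius / 4, P.radius / 2, by positivity, by linarith⟩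
  have hpush : ∀ y, dist (pushToward (b : F) β y) y ≤ P.radius / 2 := dist_pushToward_le
  have htube : ∀ y ∈ N, pushToward (b : F) β y ∈ cthickening P.radius N := fun y hy =>
    mem_cthickening_of_dist_le _ y _ N hy ((hpush y).trans (by linarith))
  have hsmooth : ∀ y ∈ N, ContDiffAt ℝ (⊤ : ℕ∞) (fun v => P (pushToward (b : F) β v)) y :=
    fun y hy => (P.contDiffAt _ (htube y hy)).comp y contDiff_pushToward.contDiffAt
  obtain ⟨L, hL⟩ := exists_enorm_fderiv_le_of_isCompact hc
    fun y hy => (hsmooth y hy).of_le (by exact_mod_cast le_top)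
  exact ⟨{ P with
    lipConst := max P.lipConst L
    enorm_fderiv_le := fun y hy => (P.enorm_fderiv_le y hy).trans (by simp)
    collapse := fun y => P (pushToward (b : F) β y)
    collapseRadius := P.radius / 4
    collapseRadius_pos := by positivity
    collapse_mem := fun _ => P.isNearestPointMap.mem _
    collapse_eq_base := fun y hy => by
      simp only [pushToward_eq (β := β) hy.le, P.isNearestPointMap.apply_of_mem b.2]
    dist_collapse_le := fun y hy =>
      (P.isNearestPointMap.dist_apply_le_two_mul hy _).trans (by linarith [hpush y])
    contDiffAt_collapse := hsmooth
    enorm_fderiv_collapse_le := fun y hy => (hL y hy).trans (by simp) }⟩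

namespace CollapsingRetraction

variable {b : N} {l : ℕ} (P : CollapsingRetraction b)

theorem collapse_base : P.collapse b = b :=
  P.collapse_eq_base _ (by simpa using P.collapseRadius_pos)

/-- The composition of a loop with `collapse`. -/
def collapseLoop (g : CubeLoop b l) : CubeLoop b l where
  toFun x := P.collapse (g x)
  continuous := continuous_iff_continuousAt.2 fun x =>
    (P.contDiffAt_collapse _ (g.mem x)).continuousAt.comp g.continuous.continuousAt
  mem _ := P.collapse_mem _
  eq_base x hx := by rw [g.eq_base x hx, P.collapse_base]

theorem homotopyClass_collapseLoop (g : CubeLoop b l) :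
    (P.collapseLoop g).homotopyClass = g.homotopyClass :=
  (P.homotopyClass_eq_of_dist_le fun x => P.dist_collapse_le _ (g.mem x)).symm

theorem collapseLoop_eventuallyEq (g : CubeLoop b l) {x : Fin l → ℝ} (hx : g x = b) :
    P.collapseLoop g =ᶠ[𝓝 x] fun _ => (b : F) := by
  have hnear : ∀ᶠ y in 𝓝 x, g y ∈ ball (b : F) P.collapseRadius :=
    g.continuous.continuousAt (isOpen_ball.mem_nhds (by simpa [hx] using P.collapseRadius_pos))
  filter_upwards [hnear] with y hy using P.collapse_eq_base _ hy

theorem contDiff_collapseLoop {g : CubeLoop b l} (hg : ∀ x, g x ≠ b → ContDiffAt ℝ 1 g x) :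
    ContDiff ℝ 1 (P.collapseLoop g) := by
  refine contDiff_iff_contDiffAt.2 fun x => ?_
  by_cases hx : g x = b
  · exact contDiffAt_const.congr_of_eventuallyEq (P.collapseLoop_eventuallyEq g hx)
  · exact ((P.contDiffAt_collapse _ (g.mem x)).of_le (by exact_mod_cast le_top)).comp x (hg x hx)

theorem enorm_fderiv_collapseLoop_le {g : CubeLoop b l} {x : Fin l → ℝ}
    (hg : DifferentiableAt ℝ g x) :
    ‖fderiv ℝ (P.collapseLoop g) x‖ₑ ≤ P.lipConst * ‖fderiv ℝ g x‖ₑ :=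
  (enorm_fderiv_comp_le ((P.contDiffAt_collapse _ (g.mem x)).differentiableAt (by simp)) hg).trans
    (by gcongr; exact P.enorm_fderiv_collapse_le _ (g.mem x))

end CollapsingRetraction

end Retraction

section Mollification

variable {E F : Type*} [NormedAddCommGroup E] [NormedSpace ℝ E] [FiniteDimensional ℝ E]
  [MeasurableSpace E] [BorelSpace E] [NormedAddCommGroup F] [NormedSpace ℝ F]
  (μ : Measure E) [μ.IsAddHaarMeasure]

/-- The convolution of `w` with the normalised bump function `φ`. -/
def mollification (φ : ContDiffBump (0 : E)) (w : E → F) : E → F :=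
  convolution (φ.normed μ) w (ContinuousLinearMap.lsmul ℝ ℝ) μ

variable {w : E → F}

theorem contDiff_mollification (φ : ContDiffBump (0 : E)) (hw : Continuous w) :
    ContDiff ℝ (⊤ : ℕ∞) (mollification μ φ w) :=
  φ.hasCompactSupport_normed.contDiff_convolution_left _ φ.contDiff_normed hw.locallyIntegrable

theorem fderiv_mollification (φ : ContDiffBump (0 : E)) (hw : ContDiff ℝ 1 w)
    (hs : HasCompactSupport w) (x : E) :
    fderiv ℝ (mollification μ φ w) x = mollification μ φ (fderiv ℝ w) x := by
  have hprecomp : (ContinuousLinearMap.precompR E (ContinuousLinearMap.lsmul ℝ ℝ :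
      ℝ →L[ℝ] F →L[ℝ] F)) = ContinuousLinearMap.lsmul ℝ ℝ := by
    ext
    simp
  have h := hs.hasFDerivAt_convolution_right (ContinuousLinearMap.lsmul ℝ ℝ)
    (f := φ.normed μ) (μ := μ) φ.integrable_normed.locallyIntegrable hw x
  rw [hprecomp] at h
  exact h.fderiv

variable [CompleteSpace F]

theorem exists_dist_mollification_le (hw : Continuous w) (hs : HasCompactSupport w) {ε : ℝ}
    (hε : 0 < ε) : ∃ δ > 0, ∀ φ : ContDiffBump (0 : E), φ.rOut ≤ δ → ∀ x,
      dist (mollification μ φ w x) (w x) ≤ ε := by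
  obtain ⟨δ, hδ, hunif⟩ := Metric.uniformContinuous_iff.1
    (hs.uniformContinuous_of_continuous hw) ε hε
  exact ⟨δ, hδ, fun φ hφ x => φ.dist_normed_convolution_le hw.aestronglyMeasurable
    fun y hy => (hunif ((mem_ball.1 hy).trans_le hφ)).le⟩

theorem mollification_eq_zero {φ : ContDiffBump (0 : E)} (hw : Continuous w) {x : E}
    (hx : ∀ y ∈ ball x φ.rOut, w y = 0) : mollification μ φ w x = 0 := by
  have h := φ.dist_normed_convolution_le (μ := μ) (ε := 0) (x₀ := x) hw.aestronglyMeasurable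
    fun y hy => by rw [hx y hy, hx x (mem_ball_self φ.rOut_pos), dist_self]
  exact (dist_le_zero.1 h).trans (hx x (mem_ball_self φ.rOut_pos))

theorem exists_mollification_eqOn_zero {K U : Set E} (hK : IsCompact K) (hU : IsOpen U)
    (hKU : K ⊆ U) (hw : Continuous w) (hwK : EqOn w 0 Kᶜ) :
    ∃ δ > 0, ∀ φ : ContDiffBump (0 : E), φ.rOut ≤ δ → EqOn (mollification μ φ w) 0 Uᶜ := by
  obtain ⟨δ, hδ, hδU⟩ := hK.exists_cthickening_subset_open hU hKU
  refine ⟨δ, hδ, fun φ hφ x hx => mollification_eq_zero μ hw fun y hy => hwK fun hyK => hx ?_⟩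
  exact hδU (mem_cthickening_of_dist_le x y δ K hyK ((mem_ball'.1 hy).le.trans hφ))

theorem exists_contDiff_approx {K U : Set E} (hK : IsCompact K) (hU : IsOpen U) (hKU : K ⊆ U)
    (hw : Continuous w) (hwK : EqOn w 0 Kᶜ) {ε : ℝ} (hε : 0 < ε) :
    ∃ f : E → F, ContDiff ℝ (⊤ : ℕ∞) f ∧ (∀ x, dist (f x) (w x) ≤ ε) ∧ EqOn f 0 Uᶜ ∧
      (ContDiff ℝ 1 w → ∀ x, ‖fderiv ℝ f x‖ₑ ≤ ‖fderiv ℝ w x‖ₑ + 1) := by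
  let μ : Measure E := Measure.addHaar
  have hs : HasCompactSupport w := HasCompactSupport.intro hK fun x hx => hwK hx
  obtain ⟨δ₁, hδ₁, hzero⟩ := exists_mollification_eqOn_zero μ hK hU hKU hw hwK
  obtain ⟨δ₂, hδ₂, hdist⟩ := exists_dist_mollification_le μ hw hs hε
  obtain ⟨δ₃, hδ₃, hderiv⟩ : ∃ δ > 0, ContDiff ℝ 1 w → ∀ φ : ContDiffBump (0 : E), φ.rOut ≤ δ →
      ∀ x, dist (mollification μ φ (fderiv ℝ w) x) (fderiv ℝ w x) ≤ 1 := by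
    by_cases h : ContDiff ℝ 1 w
    · obtain ⟨δ, hδ, hderiv⟩ := exists_dist_mollification_le μ (h.continuous_fderiv one_ne_zero)
        (hs.fderiv ℝ) one_pos
      exact ⟨δ, hδ, fun _ => hderiv⟩
    · exact ⟨1, one_pos, fun h' => absurd h' h⟩
  have hr : 0 < min δ₁ (min δ₂ δ₃) := by positivity
  let φ : ContDiffBump (0 : E) := ⟨_, _, half_pos hr, half_lt_self hr⟩
  refine ⟨mollification μ φ w, contDiff_mollification μ φ hw, hdist φ (by simp [φ]),
    hzero φ (by simp [φ]), fun h x => ?_⟩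
  have hdist' := hderiv h φ (by simp [φ]) x
  rw [fderiv_mollification μ φ h hs, ← ofReal_norm, ← ofReal_norm, ← ENNReal.ofReal_one,
    ← ENNReal.ofReal_add (norm_nonneg _) zero_le_one]
  rw [dist_eq_norm] at hdist'
  exact ENNReal.ofReal_le_ofReal ((norm_le_norm_add_norm_sub' _ _).trans (by gcongr))

end Mollification

section DirichletEnergy

variable {E F : Type*} [NormedAddCommGroup E] [NormedSpace ℝ E] [MeasureSpace E]
  [NormedAddCommGroup F] [NormedSpace ℝ F]

/-- The Dirichlet `p`-energy `∫_S ‖DU‖ ^ p`. -/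
def dirichletEnergy (p : ℝ) (S : Set E) (U : E → F) : ℝ≥0∞ :=
  ∫⁻ z in S, ‖fderiv ℝ U z‖ₑ ^ p

theorem dirichletEnergy_le_of_enorm_fderiv_le [OpensMeasurableSpace E] [CompleteSpace F]
    {p : ℝ} (hp : 1 ≤ p) {S : Set E} {f g : E → F} {L : ℝ≥0∞}
    (h : ∀ x, ‖fderiv ℝ f x‖ₑ ≤ L * (L * ‖fderiv ℝ g x‖ₑ + 1)) :
    dirichletEnergy p S f ≤
      L ^ p * 2 ^ (p - 1) * (L ^ p + volume S) * (dirichletEnergy p S g + 1) := by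
  have hp0 : 0 ≤ p := zero_le_one.trans hp
  have hpt : ∀ x, ‖fderiv ℝ f x‖ₑ ^ p ≤
      L ^ p * 2 ^ (p - 1) * (L ^ p * ‖fderiv ℝ g x‖ₑ ^ p + 1) := fun x => calc
    _ ≤ (L * (L * ‖fderiv ℝ g x‖ₑ + 1)) ^ p := by gcongr; exact h x
    _ ≤ L ^ p * (2 ^ (p - 1) * ((L * ‖fderiv ℝ g x‖ₑ) ^ p + 1 ^ p)) := by
      rw [ENNReal.mul_rpow_of_nonneg _ _ hp0]
      gcongr
      exact ENNReal.rpow_add_le_mul_rpow_add_rpow _ _ hp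
    _ = _ := by rw [ENNReal.mul_rpow_of_nonneg _ _ hp0, ENNReal.one_rpow, mul_assoc]
  have hmeas : Measurable fun x => ‖fderiv ℝ g x‖ₑ ^ p :=
    (measurable_fderiv ℝ g).enorm.pow_const p
  calc dirichletEnergy p S f
      ≤ L ^ p * 2 ^ (p - 1) * (L ^ p * dirichletEnergy p S g + volume S) := by
        refine (lintegral_mono hpt).trans_eq ?_
        rw [lintegral_const_mul _ (by fun_prop), lintegral_add_right _ measurable_const,
          lintegral_const_mul _ hmeas, setLIntegral_one, dirichletEnergy]
    _ ≤ L ^ p * 2 ^ (p - 1) * ((L ^ p + volume S) * (dirichletEnergy p S g + 1)) := by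
        gcongr
        rw [add_mul]
        gcongr
        · exact le_self_add
        · exact le_mul_of_one_le_right' le_add_self
    _ = _ := (mul_assoc _ _ _).symm

end DirichletEnergy

section LoopSmoothing

variable {F : Type*} [NormedAddCommGroup F] [NormedSpace ℝ F] {N : Set F} {b : N} {l : ℕ}

namespace CubeLoop

theorem fderiv_eq_zero (g : CubeLoop b l) {x : Fin l → ℝ} (hx : x ∉ closedBall 0 1) :
    fderiv ℝ g x = 0 := by
  rw [(g.eventuallyEq_base hx).fderiv_eq, fderiv_fun_const, Pi.zero_apply]

theorem dirichletEnergy_closedBall (g : CubeLoop b l) {p : ℝ} (hp : 0 < p) :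
    dirichletEnergy p (closedBall 0 1) g = dirichletEnergy p univ g := by
  rw [dirichletEnergy, dirichletEnergy, setLIntegral_univ]
  refine setLIntegral_eq_of_support_subset fun x hx => ?_
  by_contra h
  exact hx (by
    simp only [g.fderiv_eq_zero h, ← ofReal_norm, norm_zero, ENNReal.ofReal_zero,
      ENNReal.zero_rpow_of_pos hp])

theorem dirichletEnergy_lt_top {p : ℝ} (hp : 0 < p) {g : CubeLoop b l} (hg : ContDiff ℝ 1 g) :
    dirichletEnergy p univ g < ⊤ := by
  rw [← g.dirichletEnergy_closedBall hp]
  obtain ⟨C, hC⟩ := exists_enorm_fderiv_le_of_isCompact (isCompact_closedBall (0 : Fin l → ℝ) 1)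
    fun x _ => hg.contDiffAt
  refine setLIntegral_lt_top_of_le_nnreal measure_closedBall_lt_top.ne ⟨C ^ p, fun x hx => ?_⟩
  rw [ENNReal.coe_rpow_of_nonneg _ hp.le]
  gcongr
  exact hC x hx

end CubeLoop

namespace CollapsingRetraction

variable (P : CollapsingRetraction b)

theorem isCompact_collapseRadius_le_dist (g : CubeLoop b l) :
    IsCompact {x | P.collapseRadius ≤ dist (g x) b} ∧
      {x | P.collapseRadius ≤ dist (g x) b} ⊆ ball 0 1 := by
  have hsub : {x | P.collapseRadius ≤ dist (g x) b} ⊆ ball 0 1 := fun x hx => by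
    by_contra h
    rw [mem_ball_zero_iff, not_lt] at h
    exact (show P.collapseRadius ≤ dist (g x) b from hx).not_gt (by
      simpa [g.eq_base x h] using P.collapseRadius_pos)
  exact ⟨Metric.isCompact_of_isClosed_isBounded
    (isClosed_le continuous_const (g.continuous.dist continuous_const))
    (isBounded_ball.subset hsub), hsub⟩

variable [CompleteSpace F]

/-- Mollify after collapsing, so that the result is still equal to `b` near the boundary of the
cube, and retract back to `N`. -/
theorem exists_contDiff_homotopyClass_eq (g : CubeLoop b l) :
    ∃ f : CubeLoop b l, ContDiff ℝ (⊤ : ℕ∞) f ∧ f.homotopyClass = g.homotopyClass ∧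
      (ContDiff ℝ 1 g → ∀ x, ‖fderiv ℝ f x‖ₑ ≤
        P.lipConst * (P.lipConst * ‖fderiv ℝ g x‖ₑ + 1)) := by
  obtain ⟨hK, hK1⟩ := P.isCompact_collapseRadius_le_dist g
  have hc := (P.collapseLoop g).continuous
  obtain ⟨w, hw, hwdist, hw0, hDw⟩ := exists_contDiff_approx hK isOpen_ball hK1
    (w := fun x => P.collapseLoop g x - b) (hc.sub continuous_const)
    (fun x hx => sub_eq_zero.2 (P.collapse_eq_base _ (not_le.1 hx))) (half_pos P.radius_pos)
  have hdist : ∀ x, dist (w x + b) (P.collapseLoop g x) ≤ P.radius / 2 := fun x => by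
    simpa only [dist_eq_norm, sub_sub_eq_add_sub] using hwdist x
  have htube : ∀ x, w x + b ∈ cthickening P.radius N := fun x =>
    mem_cthickening_of_dist_le _ _ _ N ((P.collapseLoop g).mem x)
      ((hdist x).trans (half_le_self P.radius_pos.le))
  have hsmooth : ContDiff ℝ (⊤ : ℕ∞) fun x => P.toTubularRetraction (w x + b) :=
    contDiff_iff_contDiffAt.2 fun x =>
      (P.contDiffAt _ (htube x)).comp x (hw.add contDiff_const).contDiffAt
  let f : CubeLoop b l := ⟨_, hsmooth.continuous, fun _ => P.isNearestPointMap.mem _, fun x hx => by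
    rw [hw0 (fun h => hx.not_gt (mem_ball_zero_iff.1 h)), Pi.zero_apply, zero_add,
      P.isNearestPointMap.apply_of_mem b.2]⟩
  refine ⟨f, hsmooth, ?_, fun hg x => ?_⟩
  · rw [← P.homotopyClass_collapseLoop g]
    refine (P.homotopyClass_eq_of_dist_le fun x => ?_).symm
    exact (P.isNearestPointMap.dist_apply_le_two_mul ((P.collapseLoop g).mem x) _).trans
      (by linarith [hdist x])
  · have hg' := P.contDiff_collapseLoop fun x _ => hg.contDiffAt
    have hDw' := hDw (hg'.sub contDiff_const) x
    rw [fderiv_sub_const] at hDw'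
    refine (enorm_fderiv_comp_le (f := fun x => w x + (b : F))
      ((P.contDiffAt _ (htube x)).differentiableAt (by simp))
      ((hw.add contDiff_const).differentiable (by simp) x)).trans ?_
    rw [fderiv_add_const]
    gcongr
    · exact P.enorm_fderiv_le _ (htube x)
    · refine hDw'.trans ?_
      gcongr
      exact P.enorm_fderiv_collapseLoop_le (hg.differentiable one_ne_zero x)

theorem exists_smoothing_constant (P : CollapsingRetraction b) {p : ℝ} (hp : 1 ≤ p)
    (l : ℕ) :
    ∃ C : ℝ≥0∞, C ≠ ⊤ ∧ ∀ g : CubeLoop b l, ∃ f : CubeLoop b l, ContDiff ℝ (⊤ : ℕ∞) f ∧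
      f.homotopyClass = g.homotopyClass ∧ (ContDiff ℝ 1 g →
        dirichletEnergy p univ f ≤ C * (dirichletEnergy p univ g + 1)) := by
  have hp0 : 0 < p := one_pos.trans_le hp
  have hL : (P.lipConst : ℝ≥0∞) ^ p ≠ ⊤ := ENNReal.rpow_ne_top_of_nonneg hp0.le (by simp)
  refine ⟨P.lipConst ^ p * 2 ^ (p - 1) * (P.lipConst ^ p + volume (closedBall (0 : Fin l → ℝ) 1)),
    ENNReal.mul_ne_top (ENNReal.mul_ne_top hL (ENNReal.rpow_ne_top_of_nonneg (by linarith)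
      (by simp))) (ENNReal.add_ne_top.2 ⟨hL, measure_closedBall_lt_top.ne⟩), fun g => ?_⟩
  obtain ⟨f, hf, hfg, hDf⟩ := P.exists_contDiff_homotopyClass_eq g
  refine ⟨f, hf, hfg, fun hg => ?_⟩
  rw [← f.dirichletEnergy_closedBall hp0, ← g.dirichletEnergy_closedBall hp0]
  exact dirichletEnergy_le_of_enorm_fderiv_le hp (hDf hg)

end CollapsingRetraction

end LoopSmoothing

section Morrey

theorem lintegral_le_lintegral_rpow_mul_measure_univ {α : Type*} [MeasurableSpace α]
    {μ : Measure α} {p : ℝ} (hp : 1 ≤ p) {f : α → ℝ≥0∞} (hf : Measurable f) :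
    ∫⁻ a, f a ∂μ ≤ (∫⁻ a, f a ^ p ∂μ) ^ (1 / p) * μ univ ^ (1 - 1 / p) := by
  simpa [eLpNorm'] using
    eLpNorm'_le_eLpNorm'_mul_rpow_measure_univ one_pos hp hf.aestronglyMeasurable (μ := μ)

variable {E F : Type*} [NormedAddCommGroup E] [NormedSpace ℝ E] [NormedAddCommGroup F]
  [NormedSpace ℝ F] {g : E → F}

theorem enorm_add_sub_le_lintegral_fderiv (hg : ContDiff ℝ 1 g) (x h : E) :
    ‖g (x + h) - g x‖ₑ ≤ ∫⁻ t in Ioc (0 : ℝ) 1, ‖fderiv ℝ g (x + t • h)‖ₑ * ‖h‖ₑ := by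
  have hline : ContDiff ℝ 1 fun t : ℝ => x + t • h := by fun_prop
  have hderiv (t : ℝ) : deriv (fun t : ℝ => g (x + t • h)) t = fderiv ℝ g (x + t • h) h :=
    ((hg.differentiable one_ne_zero _).hasFDerivAt.comp_hasDerivAt t
      (by simpa using ((hasDerivAt_id t).smul_const h).const_add x)).deriv
  have hftc := enorm_sub_le_lintegral_deriv_of_contDiffOn_Icc
    (hg.comp hline).contDiffOn zero_le_one
  simp only [Function.comp_apply, one_smul, zero_smul, add_zero] at hftc
  refine hftc.trans ?_
  rw [← restrict_Ioc_eq_restrict_Icc]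
  refine lintegral_mono fun t => ?_
  exact (congrArg _ (hderiv t)).trans_le (ContinuousLinearMap.le_opENorm _ _)

variable [FiniteDimensional ℝ E] [MeasureSpace E] [BorelSpace E]
  [(volume : Measure E).IsAddHaarMeasure]

theorem lintegral_comp_add_smul (f : E → ℝ≥0∞) (a : E) {t : ℝ} (ht : 0 < t) :
    ∫⁻ y, f (a + t • y) = ENNReal.ofReal (t ^ (-(Module.finrank ℝ E : ℝ))) * ∫⁻ y, f y := by
  have hmap := (Homeomorph.smulOfNeZero t ht.ne').measurableEmbedding.lintegral_map
    (μ := (volume : Measure E)) fun z => f (a + z)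
  simp only [Homeomorph.smulOfNeZero_apply] at hmap
  rw [← hmap, Measure.map_addHaar_smul _ ht.ne', lintegral_smul_measure, lintegral_add_left_eq_self,
    abs_of_pos (by positivity), Real.rpow_neg ht.le, Real.rpow_natCast, smul_eq_mul]

theorem setLIntegral_enorm_fderiv_add_smul_le {p : ℝ} (hp : 1 ≤ p) (hg : ContDiff ℝ 1 g)
    (K : Set E) (z : E) {t : ℝ} (ht : 0 < t) :
    ∫⁻ y in K, ‖fderiv ℝ g (z + t • (y - z))‖ₑ ≤
      ENNReal.ofReal (t ^ (-(Module.finrank ℝ E : ℝ) / p)) *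
        (dirichletEnergy p univ g ^ (1 / p) * volume K ^ (1 - 1 / p)) := by
  have _hDg := hg.continuous_fderiv one_ne_zero
  have hp0 : 0 ≤ 1 / p := by positivity
  have hmeas : Measurable fun y => ‖fderiv ℝ g (z + t • (y - z))‖ₑ :=
    (Continuous.measurable (by fun_prop)).enorm
  have henergy : ∫⁻ y in K, ‖fderiv ℝ g (z + t • (y - z))‖ₑ ^ p ≤
      ENNReal.ofReal (t ^ (-(Module.finrank ℝ E : ℝ))) * dirichletEnergy p univ g := by
    rw [dirichletEnergy, setLIntegral_univ,
      ← lintegral_comp_add_smul (fun y => ‖fderiv ℝ g y‖ₑ ^ p) (z - t • z) ht]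
    refine (setLIntegral_le_lintegral _ _).trans_eq (lintegral_congr fun y => ?_)
    rw [smul_sub, ← add_comm_sub]
  calc _ ≤ _ := lintegral_le_lintegral_rpow_mul_measure_univ hp hmeas
    _ ≤ (ENNReal.ofReal (t ^ (-(Module.finrank ℝ E : ℝ))) * dirichletEnergy p univ g) ^ (1 / p) *
        volume K ^ (1 - 1 / p) := by
      rw [Measure.restrict_apply_univ]
      gcongr
    _ = _ := by
      rw [ENNReal.mul_rpow_of_nonneg _ _ hp0,
        ENNReal.ofReal_rpow_of_nonneg (by positivity) hp0, ← Real.rpow_mul ht.le,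
        mul_one_div, mul_assoc]

theorem setLIntegral_enorm_sub_le {p D : ℝ} (hp : 1 ≤ p) (hg : ContDiff ℝ 1 g) {K : Set E}
    (hK : MeasurableSet K) {z : E} (hD : ∀ y ∈ K, dist y z ≤ D) :
    ∫⁻ y in K, ‖g y - g z‖ₑ ≤
      ENNReal.ofReal D * (∫⁻ t in Ioc (0 : ℝ) 1,
        ENNReal.ofReal (t ^ (-(Module.finrank ℝ E : ℝ) / p))) *
          (dirichletEnergy p univ g ^ (1 / p) * volume K ^ (1 - 1 / p)) := by
  have _hDg := hg.continuous_fderiv one_ne_zero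
  calc ∫⁻ y in K, ‖g y - g z‖ₑ
      ≤ ∫⁻ y in K, ∫⁻ t in Ioc (0 : ℝ) 1,
          ‖fderiv ℝ g (z + t • (y - z))‖ₑ * ENNReal.ofReal D := by
        refine setLIntegral_mono' hK fun y hy => ?_
        have hline := enorm_add_sub_le_lintegral_fderiv hg z (y - z)
        rw [add_sub_cancel] at hline
        refine hline.trans (lintegral_mono fun t => ?_)
        gcongr
        rw [← ofReal_norm, ← dist_eq_norm]
        exact ENNReal.ofReal_le_ofReal (hD y hy)
    _ = ∫⁻ t in Ioc (0 : ℝ) 1, ∫⁻ y in K,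
          ‖fderiv ℝ g (z + t • (y - z))‖ₑ * ENNReal.ofReal D := by
        rw [lintegral_lintegral_swap]
        exact ((Continuous.measurable (by fun_prop)).enorm.mul_const _).aemeasurable
    _ ≤ ∫⁻ t in Ioc (0 : ℝ) 1, ENNReal.ofReal (t ^ (-(Module.finrank ℝ E : ℝ) / p)) *
          (dirichletEnergy p univ g ^ (1 / p) * volume K ^ (1 - 1 / p)) *
            ENNReal.ofReal D := by
        refine setLIntegral_mono' measurableSet_Ioc fun t ht => ?_
        rw [lintegral_mul_const _ (Continuous.measurable (by fun_prop)).enorm]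
        gcongr
        exact setLIntegral_enorm_fderiv_add_smul_le hp hg K z ht.1
    _ = _ := by
        rw [lintegral_mul_const _ (by fun_prop), lintegral_mul_const _ (by fun_prop)]
        ring

theorem enorm_sub_le_rpow_dirichletEnergy {p : ℝ} (hp : 1 ≤ p) (hg : ContDiff ℝ 1 g) {x y : E}
    (hxy : y ≠ x) :
    ‖g y - g x‖ₑ ≤ 2 * (ENNReal.ofReal (2 * dist y x) * (∫⁻ t in Ioc (0 : ℝ) 1,
      ENNReal.ofReal (t ^ (-(Module.finrank ℝ E : ℝ) / p))) * dirichletEnergy p univ g ^ (1 / p) *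
        volume (closedBall x (dist y x)) ^ (-(1 / p))) := by
  set K := closedBall x (dist y x)
  set J := ∫⁻ t in Ioc (0 : ℝ) 1, ENNReal.ofReal (t ^ (-(Module.finrank ℝ E : ℝ) / p))
  have hK₀ : volume K ≠ 0 := (measure_closedBall_pos volume x (dist_pos.2 hxy)).ne'
  have hK : volume K ≠ ⊤ := measure_closedBall_lt_top.ne
  have hmeas (z : E) : Measurable fun w => ‖g w - g z‖ₑ :=
    (hg.continuous.sub continuous_const).enorm.measurable
  have hmean {z : E} (hz : z ∈ K) : ∫⁻ w in K, ‖g w - g z‖ₑ ≤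
      ENNReal.ofReal (2 * dist y x) * J *
        (dirichletEnergy p univ g ^ (1 / p) * volume K ^ (1 - 1 / p)) :=
    setLIntegral_enorm_sub_le hp hg measurableSet_closedBall fun w hw => by
      linarith [dist_triangle_right w z x, mem_closedBall.1 hw, mem_closedBall.1 hz]
  rw [← ENNReal.mul_le_mul_iff_left hK₀ hK]
  calc ‖g y - g x‖ₑ * volume K = ∫⁻ _ in K, ‖g y - g x‖ₑ := (setLIntegral_const K _).symm
    _ ≤ ∫⁻ w in K, (‖g w - g x‖ₑ + ‖g w - g y‖ₑ) := by
      refine lintegral_mono fun w => ?_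
      rw [← sub_sub_sub_cancel_left (g x) (g y) (g w)]
      exact enorm_sub_le
    _ = (∫⁻ w in K, ‖g w - g x‖ₑ) + ∫⁻ w in K, ‖g w - g y‖ₑ := lintegral_add_left (hmeas x) _
    _ ≤ _ := add_le_add (hmean (mem_closedBall_self dist_nonneg)) (hmean (mem_closedBall.2 le_rfl))
    _ = _ := by
      rw [ENNReal.rpow_sub _ _ hK₀ hK, ENNReal.rpow_one, ENNReal.rpow_neg,
        div_eq_mul_inv (volume K)]
      ring

theorem exists_enorm_sub_le_dist_rpow (E F : Type*) [NormedAddCommGroup E] [NormedSpace ℝ E]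
    [FiniteDimensional ℝ E] [MeasureSpace E] [BorelSpace E]
    [(volume : Measure E).IsAddHaarMeasure] [NormedAddCommGroup F] [NormedSpace ℝ F]
    {p : ℝ} (hp : 1 ≤ p) (hEp : (Module.finrank ℝ E : ℝ) < p) :
    ∃ C : ℝ≥0∞, C ≠ ⊤ ∧ ∀ g : E → F, ContDiff ℝ 1 g → ∀ x y,
      ‖g y - g x‖ₑ ≤ C * ENNReal.ofReal (dist y x ^ (1 - Module.finrank ℝ E / p)) *
        dirichletEnergy p univ g ^ (1 / p) := by
  have hp₀ : 0 < p := by positivity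
  have hV₀ : volume (ball (0 : E) 1) ≠ 0 := (measure_ball_pos _ _ one_pos).ne'
  have hV : volume (ball (0 : E) 1) ≠ ⊤ := measure_ball_lt_top.ne
  set J := ∫⁻ t in Ioc (0 : ℝ) 1, ENNReal.ofReal (t ^ (-(Module.finrank ℝ E : ℝ) / p)) with hJdef
  have hJ : J ≠ ⊤ := by
    have hint := (intervalIntegral.intervalIntegrable_rpow' (a := 0) (b := 1)
      (show -1 < -(Module.finrank ℝ E : ℝ) / p by rw [lt_div_iff₀ hp₀]; linarith)).1
    exact hint.lintegral_lt_top.ne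
  refine ⟨4 * J * volume (ball (0 : E) 1) ^ (-(1 / p)),
    ENNReal.mul_ne_top (ENNReal.mul_ne_top (by simp) hJ) (ENNReal.rpow_ne_top_of_ne_zero hV₀ hV),
    fun g hg x y => ?_⟩
  rcases eq_or_ne y x with rfl | hxy
  · simp
  have hR : 0 < dist y x := dist_pos.2 hxy
  have hpow : ENNReal.ofReal (dist y x ^ Module.finrank ℝ E) ^ (-(1 / p)) =
      ENNReal.ofReal (dist y x ^ (-(Module.finrank ℝ E : ℝ) / p)) := by
    rw [ENNReal.ofReal_rpow_of_pos (by positivity), ← Real.rpow_natCast, ← Real.rpow_mul hR.le]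
    congr 2
    ring
  refine (enorm_sub_le_rpow_dirichletEnergy hp hg hxy).trans_eq ?_
  rw [← hJdef, Measure.addHaar_closedBall _ _ hR.le,
    ENNReal.mul_rpow_of_ne_top ENNReal.ofReal_ne_top hV, hpow, sub_eq_add_neg, Real.rpow_add hR,
    Real.rpow_one, ENNReal.ofReal_mul hR.le, ENNReal.ofReal_mul zero_le_two, neg_div]
  norm_num
  ring

theorem exists_mul_ofReal_rpow_mul_le {C M : ℝ≥0∞} (hC : C ≠ ⊤) (hM : M ≠ ⊤) {α ε : ℝ}
    (hα : 0 < α) (hε : 0 < ε) : ∃ R > 0, C * ENNReal.ofReal (R ^ α) * M ≤ ENNReal.ofReal ε := by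
  have hrpow : Tendsto (fun R : ℝ => R ^ α) (𝓝[>] 0) (𝓝 0) := by
    simpa only [Real.zero_rpow hα.ne'] using
      (Real.continuousAt_rpow_const 0 α (Or.inr hα.le)).tendsto.mono_left nhdsWithin_le_nhds
  have hlim : Tendsto (fun R : ℝ => C * ENNReal.ofReal (R ^ α) * M) (𝓝[>] 0) (𝓝 0) := by
    simpa using ENNReal.Tendsto.mul_const
      (ENNReal.Tendsto.const_mul (ENNReal.tendsto_ofReal hrpow) (Or.inr hC)) (Or.inr hM)
  obtain ⟨R, hR, hR₀⟩ :=
    ((hlim.eventually (gt_mem_nhds (ENNReal.ofReal_pos.2 hε))).and self_mem_nhdsWithin).exists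
  exact ⟨R, hR₀, hR.le⟩

section Oscillation

variable (E F : Type*) [NormedAddCommGroup E] [NormedSpace ℝ E] [FiniteDimensional ℝ E]
  [MeasureSpace E] [BorelSpace E] [(volume : Measure E).IsAddHaarMeasure] [NormedAddCommGroup F]
  [NormedSpace ℝ F] {p : ℝ}

theorem exists_radius_forall_dist_le (hp : 1 ≤ p) (hEp : (Module.finrank ℝ E : ℝ) < p)
    {M : ℝ≥0∞} (hM : M ≠ ⊤) {ε : ℝ} (hε : 0 < ε) :
    ∃ R > 0, ∀ g : E → F, ContDiff ℝ 1 g → dirichletEnergy p univ g ≤ M →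
      ∀ x y, dist y x ≤ R → dist (g y) (g x) ≤ ε := by
  obtain ⟨C, hC, hmorrey⟩ := exists_enorm_sub_le_dist_rpow E F hp hEp
  have hα : 0 < 1 - Module.finrank ℝ E / p := by rwa [sub_pos, div_lt_one (by positivity)]
  obtain ⟨R, hR, hRε⟩ := exists_mul_ofReal_rpow_mul_le hC (M := M ^ (1 / p))
    (ENNReal.rpow_ne_top_of_nonneg (by positivity) hM) hα hε
  refine ⟨R, hR, fun g hg hgM x y hxy => ?_⟩
  rw [dist_eq_norm, ← ENNReal.ofReal_le_ofReal_iff hε.le, ofReal_norm]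
  refine (hmorrey g hg x y).trans (le_trans ?_ hRε)
  gcongr

theorem exists_dirichletEnergy_forall_dist_le (hp : 1 ≤ p) (hEp : (Module.finrank ℝ E : ℝ) < p)
    (D : ℝ) {ε : ℝ} (hε : 0 < ε) :
    ∃ c : ℝ≥0∞, c ≠ 0 ∧ ∀ g : E → F, ContDiff ℝ 1 g → dirichletEnergy p univ g ≤ c →
      ∀ x y, dist y x ≤ D → dist (g y) (g x) ≤ ε := by
  obtain ⟨C, hC, hmorrey⟩ := exists_enorm_sub_le_dist_rpow E F hp hEp
  have hα : 0 < 1 - Module.finrank ℝ E / p := by rwa [sub_pos, div_lt_one (by positivity)]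
  obtain ⟨R, hR, hRε⟩ := exists_mul_ofReal_rpow_mul_le
    (ENNReal.mul_ne_top hC ENNReal.ofReal_ne_top) ENNReal.one_ne_top
    (show 0 < 1 / p by positivity) hε (C := C * ENNReal.ofReal (D ^ (1 - Module.finrank ℝ E / p)))
  refine ⟨ENNReal.ofReal R, (ENNReal.ofReal_pos.2 hR).ne', fun g hg hgc x y hxy => ?_⟩
  rw [dist_eq_norm, ← ENNReal.ofReal_le_ofReal_iff hε.le, ofReal_norm]
  rw [mul_one, ← ENNReal.ofReal_rpow_of_pos hR] at hRε
  refine (hmorrey g hg x y).trans (le_trans ?_ hRε)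
  gcongr

end Oscillation

end Morrey

section ClassEnergy

theorem finite_of_separated {ι X Y : Type*} [PseudoMetricSpace X] [PseudoMetricSpace Y] {K : Set X}
    (hK : IsCompact K) {N : Set Y} (hN : IsCompact N) {R ε : ℝ} (hR : 0 < R) (hε : 0 < ε)
    {f : ι → X → Y} (hfN : ∀ i, MapsTo (f i) K N)
    (hosc : ∀ i x y, dist y x ≤ R → dist (f i y) (f i x) ≤ ε / 4)
    (hsep : ∀ i j, (∀ x ∈ K, dist (f i x) (f j x) ≤ ε) → i = j) : Finite ι := by
  obtain ⟨t, htK, htfin, ht⟩ := hK.finite_cover_balls hR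
  obtain ⟨s, -, hsfin, hs⟩ := hN.finite_cover_balls (show 0 < ε / 4 by positivity)
  have := htfin.to_subtype
  have := hsfin.to_subtype
  have hnear (i : ι) (a : t) : ∃ c : s, dist (f i a) c < ε / 4 := by
    obtain ⟨c, hc, hac⟩ := mem_iUnion₂.1 (hs (hfN i (htK a.2)))
    exact ⟨⟨c, hc⟩, hac⟩
  choose code hcode using hnear
  refine Finite.of_injective code fun i j hij => hsep i j fun x hx => ?_
  obtain ⟨a, ha, hxa⟩ := mem_iUnion₂.1 (ht hx)
  have hi := hcode i ⟨a, ha⟩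
  have hj := hcode j ⟨a, ha⟩
  rw [hij] at hi
  have hix := hosc i a x (mem_ball.1 hxa).le
  have hjx := hosc j a x (mem_ball.1 hxa).le
  set c : s := code j ⟨a, ha⟩
  linarith [dist_triangle (f i x) (f i a) c, dist_triangle (f j x) (f j a) c,
    dist_triangle_right (f i x) (f j x) c]

variable {F : Type*} [NormedAddCommGroup F] [NormedSpace ℝ F] {N : Set F} {b : N} {l : ℕ}

/-- The infimum of the `p`-energies of the `C¹` cube loops in the homotopy class `γ`. -/
def classEnergy (p : ℝ) (γ : HomotopyGroup (Fin l) N b) : ℝ≥0∞ :=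
  ⨅ (g : CubeLoop b l) (_ : ContDiff ℝ 1 g ∧ g.homotopyClass = γ), dirichletEnergy p univ g

theorem classEnergy_le (p : ℝ) {g : CubeLoop b l} (hg : ContDiff ℝ 1 g) :
    classEnergy p g.homotopyClass ≤ dirichletEnergy p univ g :=
  iInf₂_le g ⟨hg, rfl⟩

theorem classEnergy_lt_iff {p : ℝ} {γ : HomotopyGroup (Fin l) N b} {M : ℝ≥0∞} :
    classEnergy p γ < M ↔
      ∃ g : CubeLoop b l, ContDiff ℝ 1 g ∧ g.homotopyClass = γ ∧ dirichletEnergy p univ g < M := by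
  simp only [classEnergy, iInf_lt_iff, exists_prop, and_assoc]

variable {p : ℝ}

theorem TubularRetraction.finite_setOf_classEnergy_lt (P : TubularRetraction N) (hN : IsCompact N)
    (b : N) {l : ℕ} (hp : 1 ≤ p) (hlp : (l : ℝ) < p) {M : ℝ≥0∞} (hM : M ≠ ⊤) :
    {γ : HomotopyGroup (Fin l) N b | classEnergy p γ < M}.Finite := by
  obtain ⟨R, hR, hosc⟩ := exists_radius_forall_dist_le (Fin l → ℝ) F hp (by simpa using hlp) hM
    (show 0 < P.radius / 4 by linarith [P.radius_pos])
  choose g hg hgγ hgM using fun γ : {γ : HomotopyGroup (Fin l) N b | classEnergy p γ < M} =>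
    classEnergy_lt_iff.1 γ.2
  refine finite_of_separated (isCompact_closedBall 0 1) hN hR P.radius_pos
    (fun γ x _ => (g γ).mem x) (fun γ => hosc (g γ) (hg γ) (hgM γ).le) fun γ₁ γ₂ h => ?_
  refine Subtype.ext ((hgγ γ₁).symm.trans ((P.homotopyClass_eq_of_dist_le fun x => ?_).trans
    (hgγ γ₂)))
  by_cases hx : x ∈ closedBall 0 1
  · exact (dist_comm _ _).trans_le (h x hx)
  · rw [((g γ₁).eventuallyEq_base hx).eq_of_nhds, ((g γ₂).eventuallyEq_base hx).eq_of_nhds,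
      dist_self]
    exact P.radius_pos.le

theorem TubularRetraction.exists_classEnergy_lt_imp_eq (P : TubularRetraction N) (b : N) {l : ℕ}
    (hl : l ≠ 0) (hp : 1 ≤ p) (hlp : (l : ℝ) < p) :
    ∃ c : ℝ≥0∞, c ≠ 0 ∧ ∀ γ : HomotopyGroup (Fin l) N b, classEnergy p γ < c →
      γ = (CubeLoop.const b l).homotopyClass := by
  obtain ⟨c, hc, hosc⟩ := exists_dirichletEnergy_forall_dist_le (Fin l → ℝ) F hp
    (by simpa using hlp) 2 P.radius_pos
  refine ⟨c, hc, fun γ hγ => ?_⟩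
  obtain ⟨g, hg, rfl, hgc⟩ := classEnergy_lt_iff.1 hγ
  have := NeZero.mk hl
  have hone : ‖(1 : Fin l → ℝ)‖ = 1 := norm_one
  refine (P.homotopyClass_eq_of_dist_le fun x => ?_).symm
  by_cases hx : x ∈ closedBall 0 1
  · rw [show CubeLoop.const b l x = g 1 from (g.eq_base 1 hone.ge).symm]
    refine hosc g hg hgc.le 1 x ?_
    rw [dist_eq_norm]
    linarith [norm_sub_le x 1, mem_closedBall_zero_iff.1 hx]
  · rw [(g.eventuallyEq_base hx).eq_of_nhds,
      ((CubeLoop.const b l).eventuallyEq_base hx).eq_of_nhds, dist_self]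
    exact P.radius_pos.le

variable [CompleteSpace F]

theorem CollapsingRetraction.classEnergy_lt_top (P : CollapsingRetraction b) (hp : 1 ≤ p)
    (γ : HomotopyGroup (Fin l) N b) : classEnergy p γ < ⊤ := by
  obtain ⟨g, rfl⟩ := CubeLoop.homotopyClass_surjective γ
  obtain ⟨_, -, hsmooth⟩ := P.exists_smoothing_constant hp l
  obtain ⟨f, hf, hfg, -⟩ := hsmooth g
  have hf' : ContDiff ℝ 1 f := hf.of_le (by exact_mod_cast le_top)
  exact hfg ▸ (classEnergy_le p hf').trans_lt (f.dirichletEnergy_lt_top (by positivity) hf')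

theorem CollapsingRetraction.exists_contDiff_dirichletEnergy_le (P : CollapsingRetraction b)
    (hp : 1 ≤ p) (l : ℕ) :
    ∃ C : ℝ≥0∞, C ≠ ⊤ ∧ ∀ γ : HomotopyGroup (Fin l) N b, ∃ f : CubeLoop b l,
      ContDiff ℝ (⊤ : ℕ∞) f ∧ f.homotopyClass = γ ∧
        dirichletEnergy p univ f ≤ C * (classEnergy p γ + 1) := by
  obtain ⟨C, hC, hsmooth⟩ := P.exists_smoothing_constant hp l
  refine ⟨C * 2, ENNReal.mul_ne_top hC (by simp), fun γ => ?_⟩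
  obtain ⟨g, hg, rfl, hgγ⟩ := classEnergy_lt_iff.1
    (ENNReal.lt_add_right (P.classEnergy_lt_top hp γ).ne one_ne_zero)
  obtain ⟨f, hf, hfg, hfC⟩ := hsmooth g
  refine ⟨f, hf, hfg, (hfC hg).trans ?_⟩
  rw [mul_assoc]
  gcongr
  calc dirichletEnergy p univ g + 1
      ≤ classEnergy p g.homotopyClass + 1 + 1 := by gcongr
    _ ≤ 2 * (classEnergy p g.homotopyClass + 1) := by
      rw [two_mul]
      gcongr
      exact le_add_self

end ClassEnergy

section Gagliardo

variable {E F : Type*} [NormedAddCommGroup E] [MeasureSpace E]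
  [NormedAddCommGroup F] {p : ℝ}

theorem ofReal_norm_rpow (hp : 0 ≤ p) (v : F) : ENNReal.ofReal (‖v‖ ^ p) = ‖v‖ₑ ^ p := by
  rw [← ENNReal.ofReal_rpow_of_nonneg (norm_nonneg _) hp, ofReal_norm]

theorem lintegral_enorm_add_sub_rpow_le_measure [BorelSpace E]
    [(volume : Measure E).IsAddHaarMeasure] {v : E → F} (hp : 0 < p) {S : Set E}
    (hS : MeasurableSet S) (hv : EqOn v 0 Sᶜ) {M : ℝ≥0∞} (hM : ∀ x, ‖v x‖ₑ ≤ M) (h : E) :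
    ∫⁻ x, ‖v (x + h) - v x‖ₑ ^ p ≤ (2 * M) ^ p * (2 * volume S) := by
  set f : E → ℝ≥0∞ := S.indicator fun _ => (2 * M) ^ p
  have hf {x : E} (hx : x ∈ S) : (2 * M) ^ p ≤ f x := by simp [f, hx]
  have hbound (x : E) : ‖v (x + h) - v x‖ₑ ^ p ≤ (2 * M) ^ p := by
    rw [two_mul]
    gcongr
    exact enorm_sub_le.trans (add_le_add (hM _) (hM _))
  calc ∫⁻ x, ‖v (x + h) - v x‖ₑ ^ p ≤ ∫⁻ x, (f (x + h) + f x) := by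
        refine lintegral_mono fun x => ?_
        by_cases hx : x ∈ S
        · exact (hbound x).trans ((hf hx).trans le_add_self)
        by_cases hxh : x + h ∈ S
        · exact (hbound x).trans ((hf hxh).trans le_self_add)
        · simp [hv hx, hv hxh, hp]
    _ = _ := by
        rw [lintegral_add_right _ (measurable_const.indicator hS), lintegral_add_right_eq_self f,
          lintegral_indicator_const hS]
        ring

variable [NormedSpace ℝ E]

/-- The Gagliardo energy of order `1 - 1 / p` on the whole space, which is the trace order for maps
with `p`-integrable derivative in one more variable. -/
def gagliardoEnergy (p : ℝ) (v : E → F) : ℝ≥0∞ :=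
  ∫⁻ x, ∫⁻ y, ENNReal.ofReal (‖v y - v x‖ ^ p / ‖y - x‖ ^ ((Module.finrank ℝ E : ℝ) + p - 1))

theorem gagliardoE_le_gagliardoEnergy {n ν : ℕ} (hp : p ≠ 0)
    (A : Set (EuclideanSpace ℝ (Fin n))) (v : EuclideanSpace ℝ (Fin n) → EuclideanSpace ℝ (Fin ν)) :
    gagliardoE (1 - 1 / p) p A v ≤ gagliardoEnergy p v := by
  have hexp : (n : ℝ) + (1 - 1 / p) * p =
      Module.finrank ℝ (EuclideanSpace ℝ (Fin n)) + p - 1 := by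
    rw [finrank_euclideanSpace_fin]
    field_simp
    ring
  rw [gagliardoE, gagliardoEnergy, hexp]
  exact (setLIntegral_le_lintegral _ _).trans
    (lintegral_mono fun x => setLIntegral_le_lintegral _ _)

variable (E) in
/-- The kernel obtained from the Gagliardo kernel by weighting it with the increment
`min (‖h‖ ^ p) 1` of a function bounded in `L^p` together with its gradient. -/
def interpolationKernel (p : ℝ) (h : E) : ℝ≥0∞ :=
  ENNReal.ofReal (min (‖h‖ ^ p) 1 / ‖h‖ ^ ((Module.finrank ℝ E : ℝ) + p - 1))

variable [BorelSpace E]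

theorem measurable_interpolationKernel : Measurable (interpolationKernel E p) := by
  unfold interpolationKernel
  fun_prop

variable [FiniteDimensional ℝ E] [(volume : Measure E).IsAddHaarMeasure]

theorem lintegral_interpolationKernel_lt_top [Nontrivial E] (hp : 1 < p) :
    ∫⁻ h, interpolationKernel E p h < ⊤ := by
  set n := Module.finrank ℝ E with hn
  have hpow (y : ℝ) (hy : 0 < y) : y ^ (n - 1) / y ^ ((n : ℝ) + p - 1) = y ^ (-p) := by
    rw [← Real.rpow_natCast, ← Real.rpow_sub hy, Nat.cast_pred Module.finrank_pos]
    congr 1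
    ring
  refine Integrable.lintegral_lt_top ((integrable_fun_norm_addHaar volume
    (f := fun y : ℝ => min (y ^ p) 1 / y ^ ((n : ℝ) + p - 1))).2 ?_)
  rw [← hn, ← Ioc_union_Ioi_eq_Ioi (zero_le_one' ℝ), integrableOn_union]
  constructor
  · have hone : IntegrableOn (fun _ : ℝ => (1 : ℝ)) (Ioc 0 1) := by simp
    refine hone.congr_fun (fun y hy => ?_) measurableSet_Ioc
    simp only [smul_eq_mul]
    rw [min_eq_left (Real.rpow_le_one hy.1.le hy.2 (by linarith)), mul_div_assoc', mul_comm,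
      ← mul_div_assoc', hpow y hy.1, ← Real.rpow_add hy.1, add_neg_cancel, Real.rpow_zero]
  · refine (integrableOn_Ioi_rpow_of_lt (neg_lt_neg hp) one_pos).congr_fun (fun y hy => ?_)
      measurableSet_Ioi
    have hy : (1 : ℝ) < y := hy
    simp only [smul_eq_mul]
    rw [min_eq_right (Real.one_le_rpow hy.le (by linarith)), mul_one_div, hpow y (by linarith)]

theorem lintegral_min_div_eq (hp : 0 < p) {A B : ℝ} (hA : 0 < A) (hB : 0 < B) :
    ∫⁻ h : E, ENNReal.ofReal
        (min (‖h‖ ^ p * B) A / ‖h‖ ^ ((Module.finrank ℝ E : ℝ) + p - 1)) =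
      (∫⁻ h, interpolationKernel E p h) * ENNReal.ofReal (A ^ (1 / p) * B ^ (1 - 1 / p)) := by
  set n := Module.finrank ℝ E with hn
  set r : ℝ := (A / B) ^ (1 / p) with hr
  have hr₀ : 0 < r := by positivity
  have hrB : r ^ p * B = A := by
    rw [hr, ← Real.rpow_mul (by positivity), one_div_mul_cancel hp.ne', Real.rpow_one,
      div_mul_cancel₀ _ hB.ne']
  have hscale (h : E) : ENNReal.ofReal (min (‖h‖ ^ p * B) A / ‖h‖ ^ ((n : ℝ) + p - 1)) =
      ENNReal.ofReal (A * r ^ (-((n : ℝ) + p - 1))) *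
        interpolationKernel E p (0 + r⁻¹ • h) := by
    have hmin : min (‖h‖ ^ p * B) (r ^ p * B) = r ^ p * B * min ((r ^ p)⁻¹ * ‖h‖ ^ p) 1 := by
      rw [mul_min_of_nonneg _ _ (by positivity), mul_one, mul_right_comm,
        mul_inv_cancel_left₀ (by positivity)]
    rw [interpolationKernel, ← hn, ← ENNReal.ofReal_mul (by positivity), zero_add, norm_smul,
      Real.norm_of_nonneg (by positivity), Real.mul_rpow (by positivity) (by positivity),
      Real.mul_rpow (by positivity) (by positivity), Real.inv_rpow hr₀.le, Real.inv_rpow hr₀.le,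
      Real.rpow_neg hr₀.le, ← hrB, hmin]
    field_simp
  have hconst : A * r ^ (-((n : ℝ) + p - 1)) * r ^ (n : ℝ) = A ^ (1 / p) * B ^ (1 - 1 / p) := by
    rw [mul_assoc, ← Real.rpow_add hr₀, show -((n : ℝ) + p - 1) + n = 1 - p by ring, hr,
      ← Real.rpow_mul (by positivity), Real.div_rpow hA.le hB.le, div_eq_mul_inv,
      ← Real.rpow_neg hB.le, ← mul_assoc]
    nth_rewrite 1 [← Real.rpow_one A]
    rw [← Real.rpow_add hA]
    congr 2 <;> field_simp <;> ring
  simp_rw [hscale]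
  rw [lintegral_const_mul _ (by have := measurable_interpolationKernel (E := E) (p := p); fun_prop),
    lintegral_comp_add_smul _ _ (inv_pos.2 hr₀), ← hn, Real.inv_rpow hr₀.le, Real.rpow_neg hr₀.le n,
    inv_inv, ← hconst, ENNReal.ofReal_mul (by positivity) (q := r ^ (n : ℝ))]
  ring

theorem gagliardoEnergy_eq_lintegral_increment (hp : 0 ≤ p) {v : E → F} (hv : Continuous v) :
    gagliardoEnergy p v = ∫⁻ h, (∫⁻ x, ‖v (x + h) - v x‖ₑ ^ p) *
      ENNReal.ofReal (‖h‖ ^ ((Module.finrank ℝ E : ℝ) + p - 1))⁻¹ := by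
  have hmeas : Measurable fun q : E × E => ‖v (q.1 + q.2) - v q.1‖ₑ ^ p :=
    (Continuous.enorm (by fun_prop)).measurable.pow_const p
  calc gagliardoEnergy p v
      = ∫⁻ x, ∫⁻ h, ‖v (x + h) - v x‖ₑ ^ p *
          ENNReal.ofReal (‖h‖ ^ ((Module.finrank ℝ E : ℝ) + p - 1))⁻¹ := by
        refine lintegral_congr fun x => ?_
        rw [← lintegral_add_left_eq_self _ x]
        refine lintegral_congr fun h => ?_
        rw [add_sub_cancel_left, div_eq_mul_inv, ENNReal.ofReal_mul (by positivity),
          ofReal_norm_rpow hp]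
    _ = _ := by
        rw [lintegral_lintegral_swap (hmeas.mul (by fun_prop)).aemeasurable]
        exact lintegral_congr fun h => lintegral_mul_const _
          (hmeas.comp (measurable_id.prodMk measurable_const))

variable [NormedSpace ℝ F] {v : E → F}

theorem lintegral_enorm_add_sub_rpow_le (hp : 1 ≤ p) (hv : ContDiff ℝ 1 v) (h : E) :
    ∫⁻ x, ‖v (x + h) - v x‖ₑ ^ p ≤ ‖h‖ₑ ^ p * dirichletEnergy p univ v := by
  have hp₀ : 0 ≤ p := by positivity
  have _hDv := hv.continuous_fderiv one_ne_zero
  have hmeas (x : E) : Measurable fun t : ℝ => ‖fderiv ℝ v (x + t • h)‖ₑ * ‖h‖ₑ :=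
    (Continuous.enorm (by fun_prop)).measurable.mul_const _
  calc ∫⁻ x, ‖v (x + h) - v x‖ₑ ^ p
      ≤ ∫⁻ x, ∫⁻ t in Ioc (0 : ℝ) 1, ‖fderiv ℝ v (x + t • h)‖ₑ ^ p * ‖h‖ₑ ^ p := by
        refine lintegral_mono fun x => ?_
        have hjensen := lintegral_le_lintegral_rpow_mul_measure_univ hp (hmeas x)
          (μ := volume.restrict (Ioc (0 : ℝ) 1))
        simp only [Measure.restrict_apply_univ, Real.volume_Ioc, sub_zero, ENNReal.ofReal_one,
          ENNReal.one_rpow, mul_one, ENNReal.mul_rpow_of_nonneg _ _ hp₀] at hjensen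
        rw [← ENNReal.le_rpow_inv_iff (by positivity), ← one_div]
        exact (enorm_add_sub_le_lintegral_fderiv hv x h).trans hjensen
    _ = ∫⁻ t in Ioc (0 : ℝ) 1, ∫⁻ x, ‖fderiv ℝ v (x + t • h)‖ₑ ^ p * ‖h‖ₑ ^ p :=
        lintegral_lintegral_swap (Measurable.aemeasurable
          (((Continuous.enorm (by fun_prop)).measurable.pow_const p).mul_const _))
    _ = ∫⁻ _ in Ioc (0 : ℝ) 1, ‖h‖ₑ ^ p * dirichletEnergy p univ v := by
        refine lintegral_congr fun t => ?_
        rw [lintegral_add_right_eq_self (fun x => ‖fderiv ℝ v x‖ₑ ^ p * ‖h‖ₑ ^ p),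
          lintegral_mul_const _ ((Continuous.enorm (by fun_prop)).measurable.pow_const p),
          mul_comm, dirichletEnergy, setLIntegral_univ]
    _ = _ := by simp

theorem gagliardoEnergy_le (hp : 1 ≤ p) (hv : ContDiff ℝ 1 v) {A B : ℝ} (hA : 0 < A) (hB : 0 < B)
    (hvA : ∀ h, ∫⁻ x, ‖v (x + h) - v x‖ₑ ^ p ≤ ENNReal.ofReal A)
    (hvB : dirichletEnergy p univ v ≤ ENNReal.ofReal B) :
    gagliardoEnergy p v ≤
      (∫⁻ h, interpolationKernel E p h) * ENNReal.ofReal (A ^ (1 / p) * B ^ (1 - 1 / p)) := by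
  have hp₀ : 0 ≤ p := by positivity
  rw [gagliardoEnergy_eq_lintegral_increment hp₀ hv.continuous,
    ← lintegral_min_div_eq (by positivity) hA hB]
  refine lintegral_mono fun h => ?_
  rw [div_eq_mul_inv, ENNReal.ofReal_mul (by positivity)]
  gcongr
  rw [ENNReal.ofReal_min, ENNReal.ofReal_mul (by positivity), ofReal_norm_rpow hp₀]
  exact le_min ((lintegral_enorm_add_sub_rpow_le hp hv h).trans (by gcongr)) (hvA h)

end Gagliardo

section Slicing

variable {E F : Type*} [NormedAddCommGroup E] [NormedSpace ℝ E] [NormedAddCommGroup F]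
  [NormedSpace ℝ F] {N : Set F} {b : N} {l : ℕ} {p : ℝ}

/-- The competitors `U : Ω × [0, h) → N` in the extension problem for `v : Ω → N`. -/
structure IsExtension (N : Set F) (Ω : Set E) (h : ℝ) (v : E → F) (U : E × ℝ → F) : Prop where
  continuousOn : ContinuousOn U (Ω ×ˢ Ico 0 h)
  contDiffOn : ContDiffOn ℝ 1 U (Ω ×ˢ Ioo 0 h)
  mapsTo : MapsTo U (Ω ×ˢ Ico 0 h) N
  trace : ∀ x ∈ Ω, U (x, 0) = v x

/-- The function `√(δ² + |Y|²)`, a smoothing of the Euclidean norm. -/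
def smoothCone (δ : ℝ) (Y : Fin l → ℝ) : ℝ := ‖WithLp.toLp 2 (Fin.cons δ Y : Fin (l + 1) → ℝ)‖

theorem norm_toLp_two_le {n : ℕ} (x : Fin n → ℝ) : ‖WithLp.toLp 2 x‖ ≤ n * ‖x‖ := by
  have hlip := (PiLp.lipschitzWith_toLp 2 fun _ : Fin n => ℝ).norm_sub_le x 0
  have hsqrt : (n : ℝ) ^ (1 / 2 : ℝ) ≤ n := by
    rcases n.eq_zero_or_pos with rfl | hn
    · simp
    · exact Real.rpow_le_self_of_one_le (by exact_mod_cast hn) (by norm_num)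
  refine le_trans (by simpa using hlip) (mul_le_mul_of_nonneg_right ?_ (norm_nonneg x))
  simpa using hsqrt

theorem norm_le_smoothCone (δ : ℝ) (Y : Fin l → ℝ) : ‖Y‖ ≤ smoothCone δ Y :=
  (pi_norm_le_iff_of_nonneg (norm_nonneg _)).2 fun i =>
    PiLp.norm_apply_le (WithLp.toLp 2 (Fin.cons δ Y : Fin (l + 1) → ℝ)) i.succ

theorem smoothCone_le {δ : ℝ} {Y : Fin l → ℝ} (hY : ‖Y‖ ≤ δ) :
    smoothCone δ Y ≤ (l + 1) * δ := by
  have hδ : 0 ≤ δ := (norm_nonneg Y).trans hY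
  have hcons : ‖(Fin.cons δ Y : Fin (l + 1) → ℝ)‖ ≤ δ :=
    (pi_norm_le_iff_of_nonneg hδ).2 (Fin.cases (by simp [abs_of_nonneg hδ])
      fun i => (norm_le_pi_norm Y i).trans hY)
  calc smoothCone δ Y ≤ (l + 1 : ℕ) * ‖(Fin.cons δ Y : Fin (l + 1) → ℝ)‖ := norm_toLp_two_le _
    _ ≤ (l + 1) * δ := by push_cast; gcongr

theorem dist_smoothCone_le (δ : ℝ) (Y Z : Fin l → ℝ) :
    dist (smoothCone δ Y) (smoothCone δ Z) ≤ (l + 1) * ‖Y - Z‖ := by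
  have hcons : ‖(Fin.cons δ Y - Fin.cons δ Z : Fin (l + 1) → ℝ)‖ ≤ ‖Y - Z‖ :=
    (pi_norm_le_iff_of_nonneg (norm_nonneg _)).2
      (Fin.cases (by simp) fun i => by simpa using norm_le_pi_norm (Y - Z) i)
  refine (dist_norm_norm_le _ _).trans ?_
  rw [← WithLp.toLp_sub]
  refine (norm_toLp_two_le _).trans ?_
  push_cast
  gcongr

theorem lipschitzWith_smoothCone (δ : ℝ) :
    LipschitzWith (l + 1) (smoothCone δ : (Fin l → ℝ) → ℝ) :=
  LipschitzWith.of_dist_le_mul fun Y Z => by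
    simpa [dist_eq_norm Y Z] using dist_smoothCone_le δ Y Z

theorem contDiff_smoothCone {δ : ℝ} (hδ : δ ≠ 0) :
    ContDiff ℝ 1 (smoothCone δ : (Fin l → ℝ) → ℝ) := by
  have hcons : ContDiff ℝ 1 fun Y : Fin l → ℝ => (Fin.cons δ Y : Fin (l + 1) → ℝ) :=
    contDiff_pi.2 fun i => by
      cases i using Fin.cases <;> simp only [Fin.cons_zero, Fin.cons_succ] <;> fun_prop
  refine ContDiff.norm ℝ (f := fun Y => WithLp.toLp 2 (Fin.cons δ Y : Fin (l + 1) → ℝ))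
    (PiLp.contDiff_toLp.comp hcons) fun Y hY => hδ ?_
  exact congrArg (fun z : EuclideanSpace ℝ (Fin (l + 1)) => z 0) hY

variable {θ : (Fin l → ℝ) → ℝ} {v : (Fin l → ℝ) → F} {U : (Fin l → ℝ) × ℝ → F} {r R : ℝ}
  {g : CubeLoop b l}

/- The slice is the graph of `Y ↦ max (r - θ Y) 0`; lowering its height to zero deforms the
restriction of `U` into the trace. -/
theorem IsExtension.exists_cubeLoop_eq_slice (hU : IsExtension N (ball 0 R) R v U)
    (hθc : Continuous θ) (hθ : ∀ Y, ‖Y‖ ≤ θ Y) (hr : 0 < r) (hrR : r < R)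
    (hv : ∀ Y, r ≤ θ Y → v Y = b) (hg : ∀ X, g X = v (r • X)) :
    ∃ w : CubeLoop b l, w.homotopyClass = g.homotopyClass ∧
      (∀ X, θ (r • X) < r → w X = U (r • X, r - θ (r • X))) ∧
      ∀ X, r ≤ θ (r • X) → w X = b := by
  set τ : (Fin l → ℝ) → ℝ := fun X => max (r - θ (r • X)) 0
  have hτ0 (X) : 0 ≤ τ X := le_max_right _ _
  have hτR (X) : τ X < R := max_lt (by linarith [hθ (r • X), norm_nonneg (r • X)]) (hr.trans hrR)
  have hsphere {X : Fin l → ℝ} (hX : 1 ≤ ‖X‖) : r ≤ θ (r • X) := by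
    refine le_trans ?_ (hθ _)
    rw [norm_smul, Real.norm_of_nonneg hr.le]
    exact le_mul_of_one_le_right hr.le hX
  have hball {X : Fin l → ℝ} (hX : X ∈ closedBall 0 1) : r • X ∈ ball (0 : Fin l → ℝ) R := by
    rw [mem_ball_zero_iff, norm_smul, Real.norm_of_nonneg hr.le]
    exact (mul_le_of_le_one_right hr.le (mem_closedBall_zero_iff.1 hX)).trans_lt hrR
  have hbase {X : Fin l → ℝ} (hX : X ∈ closedBall 0 1) (h : r ≤ θ (r • X)) (s : ℝ) :
      U (r • X, (1 - s) * τ X) = b := by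
    rw [show τ X = 0 from max_eq_right (by linarith), mul_zero, hU.trace _ (hball hX), hv _ h]
  set H : ℝ × (Fin l → ℝ) → F := fun q => U (r • q.2, (1 - q.1) * τ q.2)
  have hHmaps : MapsTo (fun q : ℝ × (Fin l → ℝ) => (r • q.2, (1 - q.1) * τ q.2))
      (Icc 0 1 ×ˢ closedBall 0 1) (ball 0 R ×ˢ Ico 0 R) := fun q hq =>
    ⟨hball hq.2, mul_nonneg (by linarith [hq.1.2]) (hτ0 _),
      (mul_le_of_le_one_left (hτ0 _) (by linarith [hq.1.1])).trans_lt (hτR _)⟩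
  have hH : ContinuousOn H (Icc 0 1 ×ˢ closedBall 0 1) :=
    hU.continuousOn.comp (by fun_prop) hHmaps
  have hzero (X : Fin l → ℝ) (hX : X ∈ closedBall 0 1) :
      ((0 : ℝ), X) ∈ Icc (0 : ℝ) 1 ×ˢ closedBall (0 : Fin l → ℝ) 1 := ⟨by simp, hX⟩
  set w : CubeLoop b l := .ofContinuousOn (fun X => H (0, X)) (hH.comp (by fun_prop) hzero)
    (fun X hX => hU.mapsTo (hHmaps (hzero X hX)))
    fun X hX => hbase (sphere_subset_closedBall hX) (hsphere (mem_sphere_zero_iff_norm.1 hX).ge) 0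
  have hw {X : Fin l → ℝ} (hX : ‖X‖ ≤ 1) : w X = H (0, X) := if_pos hX
  refine ⟨w, CubeLoop.homotopyClass_eq_of_homotopy H hH (fun q hq => hU.mapsTo (hHmaps hq))
    (fun s _ X hX => hbase (sphere_subset_closedBall hX)
      (hsphere (mem_sphere_zero_iff_norm.1 hX).ge) s)
    (fun X hX => (hw (mem_closedBall_zero_iff.1 hX)).symm)
    (fun X hX => by simp [H, hU.trace _ (hball hX), hg]), fun X hX => ?_, fun X hX => ?_⟩
  · rw [hw (not_lt.1 fun h => hX.not_ge (hsphere h.le))]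
    simp [H, τ, max_eq_left (sub_nonneg.2 hX.le)]
  · rcases le_total ‖X‖ 1 with h | h
    · exact (hw h).trans (hbase (mem_closedBall_zero_iff.2 h) hX 0)
    · exact w.eq_base X h

theorem enorm_fderiv_slice_le {κ : NNReal} (hθd : Differentiable ℝ θ) (hθL : LipschitzWith κ θ)
    (hκ : 1 ≤ κ) {X : Fin l → ℝ} (hU : DifferentiableAt ℝ U (r • X, r - θ (r • X))) :
    ‖fderiv ℝ (fun X => U (r • X, r - θ (r • X))) X‖ₑ ≤
      κ * ‖r‖ₑ * ‖fderiv ℝ U (r • X, r - θ (r • X))‖ₑ := by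
  have hgraph : LipschitzWith κ fun Y => (Y, r - θ Y) := by
    simpa [hκ] using LipschitzWith.id.prodMk ((LipschitzWith.const r).sub hθL)
  have hslice : LipschitzWith (κ * ‖r‖₊) fun X => (r • X, r - θ (r • X)) :=
    hgraph.comp (lipschitzWith_smul r)
  refine (enorm_fderiv_comp_le (f := fun X => (r • X, r - θ (r • X))) hU (by fun_prop)).trans ?_
  rw [mul_comm]
  gcongr
  exact enorm_le_coe.2 (norm_fderiv_le_of_lipschitz ℝ hslice)

theorem IsExtension.classEnergy_le_slice (hU : IsExtension N (ball 0 R) R v U)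
    (P : CollapsingRetraction b) (hp : 0 < p) {κ : NNReal} (hθd : ContDiff ℝ 1 θ)
    (hθL : LipschitzWith κ θ) (hκ : 1 ≤ κ) (hθ : ∀ Y, ‖Y‖ ≤ θ Y) (hr : 0 < r) (hrR : r < R)
    (hv : ∀ Y, r ≤ θ Y → v Y = b) (hg : ∀ X, g X = v (r • X)) :
    classEnergy p g.homotopyClass ≤ (P.lipConst * κ : ℝ≥0∞) ^ p *
      (ENNReal.ofReal (r ^ (p - l)) * ∫⁻ Y in {Y | θ Y < r}, ‖fderiv ℝ U (Y, r - θ Y)‖ₑ ^ p) := by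
  obtain ⟨w, hwg, hwU, hwb⟩ := hU.exists_cubeLoop_eq_slice hθd.continuous hθ hr hrR hv hg
  have hopen : IsOpen {Y | θ Y < r} := isOpen_lt hθd.continuous continuous_const
  have hUd {X} (hX : θ (r • X) < r) : ContDiffAt ℝ 1 U (r • X, r - θ (r • X)) :=
    hU.contDiffOn.contDiffAt ((isOpen_ball.prod isOpen_Ioo).mem_nhds
      ⟨mem_ball_zero_iff.2 ((hθ _).trans_lt (hX.trans hrR)), sub_pos.2 hX,
        by linarith [hθ (r • X), norm_nonneg (r • X)]⟩)
  have hwU' {X} (hX : θ (r • X) < r) : w =ᶠ[𝓝 X] fun X => U (r • X, r - θ (r • X)) := by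
    filter_upwards [(hopen.preimage (continuous_const_smul r)).mem_nhds hX] with Z hZ
    exact hwU Z hZ
  have hwd {X} (hX : θ (r • X) < r) : ContDiffAt ℝ 1 w X :=
    ((hUd hX).comp X (by fun_prop)).congr_of_eventuallyEq (hwU' hX)
  have hbound (X) : ‖fderiv ℝ (P.collapseLoop w) X‖ₑ ^ p ≤
      (P.lipConst * (κ * ‖r‖ₑ) : ℝ≥0∞) ^ p * {Y | θ Y < r}.indicator
        (fun Y => ‖fderiv ℝ U (Y, r - θ Y)‖ₑ ^ p) (0 + r • X) := by
    rw [zero_add]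
    rcases lt_or_ge (θ (r • X)) r with hX | hX
    · rw [indicator_of_mem (by exact hX), ← ENNReal.mul_rpow_of_nonneg _ _ hp.le]
      gcongr
      refine (P.enorm_fderiv_collapseLoop_le ((hwd hX).differentiableAt (by simp))).trans ?_
      rw [(hwU' hX).fderiv_eq, mul_assoc]
      gcongr
      exact enorm_fderiv_slice_le (hθd.differentiable (by simp)) hθL hκ
        ((hUd hX).differentiableAt (by simp))
    · rw [(P.collapseLoop_eventuallyEq w (hwb X hX)).fderiv_eq, fderiv_fun_const, Pi.zero_apply,
        ← ofReal_norm, norm_zero, ENNReal.ofReal_zero, ENNReal.zero_rpow_of_pos hp]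
      exact zero_le
  have hC : ContDiff ℝ 1 (P.collapseLoop w) := P.contDiff_collapseLoop fun X hX =>
    hwd (not_le.1 fun h => hX (hwb X h))
  calc classEnergy p g.homotopyClass
      = classEnergy p (P.collapseLoop w).homotopyClass := by
        rw [P.homotopyClass_collapseLoop, hwg]
    _ ≤ ∫⁻ X, ‖fderiv ℝ (P.collapseLoop w) X‖ₑ ^ p := by
        simpa [dirichletEnergy] using classEnergy_le p hC
    _ ≤ ∫⁻ X, _ := lintegral_mono hbound
    _ = _ := by
        rw [lintegral_const_mul' _ _ (by finiteness), lintegral_comp_add_smul _ _ hr,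
          lintegral_indicator hopen.measurableSet, ← mul_assoc, ← mul_assoc (P.lipConst : ℝ≥0∞),
          ENNReal.mul_rpow_of_nonneg _ _ hp.le, Real.enorm_of_nonneg hr.le,
          ENNReal.ofReal_rpow_of_nonneg hr.le hp.le, mul_assoc (_ ^ p),
          ← ENNReal.ofReal_mul (by positivity), ← Real.rpow_add hr, ← sub_eq_add_neg,
          Module.finrank_fin_fun, mul_assoc]

theorem setLIntegral_slices_le {G : (Fin l → ℝ) × ℝ → ℝ≥0∞} (hG : Measurable G)
    (hθc : Continuous θ) (hθ : ∀ Y, ‖Y‖ ≤ θ Y) (R : ℝ) :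
    ∫⁻ r in Ioo 0 R, ∫⁻ Y in {Y | θ Y < r}, G (Y, r - θ Y) ≤
      ∫⁻ z in ball 0 R ×ˢ Ioo 0 R, G z := by
  have hS : MeasurableSet (ball (0 : Fin l → ℝ) R ×ˢ Ioo 0 R) :=
    measurableSet_ball.prod measurableSet_Ioo
  set K := (ball (0 : Fin l → ℝ) R ×ˢ Ioo 0 R).indicator G
  have hK : Measurable K := hG.indicator hS
  have hslice (r : ℝ) (hr : r ∈ Ioo 0 R) :
      ∫⁻ Y in {Y | θ Y < r}, G (Y, r - θ Y) ≤ ∫⁻ Y, K (Y, r - θ Y) := by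
    refine (setLIntegral_mono' (isOpen_lt hθc continuous_const).measurableSet fun Y hY => ?_).trans
      (setLIntegral_le_lintegral _ _)
    refine (indicator_of_mem (s := ball (0 : Fin l → ℝ) R ×ˢ Ioo 0 R) ?_ G).ge
    exact ⟨mem_ball_zero_iff.2 ((hθ Y).trans_lt (hY.out.trans hr.2)), sub_pos.2 hY,
      by linarith [hr.2, hθ Y, norm_nonneg Y]⟩
  calc _ ≤ ∫⁻ r, ∫⁻ Y, K (Y, r - θ Y) :=
        (setLIntegral_mono' measurableSet_Ioo hslice).trans (setLIntegral_le_lintegral _ _)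
    _ = ∫⁻ Y, ∫⁻ r, K (Y, r - θ Y) :=
        lintegral_lintegral_swap (hK.comp (by fun_prop)).aemeasurable
    _ = ∫⁻ Y, ∫⁻ t, K (Y, t) :=
        lintegral_congr fun Y => lintegral_sub_right_eq_self (fun t => K (Y, t)) _
    _ = ∫⁻ z in ball 0 R ×ˢ Ioo 0 R, G z := by
        rw [← lintegral_prod _ hK.aemeasurable, ← Measure.volume_eq_prod, lintegral_indicator hS]

theorem IsExtension.classEnergy_mul_rpow_le_slice (P : CollapsingRetraction b) (hp : 0 < p)
    (f : CubeLoop b l) {δ : ℝ} (hδ : 0 < δ)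
    (hU : IsExtension N (ball 0 R) R (fun Y => f (δ⁻¹ • Y)) U)
    (hδr : (l + 1) * δ < r) (hrR : r < R) :
    classEnergy p f.homotopyClass * ENNReal.ofReal (r ^ ((l : ℝ) - p)) ≤
      (P.lipConst * (l + 1 : ℝ≥0∞)) ^ p *
        ∫⁻ Y in {Y | smoothCone δ Y < r}, ‖fderiv ℝ U (Y, r - smoothCone δ Y)‖ₑ ^ p := by
  have hδr' : δ < r := (le_mul_of_one_le_left hδ.le (by simp)).trans_lt hδr
  have hr : 0 < r := hδ.trans hδr'
  have hbase (Y : Fin l → ℝ) (hY : r ≤ smoothCone δ Y) : f (δ⁻¹ • Y) = b := by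
    refine f.eq_base _ (not_lt.1 fun h => (hδr.trans_le hY).not_ge (smoothCone_le ?_))
    rw [norm_smul, norm_inv, Real.norm_of_nonneg hδ.le, inv_mul_lt_iff₀ hδ, mul_one] at h
    exact h.le
  have hdil : 1 ≤ δ⁻¹ * r := by
    rw [inv_mul_eq_div, one_le_div hδ]
    exact hδr'.le
  have hle := hU.classEnergy_le_slice P hp (g := f.dilate hdil) (contDiff_smoothCone hδ.ne')
    (lipschitzWith_smoothCone δ) le_add_self (norm_le_smoothCone δ) hr hrR hbase
    fun X => by simp [CubeLoop.dilate, smul_smul]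
  have hcancel : ENNReal.ofReal (r ^ (p - l)) * ENNReal.ofReal (r ^ ((l : ℝ) - p)) = 1 := by
    rw [← ENNReal.ofReal_mul (by positivity), ← Real.rpow_add hr]
    simp
  rw [CubeLoop.homotopyClass_dilate] at hle
  push_cast at hle
  grw [hle]
  rw [mul_assoc, mul_right_comm, hcancel, one_mul]

theorem IsExtension.classEnergy_mul_lintegral_rpow_le [CompleteSpace F]
    (P : CollapsingRetraction b) (hp : 0 < p) (f : CubeLoop b l) {δ : ℝ} (hδ : 0 < δ)
    (hU : IsExtension N (ball 0 R) R (fun Y => f (δ⁻¹ • Y)) U) :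
    classEnergy p f.homotopyClass *
        ∫⁻ r in Ioo (((l : ℝ) + 1) * δ) R, ENNReal.ofReal (r ^ ((l : ℝ) - p)) ≤
      (P.lipConst * (l + 1 : ℝ≥0∞)) ^ p * dirichletEnergy p (ball 0 R ×ˢ Ioo 0 R) U := by
  set slice : ℝ → ℝ≥0∞ := fun r =>
    ∫⁻ Y in {Y | smoothCone δ Y < r}, ‖fderiv ℝ U (Y, r - smoothCone δ Y)‖ₑ ^ p
  rw [← lintegral_const_mul _ (by fun_prop)]
  calc _ ≤ ∫⁻ r in Ioo (((l : ℝ) + 1) * δ) R, (P.lipConst * (l + 1 : ℝ≥0∞)) ^ p * slice r :=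
        setLIntegral_mono' measurableSet_Ioo fun r hr =>
          hU.classEnergy_mul_rpow_le_slice P hp f hδ hr.1 hr.2
    _ ≤ (P.lipConst * (l + 1 : ℝ≥0∞)) ^ p * ∫⁻ r in Ioo 0 R, slice r := by
        rw [lintegral_const_mul' _ _ (by finiteness)]
        gcongr
        positivity
    _ ≤ (P.lipConst * (l + 1 : ℝ≥0∞)) ^ p * dirichletEnergy p (ball 0 R ×ˢ Ioo 0 R) U := by
        gcongr
        exact setLIntegral_slices_le ((measurable_fderiv ℝ U).enorm.pow_const p)
          (contDiff_smoothCone hδ.ne').continuous (norm_le_smoothCone δ) R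

end Slicing

section PolarCoordinates

theorem lintegral_eq_lintegral_toSphere {E : Type*} [NormedAddCommGroup E] [NormedSpace ℝ E]
    [FiniteDimensional ℝ E] [Nontrivial E] [MeasurableSpace E] [BorelSpace E] (μ : Measure E)
    [μ.IsAddHaarMeasure] {F : E → ℝ≥0∞} (hF : Measurable F) :
    ∫⁻ y, F y ∂μ = ∫⁻ ω, (∫⁻ ρ in Ioi (0 : ℝ),
      ENNReal.ofReal (ρ ^ (Module.finrank ℝ E - 1)) * F (ρ • (ω : E))) ∂μ.toSphere := by
  have hsmul : Measurable fun q : sphere (0 : E) 1 × Ioi (0 : ℝ) => F ((q.2 : ℝ) • (q.1 : E)) :=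
    hF.comp (by fun_prop)
  calc ∫⁻ y, F y ∂μ = ∫⁻ y : ({0}ᶜ : Set E), F y ∂(μ.comap (↑)) := by
        rw [lintegral_subtype_comap (measurableSet_singleton _).compl, restrict_compl_singleton]
    _ = ∫⁻ q : sphere (0 : E) 1 × Ioi (0 : ℝ), F ((q.2 : ℝ) • (q.1 : E))
          ∂(μ.toSphere.prod (Measure.volumeIoiPow (Module.finrank ℝ E - 1))) := by
        rw [← μ.measurePreserving_homeomorphUnitSphereProd.lintegral_comp hsmul]
        refine lintegral_congr fun y => ?_
        simp [smul_smul, norm_ne_zero_iff.2 y.2]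
    _ = _ := by
        rw [lintegral_prod _ hsmul.aemeasurable]
        refine lintegral_congr fun ω => ?_
        refine (lintegral_withDensity_eq_lintegral_mul _ (by fun_prop)
          (hsmul.comp measurable_prodMk_left)).trans ?_
        exact lintegral_subtype_comap measurableSet_Ioi fun ρ : ℝ =>
          ENNReal.ofReal (ρ ^ (Module.finrank ℝ E - 1)) * F (ρ • (ω : E))

theorem lintegral_eq_lintegral_lintegral_cons {l : ℕ} {F : (Fin (l + 1) → ℝ) → ℝ≥0∞}
    (hF : Measurable F) : ∫⁻ X, F X = ∫⁻ x : Fin l → ℝ, ∫⁻ s : ℝ, F (Fin.cons s x) := by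
  have hcons := (volume_preserving_piFinSuccAbove (fun _ : Fin (l + 1) => ℝ) 0).symm
  rw [← hcons.lintegral_comp hF, Measure.volume_eq_prod, lintegral_prod_symm]
  · exact lintegral_congr fun x => lintegral_congr fun s =>
      congrArg F (Fin.insertNth_zero' s x)
  · exact (hF.comp (MeasurableEquiv.measurable _)).aemeasurable

variable {l : ℕ} {E : Type*} [NormedAddCommGroup E]

/-- The coordinates `(‖y‖ - 1, x)` of a point `(x, y)` in the directions normal to the unit sphere
`{0} × S(E)`. -/
def normalCoord (q : (Fin l → ℝ) × E) : Fin (l + 1) → ℝ := Fin.cons (‖q.2‖ - 1) q.1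

theorem lipschitzWith_normalCoord : LipschitzWith 1 (normalCoord : (Fin l → ℝ) × E → _) := by
  refine LipschitzWith.mk_one fun x y => (dist_pi_le_iff dist_nonneg).2 (Fin.cases ?_ fun j => ?_)
  · simp only [normalCoord, Fin.cons_zero, Real.dist_eq, sub_sub_sub_cancel_right]
    exact (abs_norm_sub_norm_le _ _).trans ((dist_eq_norm x.2 y.2).ge.trans (le_max_right _ _))
  · simp only [normalCoord, Fin.cons_succ]
    exact (dist_le_pi_dist x.1 y.1 j).trans (le_max_left _ _)

theorem abs_norm_snd_sub_one_le_norm_normalCoord (q : (Fin l → ℝ) × E) :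
    |‖q.2‖ - 1| ≤ ‖normalCoord q‖ := by
  simpa [normalCoord] using norm_le_pi_norm (normalCoord q) 0

theorem norm_fst_le_norm_normalCoord (q : (Fin l → ℝ) × E) : ‖q.1‖ ≤ ‖normalCoord q‖ :=
  (pi_norm_le_iff_of_nonneg (norm_nonneg _)).2 fun i => by
    simpa [normalCoord] using norm_le_pi_norm (normalCoord q) i.succ

theorem norm_sub_one_le_norm_normalCoord (q : (Fin l → ℝ) × E) : ‖q‖ - 1 ≤ ‖normalCoord q‖ := by
  rcases max_choice ‖q.1‖ ‖q.2‖ with h | h <;> rw [Prod.norm_def, h]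
  · linarith [norm_fst_le_norm_normalCoord q]
  · exact (le_abs_self _).trans (abs_norm_snd_sub_one_le_norm_normalCoord q)

variable [NormedSpace ℝ E]

/-- The affine slice normal to `{0} × S(E)` at `(0, ω)`, parametrized by `normalCoord`. -/
def normalSlice (ω : E) (X : Fin (l + 1) → ℝ) : (Fin l → ℝ) × E := (Fin.tail X, (1 + X 0) • ω)

theorem normalCoord_normalSlice {ω : E} (hω : ‖ω‖ = 1) {X : Fin (l + 1) → ℝ} (hX : -1 ≤ X 0) :
    normalCoord (normalSlice ω X) = X := by
  simp only [normalCoord, normalSlice, norm_smul, hω, mul_one]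
  rw [Real.norm_of_nonneg (by linarith), add_sub_cancel_left, Fin.cons_self_tail]

theorem contDiff_normalSlice (ω : E) : ContDiff ℝ 1 (normalSlice ω : (Fin (l + 1) → ℝ) → _) := by
  unfold normalSlice Fin.tail
  fun_prop

theorem lipschitzWith_normalSlice {ω : E} (hω : ‖ω‖ = 1) :
    LipschitzWith 1 (normalSlice ω : (Fin (l + 1) → ℝ) → _) := by
  refine LipschitzWith.mk_one fun X Y => max_le ?_ ?_
  · exact (dist_pi_le_iff dist_nonneg).2 fun i => dist_le_pi_dist X Y i.succ
  · simp only [normalSlice]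
    rw [dist_eq_norm, ← sub_smul, norm_smul, hω, mul_one, add_sub_add_left_eq_sub, ← dist_eq_norm]
    exact dist_le_pi_dist X Y 0

theorem norm_normalSlice_le {ω : E} (hω : ‖ω‖ = 1) (X : Fin (l + 1) → ℝ) :
    ‖normalSlice ω X‖ ≤ ‖X‖ + 1 := by
  refine norm_prod_le_iff.2 ⟨?_, ?_⟩
  · exact (pi_norm_le_iff_of_nonneg (by positivity)).2 fun i =>
      (norm_le_pi_norm X i.succ).trans (by linarith)
  · simp only [normalSlice, norm_smul, hω, mul_one]
    linarith [norm_add_le (1 : ℝ) (X 0), norm_one (α := ℝ), norm_le_pi_norm X 0]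

variable [FiniteDimensional ℝ E] [Nontrivial E] [MeasureSpace E] [BorelSpace E]
  [(volume : Measure E).IsAddHaarMeasure] {F : (Fin l → ℝ) × E → ℝ≥0∞}

theorem lintegral_eq_lintegral_normalSlice (hF : Measurable F) :
    ∫⁻ q, F q = ∫⁻ ω, (∫⁻ X in {X : Fin (l + 1) → ℝ | -1 < X 0},
      ENNReal.ofReal ((1 + X 0) ^ (Module.finrank ℝ E - 1)) * F (normalSlice (ω : E) X))
        ∂(volume : Measure E).toSphere := by
  set d := Module.finrank ℝ E - 1
  have hslice (ω : E) : Measurable fun X : Fin (l + 1) → ℝ =>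
      ENNReal.ofReal ((1 + X 0) ^ d) * F (normalSlice ω X) :=
    Measurable.mul (by fun_prop) (hF.comp (contDiff_normalSlice ω).continuous.measurable)
  have hhalf : MeasurableSet {X : Fin (l + 1) → ℝ | -1 < X 0} :=
    measurableSet_lt measurable_const (by fun_prop)
  have hpolar : Measurable fun q : (Fin l → ℝ) × sphere (0 : E) 1 =>
      ∫⁻ ρ in Ioi (0 : ℝ), ENNReal.ofReal (ρ ^ d) * F (q.1, ρ • (q.2 : E)) := by
    refine Measurable.lintegral_prod_right' (f := fun w : ((Fin l → ℝ) × sphere (0 : E) 1) × ℝ =>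
      ENNReal.ofReal (w.2 ^ d) * F (w.1.1, w.2 • (w.1.2 : E))) ?_
    exact Measurable.mul (by fun_prop) (hF.comp (by fun_prop))
  calc ∫⁻ q, F q = ∫⁻ x : Fin l → ℝ, ∫⁻ y : E, F (x, y) := by
        rw [Measure.volume_eq_prod, lintegral_prod _ hF.aemeasurable]
    _ = ∫⁻ x : Fin l → ℝ, ∫⁻ ω,
          (∫⁻ ρ in Ioi (0 : ℝ), ENNReal.ofReal (ρ ^ d) * F (x, ρ • (ω : E)))
          ∂(volume : Measure E).toSphere :=
        lintegral_congr fun x => lintegral_eq_lintegral_toSphere volume (hF.comp (by fun_prop))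
    _ = ∫⁻ ω, (∫⁻ x : Fin l → ℝ,
          ∫⁻ ρ in Ioi (0 : ℝ), ENNReal.ofReal (ρ ^ d) * F (x, ρ • (ω : E)))
          ∂(volume : Measure E).toSphere := lintegral_lintegral_swap hpolar.aemeasurable
    _ = _ := by
        refine lintegral_congr fun ω => ?_
        rw [← lintegral_indicator hhalf,
          lintegral_eq_lintegral_lintegral_cons ((hslice ω).indicator hhalf)]
        refine lintegral_congr fun x => ?_
        rw [← lintegral_indicator measurableSet_Ioi, ← lintegral_add_left_eq_self _ (1 : ℝ)]
        refine lintegral_congr fun s => ?_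
        simp [indicator, normalSlice, ← neg_lt_iff_pos_add']

theorem lintegral_comp_normalCoord_le {G : (Fin (l + 1) → ℝ) → ℝ≥0∞} (hG : Measurable G)
    (hG₀ : ∀ X, 1 < ‖X‖ → G X = 0) {δ : ℝ} (hδ : 0 < δ) (hδ₁ : δ ≤ 1) :
    ∫⁻ q : (Fin l → ℝ) × E, G (δ⁻¹ • normalCoord q) ≤
      (volume : Measure E).toSphere univ * 2 ^ (Module.finrank ℝ E - 1) *
        (ENNReal.ofReal (δ ^ (l + 1)) * ∫⁻ X, G X) := by
  set d := Module.finrank ℝ E - 1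
  have hpointwise (ω : sphere (0 : E) 1) (X : Fin (l + 1) → ℝ) (hX : -1 < X 0) :
      ENNReal.ofReal ((1 + X 0) ^ d) * G (δ⁻¹ • normalCoord (normalSlice (ω : E) X)) ≤
        2 ^ d * G (0 + δ⁻¹ • X) := by
    rw [normalCoord_normalSlice (mem_sphere_zero_iff_norm.1 ω.2) hX.le, zero_add]
    rcases le_or_gt (X 0) 1 with h | h
    · rw [ENNReal.ofReal_pow (by linarith)]
      gcongr
      exact ENNReal.ofReal_le_ofNat.2 (by linarith)
    · rw [hG₀, mul_zero]
      · exact zero_le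
      · rw [norm_smul, norm_inv, Real.norm_of_nonneg hδ.le, lt_inv_mul_iff₀ hδ, mul_one]
        exact (hδ₁.trans_lt h).trans_le ((le_abs_self _).trans (norm_le_pi_norm X 0))
  rw [lintegral_eq_lintegral_normalSlice (F := fun q => G (δ⁻¹ • normalCoord q))
    (hG.comp (lipschitzWith_normalCoord.continuous.measurable.const_smul δ⁻¹))]
  calc _ ≤ ∫⁻ _ω, (2 ^ d * ∫⁻ X, G (0 + δ⁻¹ • X)) ∂(volume : Measure E).toSphere := by
        refine lintegral_mono fun ω => ?_
        rw [← lintegral_const_mul' _ _ (by finiteness)]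
        exact (setLIntegral_mono' (measurableSet_lt measurable_const (by fun_prop))
          (hpointwise ω)).trans (setLIntegral_le_lintegral _ _)
    _ = _ := by
        rw [lintegral_const, lintegral_comp_add_smul _ _ (inv_pos.2 hδ), Module.finrank_fin_fun,
          Real.inv_rpow hδ.le, Real.rpow_neg hδ.le, inv_inv, Real.rpow_natCast]
        ring

theorem lintegral_comp_normalSlice_le (hF : Measurable F) :
    ∫⁻ ω, (∫⁻ X in ball (0 : Fin (l + 1) → ℝ) (1 / 2), F (normalSlice (ω : E) X))
        ∂(volume : Measure E).toSphere ≤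
      2 ^ (Module.finrank ℝ E - 1) * ∫⁻ q in ball 0 2, F q := by
  rw [← lintegral_indicator measurableSet_ball,
    lintegral_eq_lintegral_normalSlice (hF.indicator measurableSet_ball),
    ← lintegral_const_mul' _ _ (by finiteness)]
  refine lintegral_mono fun ω => ?_
  rw [← lintegral_const_mul' _ _ (by finiteness)]
  have habs (X : Fin (l + 1) → ℝ) (hX : X ∈ ball 0 (1 / 2)) : -(1 / 2) < X 0 :=
    (abs_lt.1 ((norm_le_pi_norm X 0).trans_lt (mem_ball_zero_iff.1 hX))).1
  refine (setLIntegral_mono' measurableSet_ball fun X hX => ?_).trans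
    (lintegral_mono_set fun X hX => (by norm_num : (-1 : ℝ) < -(1 / 2)).trans (habs X hX))
  have hmem : normalSlice (ω : E) X ∈ ball 0 2 := mem_ball_zero_iff.2 <|
    (norm_normalSlice_le (mem_sphere_zero_iff_norm.1 ω.2) X).trans_lt
      (by linarith [mem_ball_zero_iff.1 hX])
  rw [indicator_of_mem hmem, ← mul_assoc, ENNReal.ofReal_pow (by linarith [habs X hX]), ← mul_pow,
    ← ENNReal.ofReal_ofNat, ← ENNReal.ofReal_mul zero_le_two]
  exact le_mul_of_one_le_left' (one_le_pow₀ (ENNReal.one_le_ofReal.2 (by linarith [habs X hX])))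

end PolarCoordinates

section ChangeOfVariables

theorem mapsTo_prodMap_mul_Ioo {α β : Type*} {A : Set α} {B : Set β} {θ : α → β} {h h' r : ℝ}
    (hmaps : MapsTo θ A B) (hr : 0 < r) (hrh : r * h' ≤ h) :
    MapsTo (fun q : α × ℝ => (θ q.1, r * q.2)) (A ×ˢ Ioo 0 h') (B ×ˢ Ioo 0 h) := fun _ hq =>
  ⟨hmaps hq.1, mul_pos hr hq.2.1, (mul_lt_mul_of_pos_left hq.2.2 hr).trans_le hrh⟩

variable {E E' F : Type*} [NormedAddCommGroup E] [NormedSpace ℝ E] [NormedAddCommGroup E']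
  [NormedSpace ℝ E'] [NormedAddCommGroup F] [NormedSpace ℝ F] {N : Set F} {Ω : Set E} {Ω' : Set E'}
  {h h' r p : ℝ} {v v' : E → F} {U : E × ℝ → F} {θ : E' → E}

theorem IsExtension.comp (hU : IsExtension N Ω h v U) (hθ : ContDiff ℝ 1 θ)
    (hmaps : MapsTo θ Ω' Ω) (hr : 0 < r) (hrh : r * h' ≤ h) :
    IsExtension N Ω' h' (fun x => v (θ x)) (fun q => U (θ q.1, r * q.2)) := by
  have hA : ContDiff ℝ 1 fun q : E' × ℝ => (θ q.1, r * q.2) := by fun_prop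
  have hmapsIco : MapsTo (fun q : E' × ℝ => (θ q.1, r * q.2)) (Ω' ×ˢ Ico 0 h') (Ω ×ˢ Ico 0 h) :=
    fun q hq => ⟨hmaps hq.1, mul_nonneg hr.le hq.2.1,
      (mul_lt_mul_of_pos_left hq.2.2 hr).trans_le hrh⟩
  exact {
    continuousOn := hU.continuousOn.comp hA.continuous.continuousOn hmapsIco
    contDiffOn := hU.contDiffOn.comp hA.contDiffOn (mapsTo_prodMap_mul_Ioo hmaps hr hrh)
    mapsTo := hU.mapsTo.comp hmapsIco
    trace := fun x hx => by simp [hU.trace _ (hmaps hx)] }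

theorem IsExtension.congr_trace (hU : IsExtension N Ω h v U) (hvv' : EqOn v v' Ω) :
    IsExtension N Ω h v' U :=
  { hU with trace := fun x hx => (hU.trace x hx).trans (hvv' hx) }

/-- The Dirichlet energy of `U` on the vertical segment over `x`. -/
def fiberEnergy (p h : ℝ) (U : E × ℝ → F) (x : E) : ℝ≥0∞ :=
  ∫⁻ t in Ioo 0 h, ‖fderiv ℝ U (x, t)‖ₑ ^ p

theorem measurable_fiberEnergy [MeasurableSpace E] [BorelSpace E] [CompleteSpace F]
    (p h : ℝ) (U : E × ℝ → F) : Measurable (fiberEnergy p h U) :=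
  ((measurable_fderiv ℝ U).enorm.pow_const p).lintegral_prod_right'

theorem dirichletEnergy_prod_Ioo [MeasureSpace E] [BorelSpace E] [SFinite (volume : Measure E)]
    [CompleteSpace F] (p h : ℝ) (Ω : Set E) (U : E × ℝ → F) :
    dirichletEnergy p (Ω ×ˢ Ioo 0 h) U = ∫⁻ x in Ω, fiberEnergy p h U x := by
  rw [dirichletEnergy, Measure.volume_eq_prod, ← Measure.prod_restrict,
    lintegral_prod _ ((measurable_fderiv ℝ U).enorm.pow_const p).aemeasurable]
  rfl

theorem IsExtension.enorm_fderiv_prodMap_le {κ : NNReal} (hU : IsExtension N Ω h v U)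
    (hΩ : IsOpen Ω) (hθ : ContDiff ℝ 1 θ) (hκ : LipschitzWith κ θ) (hmaps : MapsTo θ Ω' Ω)
    (hr : 0 < r) (hrκ : r ≤ κ) (hrh : r * h' ≤ h) {q : E' × ℝ} (hq : q ∈ Ω' ×ˢ Ioo 0 h') :
    ‖fderiv ℝ (fun q : E' × ℝ => U (θ q.1, r * q.2)) q‖ₑ ≤
      κ * ‖fderiv ℝ U (θ q.1, r * q.2)‖ₑ := by
  have hA : ContDiff ℝ 1 fun q : E' × ℝ => (θ q.1, r * q.2) := by fun_prop
  have hmul : LipschitzWith κ fun q : E' × ℝ => r * q.2 := by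
    refine LipschitzWith.of_dist_le_mul fun q q' => ?_
    rw [Real.dist_eq, ← mul_sub, abs_mul, abs_of_pos hr]
    exact mul_le_mul hrκ (le_max_right _ _) (abs_nonneg _) κ.2
  have hlip : LipschitzWith κ fun q : E' × ℝ => (θ q.1, r * q.2) := by
    simpa using (hκ.comp LipschitzWith.prod_fst).prodMk hmul
  have hdiff : DifferentiableAt ℝ U (θ q.1, r * q.2) :=
    ((hU.contDiffOn.contDiffAt ((hΩ.prod isOpen_Ioo).mem_nhds
      (mapsTo_prodMap_mul_Ioo hmaps hr hrh hq))).differentiableAt one_ne_zero)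
  refine (enorm_fderiv_comp_le (f := fun q : E' × ℝ => (θ q.1, r * q.2)) hdiff
    (hA.differentiable one_ne_zero q)).trans ?_
  rw [mul_comm]
  gcongr
  exact enorm_le_coe.2 (norm_fderiv_le_of_lipschitz ℝ hlip)

variable [MeasureSpace E'] [BorelSpace E'] [SFinite (volume : Measure E')] [CompleteSpace F]

theorem IsExtension.dirichletEnergy_comp_le {κ : NNReal} (hU : IsExtension N Ω h v U)
    (hΩ : IsOpen Ω) (hΩ' : MeasurableSet Ω') (hθ : ContDiff ℝ 1 θ) (hκ : LipschitzWith κ θ)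
    (hmaps : MapsTo θ Ω' Ω) (hr : 0 < r) (hrκ : r ≤ κ) (hrh : r * h' ≤ h) (hp : 0 ≤ p) :
    dirichletEnergy p (Ω' ×ˢ Ioo 0 h') (fun q => U (θ q.1, r * q.2)) ≤
      κ ^ p * ENNReal.ofReal r⁻¹ * ∫⁻ x in Ω', fiberEnergy p h U (θ x) := by
  rw [dirichletEnergy_prod_Ioo, ← lintegral_const_mul' _ _ (by finiteness)]
  refine setLIntegral_mono' hΩ' fun x hx => ?_
  set g : ℝ → ℝ≥0∞ := (Ioo 0 h).indicator fun t => ‖fderiv ℝ U (θ x, t)‖ₑ ^ p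
  have hbound (t : ℝ) (ht : t ∈ Ioo 0 h') :
      ‖fderiv ℝ (fun q : E' × ℝ => U (θ q.1, r * q.2)) (x, t)‖ₑ ^ p ≤ κ ^ p * g (0 + r • t) := by
    have hmem := mapsTo_prodMap_mul_Ioo hmaps hr hrh (mk_mem_prod hx ht)
    rw [zero_add, smul_eq_mul, show g (r * t) = _ from indicator_of_mem hmem.2 _,
      ← ENNReal.mul_rpow_of_nonneg _ _ hp]
    gcongr
    exact hU.enorm_fderiv_prodMap_le hΩ hθ hκ hmaps hr hrκ hrh (mk_mem_prod hx ht)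
  calc fiberEnergy p h' (fun q : E' × ℝ => U (θ q.1, r * q.2)) x
      ≤ ∫⁻ t, κ ^ p * g (0 + r • t) :=
        (setLIntegral_mono' measurableSet_Ioo hbound).trans (setLIntegral_le_lintegral _ _)
    _ = κ ^ p * ENNReal.ofReal r⁻¹ * fiberEnergy p h U (θ x) := by
        rw [lintegral_const_mul' _ _ (by finiteness), lintegral_comp_add_smul _ _ hr,
          lintegral_indicator measurableSet_Ioo, Module.finrank_self, Nat.cast_one,
          Real.rpow_neg_one, mul_assoc]
        rfl

end ChangeOfVariables

section ModelMap

variable {F : Type*} [NormedAddCommGroup F] {N : Set F} {b : N} {l : ℕ} {p δ : ℝ}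
  {E : Type*} [NormedAddCommGroup E] {f : CubeLoop b (l + 1)}

/-- The map that puts the loop `f`, rescaled to size `δ`, in every slice normal to `{0} × S(E)`. -/
def modelMap (δ : ℝ) (f : CubeLoop b (l + 1)) (q : (Fin l → ℝ) × E) : F := f (δ⁻¹ • normalCoord q)

theorem one_le_norm_inv_smul (hδ : 0 < δ) {X : Fin l → ℝ} (hX : δ ≤ ‖X‖) : 1 ≤ ‖δ⁻¹ • X‖ := by
  rwa [norm_smul, norm_inv, Real.norm_of_nonneg hδ.le, le_inv_mul_iff₀ hδ, mul_one]

theorem modelMap_eq_base (hδ : 0 < δ) (hδ₁ : δ ≤ 1) {q : (Fin l → ℝ) × E} (hq : 2 ≤ ‖q‖) :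
    modelMap δ f q = b :=
  f.eq_base _ (one_le_norm_inv_smul hδ (by linarith [norm_sub_one_le_norm_normalCoord q]))

theorem modelMap_eventuallyEq_base (hδ : 0 < δ) (hδ₁ : δ < 1) {q : (Fin l → ℝ) × E}
    (hq : q.2 = 0) : modelMap δ f =ᶠ[𝓝 q] fun _ => (b : F) := by
  have hlt : δ < ‖normalCoord q‖ :=
    hδ₁.trans_le (by simpa [hq] using abs_norm_snd_sub_one_le_norm_normalCoord q)
  filter_upwards [lipschitzWith_normalCoord.continuous.norm.continuousAt.eventually_const_lt hlt]
    with z hz using f.eq_base _ (one_le_norm_inv_smul hδ hz.le)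

variable [InnerProductSpace ℝ E]

theorem contDiffAt_normalCoord {n : WithTop ℕ∞} {q : (Fin l → ℝ) × E} (hq : q.2 ≠ 0) :
    ContDiffAt ℝ n (normalCoord : (Fin l → ℝ) × E → _) q := by
  refine contDiffAt_pi.2 (Fin.cases ?_ fun i => ?_)
  · exact ((contDiffAt_norm ℝ hq).comp q contDiffAt_snd).sub contDiffAt_const
  · simp only [normalCoord, Fin.cons_succ]
    fun_prop

section Increments

variable [FiniteDimensional ℝ E] [Nontrivial E] [MeasureSpace E] [BorelSpace E]
  [(volume : Measure E).IsAddHaarMeasure]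

theorem volume_setOf_norm_normalCoord_le (hδ : 0 < δ) (hδ₁ : δ ≤ 1) :
    volume {q : (Fin l → ℝ) × E | ‖normalCoord q‖ ≤ δ} ≤
      (volume : Measure E).toSphere univ * 2 ^ (Module.finrank ℝ E - 1) *
        (ENNReal.ofReal (δ ^ (l + 1)) * volume (closedBall (0 : Fin (l + 1) → ℝ) 1)) := by
  have hS : MeasurableSet {q : (Fin l → ℝ) × E | ‖normalCoord q‖ ≤ δ} :=
    (isClosed_le lipschitzWith_normalCoord.continuous.norm continuous_const).measurableSet
  rw [← lintegral_indicator_one hS, ← lintegral_indicator_one measurableSet_closedBall]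
  refine le_trans (lintegral_mono fun q => ?_) (lintegral_comp_normalCoord_le
    (measurable_one.indicator measurableSet_closedBall) (fun X hX => ?_) hδ hδ₁)
  · refine indicator_le (f := 1) (g := fun z : (Fin l → ℝ) × E =>
      (closedBall (0 : Fin (l + 1) → ℝ) 1).indicator 1 (δ⁻¹ • normalCoord z)) (fun z hz => ?_) q
    have hz' : δ⁻¹ • normalCoord z ∈ closedBall (0 : Fin (l + 1) → ℝ) 1 := by
      rw [mem_closedBall_zero_iff, norm_smul, norm_inv, Real.norm_of_nonneg hδ.le]
      exact inv_mul_le_one_of_le₀ hz hδ.le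
    exact (indicator_of_mem hz' 1).ge
  · exact indicator_of_notMem (by simpa using hX) _

theorem lintegral_enorm_modelMap_add_sub_le (hp : 0 < p) {D : ℝ} (hD : ∀ y ∈ N, ‖y‖ ≤ D)
    (hδ : 0 < δ) (hδ₁ : δ ≤ 1) (h : (Fin l → ℝ) × E) :
    ∫⁻ q, ‖modelMap δ f (q + h) - modelMap δ f q‖ₑ ^ p ≤
      (2 * ENNReal.ofReal (2 * D)) ^ p * (2 * ((volume : Measure E).toSphere univ *
        2 ^ (Module.finrank ℝ E - 1) *
          (ENNReal.ofReal (δ ^ (l + 1)) * volume (closedBall (0 : Fin (l + 1) → ℝ) 1)))) := by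
  have : (volume : Measure ((Fin l → ℝ) × E)).IsAddHaarMeasure :=
    Measure.prod.instIsAddHaarMeasure _ _
  have hS : MeasurableSet {q : (Fin l → ℝ) × E | ‖normalCoord q‖ ≤ δ} :=
    (isClosed_le lipschitzWith_normalCoord.continuous.norm continuous_const).measurableSet
  have hzero : EqOn (fun q : (Fin l → ℝ) × E => modelMap δ f q - b) 0
      {q | ‖normalCoord q‖ ≤ δ}ᶜ := fun q (hq : ¬‖normalCoord q‖ ≤ δ) =>
    sub_eq_zero.2 (f.eq_base _ (one_le_norm_inv_smul hδ (not_le.1 hq).le))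
  have hbound (q : (Fin l → ℝ) × E) : ‖modelMap δ f q - b‖ₑ ≤ ENNReal.ofReal (2 * D) := by
    rw [← ofReal_norm]
    exact ENNReal.ofReal_le_ofReal
      ((norm_sub_le _ _).trans (by linarith [hD (modelMap δ f q) (f.mem _), hD _ b.2]))
  have hle := lintegral_enorm_add_sub_rpow_le_measure hp hS hzero hbound h
  simp only [sub_sub_sub_cancel_right] at hle
  grw [hle, volume_setOf_norm_normalCoord_le hδ hδ₁]

end Increments

variable [NormedSpace ℝ F]

theorem contDiff_modelMap {n : WithTop ℕ∞} (hf : ContDiff ℝ n f) (hδ : 0 < δ) (hδ₁ : δ < 1) :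
    ContDiff ℝ n (modelMap δ f : (Fin l → ℝ) × E → F) := by
  refine contDiff_iff_contDiffAt.2 fun q => ?_
  by_cases hq : q.2 = 0
  · exact contDiffAt_const.congr_of_eventuallyEq (modelMap_eventuallyEq_base hδ hδ₁ hq)
  · exact hf.contDiffAt.comp q ((contDiffAt_normalCoord hq).const_smul δ⁻¹)

theorem enorm_fderiv_modelMap_le (hf : ContDiff ℝ 1 f) (hδ : 0 < δ) (hδ₁ : δ < 1)
    (q : (Fin l → ℝ) × E) :
    ‖fderiv ℝ (modelMap δ f) q‖ₑ ≤
      ENNReal.ofReal δ⁻¹ * ‖fderiv ℝ f (δ⁻¹ • normalCoord q)‖ₑ := by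
  by_cases hq : q.2 = 0
  · have hzero : fderiv ℝ (modelMap δ f) q = 0 :=
      (modelMap_eventuallyEq_base hδ hδ₁ hq).fderiv_eq.trans (fderiv_const_apply _)
    rw [hzero, ← ofReal_norm, ContinuousLinearMap.opNorm_zero]
    simp
  have hlip : LipschitzWith ‖δ⁻¹‖₊ fun q : (Fin l → ℝ) × E => δ⁻¹ • normalCoord q := by
    rw [← mul_one ‖δ⁻¹‖₊]
    exact (lipschitzWith_smul δ⁻¹).comp lipschitzWith_normalCoord
  refine (enorm_fderiv_comp_le (f := fun q : (Fin l → ℝ) × E => δ⁻¹ • normalCoord q)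
    (hf.differentiable one_ne_zero _)
    (((contDiffAt_normalCoord hq).const_smul δ⁻¹).differentiableAt one_ne_zero)).trans ?_
  rw [mul_comm, ← Real.enorm_of_nonneg (inv_pos.2 hδ).le]
  gcongr
  exact enorm_le_coe.2 (norm_fderiv_le_of_lipschitz ℝ hlip)

variable [FiniteDimensional ℝ E] [Nontrivial E] [MeasureSpace E] [BorelSpace E]
  [(volume : Measure E).IsAddHaarMeasure]

theorem dirichletEnergy_modelMap_le (hp : 0 < p) (hf : ContDiff ℝ 1 f) (hδ : 0 < δ) (hδ₁ : δ < 1) :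
    dirichletEnergy p univ (modelMap δ f : (Fin l → ℝ) × E → F) ≤
      (volume : Measure E).toSphere univ * 2 ^ (Module.finrank ℝ E - 1) *
        (ENNReal.ofReal (δ ^ ((l : ℝ) + 1 - p)) * dirichletEnergy p univ f) := by
  set G : (Fin (l + 1) → ℝ) → ℝ≥0∞ := fun X => ‖fderiv ℝ f X‖ₑ ^ p
  have hG : Measurable G :=
    (Continuous.enorm (hf.continuous_fderiv one_ne_zero)).measurable.pow_const p
  have hG₀ (X : Fin (l + 1) → ℝ) (hX : 1 < ‖X‖) : G X = 0 := by
    have hzero : fderiv ℝ f X = 0 := f.fderiv_eq_zero (by simpa using hX)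
    simp only [G, hzero, ← ofReal_norm, norm_zero, ENNReal.ofReal_zero,
      ENNReal.zero_rpow_of_pos hp]
  have hδp : ENNReal.ofReal δ⁻¹ ^ p * ENNReal.ofReal (δ ^ (l + 1)) =
      ENNReal.ofReal (δ ^ ((l : ℝ) + 1 - p)) := by
    rw [ENNReal.ofReal_rpow_of_pos (inv_pos.2 hδ), ← ENNReal.ofReal_mul (by positivity),
      Real.inv_rpow hδ.le, ← Real.rpow_neg hδ.le, ← Real.rpow_natCast, ← Real.rpow_add hδ]
    push_cast
    rw [neg_add_eq_sub]
  calc dirichletEnergy p univ (modelMap δ f : (Fin l → ℝ) × E → F)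
      ≤ ∫⁻ q : (Fin l → ℝ) × E, ENNReal.ofReal δ⁻¹ ^ p * G (δ⁻¹ • normalCoord q) := by
        rw [dirichletEnergy, setLIntegral_univ]
        refine lintegral_mono fun q => ?_
        rw [← ENNReal.mul_rpow_of_nonneg _ _ hp.le]
        gcongr
        exact enorm_fderiv_modelMap_le hf hδ hδ₁ q
    _ ≤ ENNReal.ofReal δ⁻¹ ^ p * ((volume : Measure E).toSphere univ *
          2 ^ (Module.finrank ℝ E - 1) * (ENNReal.ofReal (δ ^ (l + 1)) * ∫⁻ X, G X)) := by
        rw [lintegral_const_mul' _ _ (by finiteness)]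
        gcongr
        exact lintegral_comp_normalCoord_le hG hG₀ hδ hδ₁.le
    _ = _ := by
        rw [← hδp, dirichletEnergy, setLIntegral_univ]
        simp only [G]
        ring

theorem rpow_mul_rpow_eq {a p : ℝ} {c δ T : ℝ} (hc : 0 < c) (hδ : 0 < δ) (hT : 0 ≤ T) (hp : 0 < p) :
    (c * δ ^ a) ^ (1 / p) * (c * δ ^ (a - p) * T) ^ (1 - 1 / p) =
      c * δ ^ (a + 1 - p) * T ^ (1 - 1 / p) := by
  have hexp : a * (1 / p) + (a - p) * (1 - 1 / p) = a + 1 - p := by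
    field_simp
    ring
  have hc' : c ^ (1 / p) * c ^ (1 - 1 / p) = c := by
    rw [← Real.rpow_add hc, add_sub_cancel, Real.rpow_one]
  rw [Real.mul_rpow hc.le (by positivity), Real.mul_rpow (by positivity) hT,
    Real.mul_rpow hc.le (by positivity), ← Real.rpow_mul hδ.le, ← Real.rpow_mul hδ.le, ← hexp,
    Real.rpow_add hδ]
  nth_rewrite 3 [← hc']
  ring

theorem exists_gagliardoEnergy_modelMap_le (hN : Bornology.IsBounded N) (b : N) (hp : 1 < p)
    (l : ℕ) : ∃ C ≠ ⊤, ∀ (f : CubeLoop b (l + 1)) (δ : ℝ), ContDiff ℝ 1 f → 0 < δ → δ < 1 →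
      gagliardoEnergy p (modelMap δ f : (Fin l → ℝ) × E → F) ≤
        C * ENNReal.ofReal (δ ^ ((l : ℝ) + 2 - p)) *
          (dirichletEnergy p univ f + 1) ^ (1 - 1 / p) := by
  have : (volume : Measure ((Fin l → ℝ) × E)).IsAddHaarMeasure :=
    Measure.prod.instIsAddHaarMeasure _ _
  obtain ⟨D, hD⟩ := hN.exists_norm_le
  set S : ℝ≥0∞ := (volume : Measure E).toSphere univ * 2 ^ (Module.finrank ℝ E - 1)
  set V : ℝ≥0∞ := volume (closedBall (0 : Fin (l + 1) → ℝ) 1)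
  have hV : V ≠ ⊤ := measure_closedBall_lt_top.ne
  have hS : S ≠ ⊤ := by finiteness
  set c₀ : ℝ≥0∞ := (2 * ENNReal.ofReal (2 * D)) ^ p * (2 * (S * V)) + S
  set c : ℝ := c₀.toReal + 1
  have hc₀c : c₀ ≤ ENNReal.ofReal c := by
    rw [← ENNReal.ofReal_toReal (a := c₀) (by finiteness)]
    exact ENNReal.ofReal_le_ofReal (le_add_of_nonneg_right zero_le_one)
  refine ⟨(∫⁻ h, interpolationKernel ((Fin l → ℝ) × E) p h) * ENNReal.ofReal c,
    ENNReal.mul_ne_top (lintegral_interpolationKernel_lt_top hp).ne ENNReal.ofReal_ne_top,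
    fun f δ hf hδ hδ₁ => ?_⟩
  have hA (h : (Fin l → ℝ) × E) : ∫⁻ q, ‖modelMap δ f (q + h) - modelMap δ f q‖ₑ ^ p ≤
      ENNReal.ofReal (c * δ ^ ((l : ℝ) + 1)) := by
    refine (lintegral_enorm_modelMap_add_sub_le (by positivity) hD hδ hδ₁.le h).trans ?_
    rw [ENNReal.ofReal_mul (p := c) (by positivity), ← Nat.cast_add_one, Real.rpow_natCast]
    grw [← hc₀c]
    refine le_trans (le_of_eq ?_) (mul_le_mul_left le_self_add _)
    ring
  set T := dirichletEnergy p univ f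
  have hT : T + 1 ≠ ⊤ :=
    ENNReal.add_ne_top.2 ⟨(f.dirichletEnergy_lt_top (by positivity) hf).ne, ENNReal.one_ne_top⟩
  have hT₀ : 0 < (T + 1).toReal := ENNReal.toReal_pos (by simp) hT
  have hB : dirichletEnergy p univ (modelMap δ f : (Fin l → ℝ) × E → F) ≤
      ENNReal.ofReal (c * δ ^ ((l : ℝ) + 1 - p) * (T + 1).toReal) := by
    refine (dirichletEnergy_modelMap_le (by positivity) hf hδ hδ₁).trans ?_
    rw [ENNReal.ofReal_mul (by positivity), ENNReal.ofReal_mul (by positivity),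
      ENNReal.ofReal_toReal hT, mul_assoc (ENNReal.ofReal c)]
    gcongr
    · exact le_add_self.trans hc₀c
    · exact le_self_add
  refine (gagliardoEnergy_le hp.le (contDiff_modelMap hf hδ hδ₁) (by positivity) (by positivity)
    hA hB).trans_eq ?_
  rw [rpow_mul_rpow_eq (by positivity) hδ hT₀.le (by positivity),
    show (l : ℝ) + 1 + 1 - p = l + 2 - p by ring, ENNReal.ofReal_mul (by positivity),
    ENNReal.ofReal_mul (by positivity),
    ← ENNReal.ofReal_rpow_of_pos hT₀, ENNReal.ofReal_toReal hT]
  ring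

/-- Restricted to the slice normal to `{0} × S(E)` at `ω`, an extension of the model map extends
the rescaled loop; the lower bounds for these extensions are integrated over `ω`. -/
theorem IsExtension.classEnergy_mul_lintegral_rpow_le_modelMap [CompleteSpace F]
    (P : CollapsingRetraction b) (hp : 0 < p) (hδ : 0 < δ) {U : ((Fin l → ℝ) × E) × ℝ → F}
    (hU : IsExtension N (ball 0 2) 1 (modelMap δ f) U) :
    (volume : Measure E).toSphere univ * (classEnergy p f.homotopyClass *
        ∫⁻ r in Ioo (((l : ℝ) + 2) * δ) (1 / 2), ENNReal.ofReal (r ^ ((l : ℝ) + 1 - p))) ≤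
      (P.lipConst * (l + 2 : ℝ≥0∞)) ^ p * 2 ^ (Module.finrank ℝ E - 1) *
        dirichletEnergy p (ball 0 2 ×ˢ Ioo 0 1) U := by
  have hslice (ω : sphere (0 : E) 1) : classEnergy p f.homotopyClass *
        ∫⁻ r in Ioo (((l : ℝ) + 2) * δ) (1 / 2), ENNReal.ofReal (r ^ ((l : ℝ) + 1 - p)) ≤
      (P.lipConst * (l + 2 : ℝ≥0∞)) ^ p *
        ∫⁻ X in ball 0 (1 / 2), fiberEnergy p 1 U (normalSlice (ω : E) X) := by
    have hω : ‖(ω : E)‖ = 1 := norm_eq_of_mem_sphere ω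
    have hmaps : MapsTo (normalSlice (ω : E)) (ball (0 : Fin (l + 1) → ℝ) (1 / 2)) (ball 0 2) :=
      fun X hX => mem_ball_zero_iff.2 ((norm_normalSlice_le hω X).trans_lt
        (by linarith [mem_ball_zero_iff.1 hX]))
    have hV := hU.comp (contDiff_normalSlice (ω : E)) hmaps one_pos (h' := 1 / 2) (by norm_num)
    have htrace (X : Fin (l + 1) → ℝ) (hX : X ∈ ball 0 (1 / 2)) :
        modelMap δ f (normalSlice (ω : E) X) = f (δ⁻¹ • X) := by
      have := (abs_le.1 ((norm_le_pi_norm X 0).trans (mem_ball_zero_iff.1 hX).le)).1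
      rw [modelMap, normalCoord_normalSlice hω (by linarith)]
    have hle := (hV.congr_trace htrace).classEnergy_mul_lintegral_rpow_le P hp f hδ
    grw [hU.dirichletEnergy_comp_le isOpen_ball measurableSet_ball (contDiff_normalSlice (ω : E))
      (lipschitzWith_normalSlice hω) hmaps one_pos le_rfl (by norm_num) hp.le] at hle
    simpa [add_assoc, one_add_one_eq_two] using hle
  calc _ = ∫⁻ _ : sphere (0 : E) 1, (classEnergy p f.homotopyClass *
          ∫⁻ r in Ioo (((l : ℝ) + 2) * δ) (1 / 2), ENNReal.ofReal (r ^ ((l : ℝ) + 1 - p)))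
          ∂(volume : Measure E).toSphere := by rw [lintegral_const, mul_comm]
    _ ≤ (P.lipConst * (l + 2 : ℝ≥0∞)) ^ p * ∫⁻ ω : sphere (0 : E) 1,
          (∫⁻ X in ball 0 (1 / 2), fiberEnergy p 1 U (normalSlice (ω : E) X))
          ∂(volume : Measure E).toSphere := by
        rw [← lintegral_const_mul' _ _ (ENNReal.rpow_ne_top_of_nonneg hp.le (by finiteness))]
        exact lintegral_mono hslice
    _ ≤ _ := by
        rw [mul_assoc, dirichletEnergy_prod_Ioo]
        gcongr
        exact lintegral_comp_normalSlice_le (measurable_fiberEnergy p 1 U)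

end ModelMap

section Cells

variable {F : Type*} [NormedAddCommGroup F] [NormedSpace ℝ F] {N : Set F} {b : N} {p : ℝ}

/-- `v` is a smooth map into `N`, equal to `b` off `ball a ρ`, whose Gagliardo energy is at most `ε`
whereas all its extensions to `ball a ρ ×ˢ Ioo 0 1` have Dirichlet energy at least `M`. -/
structure IsCell {E : Type*} [NormedAddCommGroup E] [NormedSpace ℝ E] [MeasureSpace E]
    (b : N) (p : ℝ) (a : E) (ρ : ℝ) (ε M : ℝ≥0∞) (v : E → F) : Prop where
  contDiff : ContDiff ℝ (⊤ : ℕ∞) v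
  mem : ∀ x, v x ∈ N
  eq_base : ∀ x, x ∉ ball a ρ → v x = b
  gagliardoEnergy_le : gagliardoEnergy p v ≤ ε
  le_dirichletEnergy : ∀ U, IsExtension N (ball a ρ) 1 v U →
    M ≤ dirichletEnergy p (ball a ρ ×ˢ Ioo 0 1) U

theorem IsCell.mono {E : Type*} [NormedAddCommGroup E] [NormedSpace ℝ E] [MeasureSpace E] {a : E}
    {ρ : ℝ} {ε ε' M M' : ℝ≥0∞} {v : E → F} (hv : IsCell b p a ρ ε M v) (hε : ε ≤ ε') (hM : M' ≤ M) :
    IsCell b p a ρ ε' M' v :=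
  { hv with
    gagliardoEnergy_le := hv.gagliardoEnergy_le.trans hε
    le_dirichletEnergy := fun U hU => hM.trans (hv.le_dirichletEnergy U hU) }

theorem exists_forall_mul_rpow_add_one_le_mul {A B K : ℝ≥0∞} (hA : A ≠ ⊤) (hB : B ≠ 0) (hB' : B ≠ ⊤)
    (hK : K ≠ ⊤) {s : ℝ} (hs : 0 < s) (hs₁ : s < 1) :
    ∃ X : ℝ≥0∞, X ≠ ⊤ ∧ ∀ T, X ≤ T → K * (A * (T + 1) ^ s + 1) ≤ B * T := by
  have hs' : 0 < 1 - s := sub_pos.2 hs₁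
  set Y : ℝ≥0∞ := 2 * B⁻¹ * (K * (A + 1))
  have hY : Y ≠ ⊤ := by finiteness
  refine ⟨max 1 (Y ^ (1 - s)⁻¹),
    max_ne_top ENNReal.one_ne_top (ENNReal.rpow_ne_top_of_nonneg (inv_pos.2 hs').le hY),
    fun T hT => ?_⟩
  obtain ⟨hT₁, hTY⟩ := max_le_iff.1 hT
  have hYT : Y ≤ (T + 1) ^ (1 - s) := by
    rw [← ENNReal.rpow_inv_le_iff hs']
    exact hTY.trans le_self_add
  calc K * (A * (T + 1) ^ s + 1) ≤ K * (A * (T + 1) ^ s + (T + 1) ^ s) := by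
        gcongr
        exact ENNReal.one_le_rpow le_add_self hs
    _ = B * 2⁻¹ * (Y * (T + 1) ^ s) := by
        rw [show B * 2⁻¹ * (Y * (T + 1) ^ s) = B * B⁻¹ * (2⁻¹ * 2) * (K * (A + 1) * (T + 1) ^ s) by
          ring, ENNReal.mul_inv_cancel hB hB', ENNReal.inv_mul_cancel two_ne_zero (by simp)]
        ring
    _ ≤ B * 2⁻¹ * ((T + 1) ^ (1 - s) * (T + 1) ^ s) := by gcongr
    _ = B * (2⁻¹ * (T + 1)) := by
        rw [← ENNReal.rpow_add_of_nonneg _ _ hs'.le hs.le, sub_add_cancel, ENNReal.rpow_one,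
          mul_assoc]
    _ ≤ B * (2⁻¹ * (2 * T)) := by
        rw [two_mul]
        gcongr
    _ = B * T := by
        rw [← mul_assoc 2⁻¹, ENNReal.inv_mul_cancel two_ne_zero (by simp), one_mul]

theorem ofReal_sub_le_lintegral_Ioo_rpow {a c s : ℝ} (ha : 0 ≤ a) (hc : c ≤ 1) (hs : s ≤ 0) :
    ENNReal.ofReal (c - a) ≤ ∫⁻ r in Ioo a c, ENNReal.ofReal (r ^ s) := by
  rw [← Real.volume_Ioo, ← setLIntegral_one]
  exact setLIntegral_mono' measurableSet_Ioo fun r hr => ENNReal.one_le_ofReal.2 <|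
    Real.one_le_rpow_of_pos_of_le_one_of_nonpos (ha.trans_lt hr.1) (hr.2.le.trans hc) hs

theorem lintegral_Ioo_inv {a c : ℝ} (ha : 0 < a) (hac : a ≤ c) :
    ∫⁻ r in Ioo a c, ENNReal.ofReal r⁻¹ = ENNReal.ofReal (Real.log (c / a)) := by
  have hpos : ∀ᵐ r ∂volume.restrict (Ioc a c), 0 ≤ r⁻¹ :=
    (ae_restrict_mem measurableSet_Ioc).mono fun r hr => inv_nonneg.2 (ha.trans hr.1).le
  have hint : IntegrableOn (fun r : ℝ => r⁻¹) (Ioc a c) :=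
    (intervalIntegrable_iff_integrableOn_Ioc_of_le hac).1 <|
      intervalIntegrable_inv_iff.2 <| .inr fun h0 =>
        (ha.trans_le (uIcc_of_le hac ▸ h0).1).false
  rw [restrict_Ioo_eq_restrict_Ioc, ← ofReal_integral_eq_lintegral_ofReal hint hpos,
    ← intervalIntegral.integral_of_le hac, integral_inv_of_pos ha (ha.trans_le hac)]

theorem exists_le_lintegral_Ioo_inv {c R : ℝ} (hR : 0 < R) (hRc : R ≤ c) {M : ℝ≥0∞}
    (hM : M ≠ ⊤) : ∃ δ : ℝ, 0 < δ ∧ δ < 1 ∧ M ≤ ∫⁻ r in Ioo (c * δ) R, ENNReal.ofReal r⁻¹ := by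
  have hc : 0 < c := hR.trans_le hRc
  have hexp : Real.exp (-(M.toReal + 1)) < 1 :=
    Real.exp_lt_one_iff.2 (by linarith [ENNReal.toReal_nonneg (a := M)])
  have hδ : c * (R / c * Real.exp (-(M.toReal + 1))) = R * Real.exp (-(M.toReal + 1)) := by
    field_simp
  refine ⟨R / c * Real.exp (-(M.toReal + 1)), by positivity,
    mul_lt_one_of_nonneg_of_lt_one_right ((div_le_one hc).2 hRc) (Real.exp_nonneg _) hexp, ?_⟩
  rw [hδ, lintegral_Ioo_inv (by positivity) (mul_le_of_le_one_right hR.le hexp.le),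
    div_mul_cancel_left₀ hR.ne', Real.exp_neg, inv_inv, Real.log_exp]
  exact (ENNReal.ofReal_toReal hM).ge.trans (ENNReal.ofReal_le_ofReal (by linarith))

section ModelCells

variable {E : Type*} [NormedAddCommGroup E] [InnerProductSpace ℝ E] [FiniteDimensional ℝ E]
  [Nontrivial E] [MeasureSpace E] [BorelSpace E] [(volume : Measure E).IsAddHaarMeasure]
  [CompleteSpace F]

theorem CollapsingRetraction.exists_isCell_modelMap (P : CollapsingRetraction b)
    (hN : Bornology.IsBounded N) (hp : 1 < p) (l : ℕ) :
    ∃ C : ℝ≥0∞, C ≠ 0 ∧ C ≠ ⊤ ∧ ∀ (γ : HomotopyGroup (Fin (l + 1)) N b) (δ : ℝ), 0 < δ → δ < 1 →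
      ∃ v : (Fin l → ℝ) × E → F, IsCell b p 0 2
        (C * ENNReal.ofReal (δ ^ ((l : ℝ) + 2 - p)) * (classEnergy p γ + 1) ^ (1 - 1 / p))
        (C⁻¹ * (classEnergy p γ *
          ∫⁻ r in Ioo (((l : ℝ) + 2) * δ) (1 / 2), ENNReal.ofReal (r ^ ((l : ℝ) + 1 - p)))) v := by
  obtain ⟨A, hA, hgag⟩ := exists_gagliardoEnergy_modelMap_le (E := E) hN b hp l
  obtain ⟨B, hB, hloop⟩ := P.exists_contDiff_dirichletEnergy_le hp.le (l + 1)
  have hexp : 0 ≤ 1 - 1 / p := sub_nonneg.2 ((div_le_one (by positivity)).2 hp.le)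
  set S : ℝ≥0∞ := (volume : Measure E).toSphere univ
  have hS₀ : S ≠ 0 :=
    Measure.measure_univ_ne_zero.2 (Measure.toSphere_ne_zero (volume : Measure E))
  have hS : S ≠ ⊤ := measure_ne_top _ _
  set L : ℝ≥0∞ := (P.lipConst * (l + 2 : ℝ≥0∞)) ^ p * 2 ^ (Module.finrank ℝ E - 1)
  have hL : L ≠ ⊤ := ENNReal.mul_ne_top
    (ENNReal.rpow_ne_top_of_nonneg (by positivity) (by finiteness)) (by finiteness)
  refine ⟨A * (B + 1) ^ (1 - 1 / p) + S⁻¹ * L + 1, by simp, by finiteness,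
    fun γ δ hδ hδ₁ => ?_⟩
  obtain ⟨f, hf, rfl, hfT⟩ := hloop γ
  have hf₁ : ContDiff ℝ 1 f := hf.of_le (by exact_mod_cast le_top)
  refine ⟨modelMap δ f, contDiff_modelMap hf hδ hδ₁, fun q => f.mem _, fun q hq =>
    modelMap_eq_base hδ hδ₁.le (by simpa using hq), ?_, fun U hU => ?_⟩
  · have hT : dirichletEnergy p univ f + 1 ≤ (B + 1) * (classEnergy p f.homotopyClass + 1) := by
      grw [hfT]
      rw [add_one_mul B]
      gcongr
      exact le_add_self
    grw [hgag f δ hf₁ hδ hδ₁, hT, ENNReal.mul_rpow_of_nonneg _ _ hexp, ← mul_assoc,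
      mul_right_comm A]
    gcongr
    exact le_self_add.trans le_self_add
  · rw [ENNReal.inv_mul_le_iff (by simp) (by finiteness)]
    have hle := hU.classEnergy_mul_lintegral_rpow_le_modelMap P (by positivity) hδ
    rw [ENNReal.mul_le_iff_le_inv hS₀ hS, ← mul_assoc] at hle
    grw [hle]
    gcongr
    exact le_add_self.trans le_self_add

theorem CollapsingRetraction.exists_isCell_of_infinite (P : CollapsingRetraction b)
    (hN : IsCompact N) {l : ℕ} (hlp : (l : ℝ) + 1 < p)
    [Infinite (HomotopyGroup (Fin (l + 1)) N b)] {K : ℝ≥0∞} (hK : K ≠ ⊤) :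
    ∃ ε : ℝ≥0∞, ε ≠ ⊤ ∧ ∃ v : (Fin l → ℝ) × E → F, IsCell b p 0 2 ε (K * (ε + 1)) v := by
  have hp : 1 < p := by linarith [(l.cast_nonneg : (0 : ℝ) ≤ l)]
  have hp' : 1 / p < 1 := (div_lt_one (by positivity)).2 hp
  obtain ⟨C, hC₀, hC, hcell⟩ := P.exists_isCell_modelMap (E := E) hN.isBounded hp l
  set δ : ℝ := 1 / (4 * (l + 2))
  have hδ : ((l : ℝ) + 2) * δ = 1 / 4 := by simp only [δ]; field_simp
  have hI := ofReal_sub_le_lintegral_Ioo_rpow (a := (l + 2) * δ) (c := 1 / 2) (s := l + 1 - p)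
    (by positivity) (by norm_num) (by linarith)
  obtain ⟨X, hX, hgrowth⟩ := exists_forall_mul_rpow_add_one_le_mul
    (A := C * ENNReal.ofReal (δ ^ ((l : ℝ) + 2 - p)))
    (B := C⁻¹ * ENNReal.ofReal (1 / 2 - (l + 2) * δ)) (by finiteness)
    (mul_ne_zero (by simpa) (by norm_num [hδ])) (by finiteness) hK (sub_pos.2 hp')
    (sub_lt_self 1 (by positivity))
  obtain ⟨γ, hγ⟩ := (P.finite_setOf_classEnergy_lt hN b hp.le (by exact_mod_cast hlp) hX)
    |>.exists_notMem
  obtain ⟨v, hv⟩ := hcell γ δ (by positivity) ((div_lt_one (by positivity)).2 (by linarith))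
  have hγ_top : classEnergy p γ ≠ ⊤ := (P.classEnergy_lt_top hp.le γ).ne
  refine ⟨_, by finiteness, v, hv.mono le_rfl ((hgrowth _ (not_lt.1 hγ)).trans ?_)⟩
  rw [mul_assoc, mul_comm (ENNReal.ofReal _)]
  gcongr

theorem CollapsingRetraction.exists_isCell_of_nontrivial (P : CollapsingRetraction b)
    (hN : Bornology.IsBounded N) {l : ℕ} (hp : p = l + 2)
    [Nontrivial (HomotopyGroup (Fin (l + 1)) N b)] {K : ℝ≥0∞} (hK : K ≠ ⊤) :
    ∃ ε : ℝ≥0∞, ε ≠ ⊤ ∧ ∃ v : (Fin l → ℝ) × E → F, IsCell b p 0 2 ε (K * (ε + 1)) v := by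
  subst hp
  have hp₁ : (1 : ℝ) < l + 2 := by linarith [(l.cast_nonneg : (0 : ℝ) ≤ l)]
  obtain ⟨C, hC₀, hC, hcell⟩ := P.exists_isCell_modelMap (E := E) hN hp₁ l
  obtain ⟨c, hc, hclass⟩ := P.exists_classEnergy_lt_imp_eq b l.succ_ne_zero hp₁.le
    (by push_cast; linarith)
  obtain ⟨γ, hγ⟩ := exists_ne (CubeLoop.const b (l + 1)).homotopyClass
  set T : ℝ≥0∞ := classEnergy ((l : ℝ) + 2) γ
  have hT₀ : T ≠ 0 := (hc.bot_lt.trans_le (not_lt.1 (mt (hclass γ) hγ))).ne'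
  have hT : T ≠ ⊤ := (P.classEnergy_lt_top hp₁.le γ).ne
  set ε : ℝ≥0∞ := C * (T + 1) ^ (1 - 1 / ((l : ℝ) + 2))
  have hε : ε ≠ ⊤ := by finiteness
  obtain ⟨δ, hδ, hδ₁, hlog⟩ := exists_le_lintegral_Ioo_inv (c := l + 2) (R := 1 / 2) (by norm_num)
    (by linarith) (M := C * T⁻¹ * (K * (ε + 1))) (by finiteness)
  obtain ⟨v, hv⟩ := hcell γ δ hδ hδ₁
  simp only [sub_self, Real.rpow_zero, ENNReal.ofReal_one, mul_one,
    show (l : ℝ) + 1 - (l + 2) = -1 by ring, Real.rpow_neg_one] at hv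
  refine ⟨ε, hε, v, hv.mono le_rfl ?_⟩
  grw [← hlog]
  rw [show C⁻¹ * (T * (C * T⁻¹ * (K * (ε + 1)))) = C⁻¹ * C * (T * T⁻¹) * (K * (ε + 1)) by ring,
    ENNReal.inv_mul_cancel hC₀ hC, ENNReal.mul_inv_cancel hT₀ hT, one_mul, one_mul]

end ModelCells

end Cells

section Placement

theorem exists_forall_le_mul_lt (A : ℝ) {ρ : ℝ} (hρ : 0 < ρ) :
    ∃ s₀ : ℝ, 0 < s₀ ∧ s₀ ≤ 1 ∧ ∀ s, 0 < s → s ≤ s₀ → s * A < ρ := by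
  refine ⟨min 1 (ρ / (|A| + 1)), by positivity, min_le_left _ _, fun s hs hle => ?_⟩
  calc s * A < s * (|A| + 1) := by gcongr; exact lt_add_of_le_of_pos (le_abs_self A) one_pos
    _ ≤ ρ := (le_div_iff₀ (by positivity)).1 (hle.trans (min_le_right _ _))

theorem exists_ofReal_rpow_eq {κ : ℝ} (hκ : 0 < κ) {x : ℝ≥0∞} (hx₀ : x ≠ 0) (hx : x ≠ ⊤) :
    ∃ s : ℝ, 0 < s ∧ ENNReal.ofReal (s ^ κ) = x := by
  refine ⟨x.toReal ^ κ⁻¹, Real.rpow_pos_of_pos (ENNReal.toReal_pos hx₀ hx) _, ?_⟩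
  rw [Real.rpow_inv_rpow ENNReal.toReal_nonneg hκ.ne', ENNReal.ofReal_toReal hx]

variable {E E' : Type*} [NormedAddCommGroup E] [NormedSpace ℝ E] [NormedAddCommGroup E']
  [NormedSpace ℝ E']

theorem div_norm_rpow_smul_le (e : E ≃L[ℝ] E') {s q A : ℝ} (hs : 0 < s) (hq : 0 ≤ q) (hA : 0 ≤ A)
    {x : E} (hx : x ≠ 0) :
    A / ‖s • e x‖ ^ q ≤ ‖(e.symm : E' →L[ℝ] E)‖ ^ q * s ^ (-q) * (A / ‖x‖ ^ q) := by
  have _hx₀ : 0 < ‖x‖ := norm_pos_iff.2 hx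
  have _hex₀ : 0 < ‖e x‖ := norm_pos_iff.2 (by simpa using hx)
  have hle : ‖x‖ ^ q ≤ ‖(e.symm : E' →L[ℝ] E)‖ ^ q * ‖e x‖ ^ q := by
    rw [← Real.mul_rpow (norm_nonneg _) (norm_nonneg _)]
    gcongr
    simpa using (e.symm : E' →L[ℝ] E).le_opNorm (e x)
  rw [norm_smul, Real.norm_of_nonneg hs.le, Real.mul_rpow hs.le (norm_nonneg _),
    Real.rpow_neg hs.le, div_le_iff₀ (by positivity)]
  calc A = A * (‖x‖ ^ q / ‖x‖ ^ q) := by rw [div_self (by positivity), mul_one]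
    _ ≤ A * (‖(e.symm : E' →L[ℝ] E)‖ ^ q * ‖e x‖ ^ q / ‖x‖ ^ q) := by gcongr
    _ = _ := by field_simp

theorem mapsTo_add_smul_ball (e : E ≃L[ℝ] E') (a : E') {s R ρ : ℝ} (hs : 0 < s)
    (hρ : s * (‖(e : E →L[ℝ] E')‖ * R) < ρ) :
    MapsTo (fun x => a + s • e x) (ball 0 R) (ball a ρ) := fun x hx => by
  rw [mem_ball_iff_norm, add_sub_cancel_left, norm_smul, Real.norm_of_nonneg hs.le]
  refine lt_of_le_of_lt (mul_le_mul_of_nonneg_left ?_ hs.le) hρ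
  exact ((e : E →L[ℝ] E').le_opNorm x).trans (by gcongr; exact (mem_ball_zero_iff.1 hx).le)

theorem lipschitzWith_add_smul (e : E ≃L[ℝ] E') (a : E') {s : ℝ} (hs : 0 ≤ s) :
    LipschitzWith (s.toNNReal * max ‖(e : E →L[ℝ] E')‖₊ 1) fun x => a + s • e x := by
  refine LipschitzWith.of_dist_le_mul fun x y => ?_
  rw [dist_add_left, dist_smul₀, Real.norm_of_nonneg hs, NNReal.coe_mul, Real.coe_toNNReal s hs,
    mul_assoc]
  gcongr
  exact ((e : E →L[ℝ] E').lipschitz.dist_le_mul x y).trans (by gcongr; exact le_max_left _ _)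

theorem IsExtension.dirichletEnergy_comp_affine_le {F : Type*} [NormedAddCommGroup F]
    [NormedSpace ℝ F] [CompleteSpace F] [MeasureSpace E] [BorelSpace E]
    [SFinite (volume : Measure E)] {N : Set F} {v : E' → F} {U : E' × ℝ → F} {a : E'}
    {R ρ s p : ℝ} (hU : IsExtension N (ball a ρ) 1 v U) (e : E ≃L[ℝ] E') (hs : 0 < s) (hs₁ : s ≤ 1)
    (hρ : s * (‖(e : E →L[ℝ] E')‖ * R) < ρ) (hp : 0 ≤ p) :
    dirichletEnergy p (ball 0 R ×ˢ Ioo 0 1) (fun q => U (a + s • e q.1, s * q.2)) ≤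
      (max ‖(e : E →L[ℝ] E')‖₊ 1 : NNReal) ^ p * ENNReal.ofReal (s ^ (p - 1)) *
        ∫⁻ x in ball 0 R, fiberEnergy p 1 U (a + s • e x) := by
  set L : NNReal := max ‖(e : E →L[ℝ] E')‖₊ 1
  have hs' : (s.toNNReal : ℝ) = s := Real.coe_toNNReal s hs.le
  have hsκ : s ≤ (s.toNNReal * L : NNReal) := by
    rw [NNReal.coe_mul, hs']
    exact le_mul_of_one_le_right hs.le (mod_cast le_max_right _ _)
  have hconst : ((s.toNNReal * L : NNReal) : ℝ≥0∞) ^ p * ENNReal.ofReal s⁻¹ =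
      L ^ p * ENNReal.ofReal (s ^ (p - 1)) := by
    rw [Real.rpow_sub_one hs.ne', div_eq_mul_inv, ENNReal.ofReal_mul (by positivity),
      ← ENNReal.ofReal_rpow_of_nonneg hs.le hp, ENNReal.coe_mul, ENNReal.mul_rpow_of_nonneg _ _ hp,
      mul_right_comm, mul_comm]
    rfl
  rw [← hconst]
  exact hU.dirichletEnergy_comp_le (θ := fun x => a + s • e x) isOpen_ball measurableSet_ball
    (contDiff_const.add (e.contDiff.const_smul s)) (lipschitzWith_add_smul e a hs.le)
    (mapsTo_add_smul_ball e a hs hρ) hs hsκ (by simpa using hs₁) hp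

variable [MeasureSpace E] [BorelSpace E] [(volume : Measure E).IsAddHaarMeasure]
  [FiniteDimensional ℝ E'] [MeasureSpace E'] [BorelSpace E']
  [(volume : Measure E').IsAddHaarMeasure]

theorem exists_lintegral_eq_lintegral_comp_affine (e : E ≃L[ℝ] E') :
    ∃ c : NNReal, 0 < c ∧ ∀ (φ : E' → ℝ≥0∞) (a : E') {s : ℝ}, 0 < s →
      ∫⁻ y, φ y = c * ENNReal.ofReal (s ^ (Module.finrank ℝ E' : ℝ)) * ∫⁻ x, φ (a + s • e x) := by
  have : (Measure.map e (volume : Measure E)).IsAddHaarMeasure := e.isAddHaarMeasure_map _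
  refine ⟨(volume : Measure E').addHaarScalarFactor (Measure.map e volume),
    Measure.addHaarScalarFactor_pos_of_isAddHaarMeasure _ _, fun φ a s hs => ?_⟩
  have hmap : ∫⁻ x, φ (a + s • e x) = ∫⁻ y, φ (a + s • y) ∂Measure.map e volume :=
    (e.toHomeomorph.measurableEmbedding.lintegral_map fun y => φ (a + s • y)).symm
  have hscale : ENNReal.ofReal (s ^ (Module.finrank ℝ E' : ℝ)) * ∫⁻ y, φ (a + s • y) =
      ∫⁻ y, φ y := by
    rw [lintegral_comp_add_smul φ a hs, ← mul_assoc, ← ENNReal.ofReal_mul (by positivity),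
      ← Real.rpow_add hs, add_neg_cancel, Real.rpow_zero, ENNReal.ofReal_one, one_mul]
  rw [← hscale, hmap, mul_right_comm, mul_comm]
  congr 1
  conv_lhs => rw [Measure.isAddLeftInvariant_eq_smul volume (Measure.map e volume)]
  exact lintegral_smul_measure _ _

variable {p : ℝ}

theorem exists_gagliardoEnergy_comp_affine_le (F : Type*) [NormedAddCommGroup F] (hp : 1 ≤ p)
    (e : E ≃L[ℝ] E') :
    ∃ C : ℝ≥0∞, C ≠ ⊤ ∧ ∀ (v : E → F) (a : E') {s : ℝ}, 0 < s →
      gagliardoEnergy p (fun y => v (s⁻¹ • e.symm (y - a))) ≤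
        C * ENNReal.ofReal (s ^ ((Module.finrank ℝ E' : ℝ) + 1 - p)) * gagliardoEnergy p v := by
  obtain ⟨c, -, hc⟩ := exists_lintegral_eq_lintegral_comp_affine e
  set n : ℝ := (Module.finrank ℝ E' : ℝ) with hn
  set L : ℝ := ‖(e.symm : E' →L[ℝ] E)‖ ^ (n + p - 1)
  have _hn₀ : 0 ≤ n := Nat.cast_nonneg _
  have hfin : (Module.finrank ℝ E : ℝ) = n := by rw [hn, e.toLinearEquiv.finrank_eq]
  refine ⟨c * c * ENNReal.ofReal L, by finiteness, fun v a s hs => ?_⟩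
  have hinv (x : E) : s⁻¹ • e.symm (a + s • e x - a) = x := by
    rw [add_sub_cancel_left, map_smul, e.symm_apply_apply, inv_smul_smul₀ hs.ne']
  have hkernel (x y : E) :
      ENNReal.ofReal (‖v y - v x‖ ^ p / ‖a + s • e y - (a + s • e x)‖ ^ (n + p - 1)) ≤
        ENNReal.ofReal (L * s ^ (-(n + p - 1))) *
          ENNReal.ofReal (‖v y - v x‖ ^ p / ‖y - x‖ ^ (n + p - 1)) := by
    rcases eq_or_ne y x with rfl | hyx
    · simp [Real.zero_rpow (by positivity : p ≠ 0)]
    rw [← ENNReal.ofReal_mul (by positivity), add_sub_add_left_eq_sub, ← smul_sub, ← map_sub]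
    exact ENNReal.ofReal_le_ofReal (div_norm_rpow_smul_le e hs (by linarith) (by positivity)
      (sub_ne_zero.2 hyx))
  set A : ℝ≥0∞ := c * ENNReal.ofReal (s ^ n)
  have hA : A ≠ ⊤ := by finiteness
  have hpow : s ^ n * s ^ n * s ^ (-(n + p - 1)) = s ^ (n + 1 - p) := by
    rw [← Real.rpow_add hs, ← Real.rpow_add hs]
    ring_nf
  calc gagliardoEnergy p (fun y => v (s⁻¹ • e.symm (y - a)))
      = A * ∫⁻ x, A * ∫⁻ y,
          ENNReal.ofReal (‖v y - v x‖ ^ p / ‖a + s • e y - (a + s • e x)‖ ^ (n + p - 1)) := by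
        rw [gagliardoEnergy, hc _ a hs]
        refine congrArg (A * ·) (lintegral_congr fun x => (hc _ a hs).trans ?_)
        simp only [hinv]
        rfl
    _ ≤ A * ∫⁻ x, A * ∫⁻ y, ENNReal.ofReal (L * s ^ (-(n + p - 1))) *
          ENNReal.ofReal (‖v y - v x‖ ^ p / ‖y - x‖ ^ (n + p - 1)) := by
        gcongr with x y
        exact hkernel x y
    _ = A * A * ENNReal.ofReal (L * s ^ (-(n + p - 1))) * gagliardoEnergy p v := by
        simp only [gagliardoEnergy, hfin, lintegral_const_mul' _ _ hA,
          lintegral_const_mul' _ _ ENNReal.ofReal_ne_top]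
        ring
    _ = _ := by
        rw [← hpow, ENNReal.ofReal_mul (by positivity), ENNReal.ofReal_mul (by positivity),
          ENNReal.ofReal_mul (by positivity)]
        ring

theorem exists_dirichletEnergy_comp_affine_le (F : Type*) [NormedAddCommGroup F] [NormedSpace ℝ F]
    [CompleteSpace F] (hp : 0 ≤ p) (e : E ≃L[ℝ] E') :
    ∃ C : ℝ≥0∞, C ≠ 0 ∧ C ≠ ⊤ ∧ ∀ {N : Set F} {v U} {a : E'} {R ρ s : ℝ},
      IsExtension N (ball a ρ) 1 v U → 0 < s → s ≤ 1 → s * (‖(e : E →L[ℝ] E')‖ * R) < ρ →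
      C * ENNReal.ofReal (s ^ ((Module.finrank ℝ E' : ℝ) + 1 - p)) *
        dirichletEnergy p (ball 0 R ×ˢ Ioo 0 1) (fun q => U (a + s • e q.1, s * q.2)) ≤
      dirichletEnergy p (ball a ρ ×ˢ Ioo 0 1) U := by
  obtain ⟨c, hc₀, hc⟩ := exists_lintegral_eq_lintegral_comp_affine e
  have : FiniteDimensional ℝ E := e.symm.toLinearEquiv.finiteDimensional
  set n : ℝ := (Module.finrank ℝ E' : ℝ)
  set L : NNReal := max ‖(e : E →L[ℝ] E')‖₊ 1
  have hLp : (L ^ p : NNReal) ≠ 0 :=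
    (NNReal.rpow_pos (zero_lt_one.trans_le (le_max_right _ _))).ne'
  refine ⟨(c / L ^ p : NNReal), by simp [hc₀.ne', hLp], ENNReal.coe_ne_top,
    fun {N v U a R ρ s} hU hs hs₁ hρ => ?_⟩
  set I : ℝ≥0∞ := ∫⁻ x in ball 0 R, fiberEnergy p 1 U (a + s • e x)
  have hI : c * ENNReal.ofReal (s ^ n) * I ≤ dirichletEnergy p (ball a ρ ×ˢ Ioo 0 1) U := by
    rw [dirichletEnergy_prod_Ioo, ← lintegral_indicator (measurableSet_ball (x := a)),
      hc (indicator _ _) a hs]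
    gcongr
    refine (setLIntegral_mono' measurableSet_ball fun x hx => ?_).trans
      (setLIntegral_le_lintegral (ball 0 R) _)
    exact (indicator_of_mem (mapsTo_add_smul_ball e a hs hρ hx) _).ge
  have hpow : s ^ (n + 1 - p) * s ^ (p - 1) = s ^ n := by
    rw [← Real.rpow_add hs]
    ring_nf
  have hcancel : ((c / L ^ p : NNReal) : ℝ≥0∞) * (L : ℝ≥0∞) ^ p = c := by
    rw [← ENNReal.coe_rpow_of_nonneg _ hp, ← ENNReal.coe_mul, div_mul_cancel₀ _ hLp]
  calc _ ≤ ((c / L ^ p : NNReal) : ℝ≥0∞) * ENNReal.ofReal (s ^ (n + 1 - p)) *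
        (L ^ p * ENNReal.ofReal (s ^ (p - 1)) * I) := by
        gcongr
        exact hU.dirichletEnergy_comp_affine_le e hs hs₁ hρ hp
    _ = ((c / L ^ p : NNReal) : ℝ≥0∞) * L ^ p *
        (ENNReal.ofReal (s ^ (n + 1 - p)) * ENNReal.ofReal (s ^ (p - 1))) * I := by ring
    _ ≤ _ := by
        rw [hcancel, ← ENNReal.ofReal_mul (by positivity), hpow]
        exact hI

variable {F : Type*} [NormedAddCommGroup F] [NormedSpace ℝ F] [CompleteSpace F] {N : Set F} {b : N}

theorem exists_forall_isCell_comp_affine (b : N) (hp : 1 ≤ p) (e : E ≃L[ℝ] E') :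
    ∃ C C' : ℝ≥0∞, C ≠ ⊤ ∧ C' ≠ 0 ∧ C' ≠ ⊤ ∧ ∀ {R : ℝ} {ε M : ℝ≥0∞} {v : E → F},
      IsCell b p 0 R ε M v → ∀ {a : E'} {ρ s : ℝ}, 0 < s → s ≤ 1 →
        s * (‖(e : E →L[ℝ] E')‖ * R) < ρ →
        IsCell b p a ρ (C * ENNReal.ofReal (s ^ ((Module.finrank ℝ E' : ℝ) + 1 - p)) * ε)
          (C' * ENNReal.ofReal (s ^ ((Module.finrank ℝ E' : ℝ) + 1 - p)) * M)
          fun y => v (s⁻¹ • e.symm (y - a)) := by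
  obtain ⟨C, hC, hgagliardo⟩ := exists_gagliardoEnergy_comp_affine_le F hp e
  obtain ⟨C', hC'₀, hC', hdirichlet⟩ :=
    exists_dirichletEnergy_comp_affine_le F (zero_le_one.trans hp) e
  refine ⟨C, C', hC, hC'₀, hC', fun {R ε M v} hv a ρ s hs hs₁ hρ => ?_⟩
  have hinv (x : E) : s⁻¹ • e.symm (a + s • e x - a) = x := by
    rw [add_sub_cancel_left, map_smul, e.symm_apply_apply, inv_smul_smul₀ hs.ne']
  have hinv' (y : E') : a + s • e (s⁻¹ • e.symm (y - a)) = y := by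
    rw [map_smul, e.apply_symm_apply, smul_inv_smul₀ hs.ne', add_sub_cancel]
  have hmaps := mapsTo_add_smul_ball e a hs hρ
  exact {
    contDiff := hv.contDiff.comp
      ((e.symm.contDiff.comp (contDiff_id.sub contDiff_const)).const_smul _)
    mem := fun y => hv.mem _
    eq_base := fun y hy => hv.eq_base _ fun hball => hy (hinv' y ▸ hmaps hball)
    gagliardoEnergy_le := (hgagliardo v a hs).trans (by gcongr; exact hv.gagliardoEnergy_le)
    le_dirichletEnergy := fun U hU => by
      have hV := (hU.comp (θ := fun x => a + s • e x) (h' := 1)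
        (contDiff_const.add (e.contDiff.const_smul s)) hmaps hs (by simpa using hs₁)).congr_trace
        (v' := v) fun x _ => by simp only [hinv]
      exact le_trans (by gcongr; exact hv.le_dirichletEnergy _ hV) (hdirichlet hU hs hs₁ hρ) }

theorem exists_isCell_of_forall_exists_isCell (e : E ≃L[ℝ] E') (hp : 1 ≤ p)
    (hpn : p < Module.finrank ℝ E' + 1) {R : ℝ}
    (hcell : ∀ K : ℝ≥0∞, K ≠ ⊤ → ∃ ε : ℝ≥0∞, ε ≠ ⊤ ∧ ∃ v : E → F, IsCell b p 0 R ε (K * (ε + 1)) v)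
    (a : E') {ρ : ℝ} (hρ : 0 < ρ) {ε M : ℝ≥0∞} (hε : ε ≠ 0) (hM : M ≠ ⊤) :
    ∃ φ : E' → F, IsCell b p a ρ ε M φ := by
  obtain ⟨C, C', hC, hC'₀, hC', hplace⟩ := exists_forall_isCell_comp_affine b hp e
  set κ : ℝ := (Module.finrank ℝ E' : ℝ) + 1 - p
  have hκ : 0 < κ := sub_pos.2 hpn
  obtain ⟨s₀, hs₀, hs₀₁, hs₀ρ⟩ := exists_forall_le_mul_lt (‖(e : E →L[ℝ] E')‖ * R) hρ
  set η : ℝ≥0∞ := min (ENNReal.ofReal (s₀ ^ κ)) (ε / C)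
  have hη₀ : η ≠ 0 := (lt_min (ENNReal.ofReal_pos.2 (by positivity)) (ENNReal.div_pos hε hC)).ne'
  have hη : η ≠ ⊤ := ne_top_of_le_ne_top ENNReal.ofReal_ne_top (min_le_left _ _)
  obtain ⟨ε₁, hε₁, v, hv⟩ := hcell (M * C'⁻¹ * η⁻¹) (by finiteness)
  have hε₁₀ : ε₁ + 1 ≠ 0 := by simp
  obtain ⟨s, hs, hsη⟩ := exists_ofReal_rpow_eq hκ
    (ENNReal.div_pos hη₀ (by finiteness : ε₁ + 1 ≠ ⊤)).ne' (ENNReal.div_ne_top hη hε₁₀)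
  have hss₀ : s ≤ s₀ := by
    refine (Real.rpow_le_rpow_iff hs.le hs₀.le hκ).1
      ((ENNReal.ofReal_le_ofReal_iff (by positivity)).1 ?_)
    rw [hsη]
    exact (ENNReal.div_le_of_le_mul (le_mul_of_one_le_right' le_add_self)).trans (min_le_left _ _)
  refine ⟨_, (hplace hv hs (hss₀.trans hs₀₁) (hs₀ρ s hs hss₀)).mono ?_ ?_⟩
  · calc C * ENNReal.ofReal (s ^ κ) * ε₁ ≤ C * (η / (ε₁ + 1) * (ε₁ + 1)) := by
          rw [hsη, mul_assoc]
          gcongr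
          exact le_self_add
      _ ≤ ε := by
          rw [ENNReal.div_mul_cancel hε₁₀ (by finiteness)]
          exact (by gcongr; exact min_le_right _ _ : C * η ≤ C * (ε / C)).trans ENNReal.mul_div_le
  · calc M = C' * C'⁻¹ * (η * η⁻¹) * M := by
          rw [ENNReal.mul_inv_cancel hC'₀ hC', ENNReal.mul_inv_cancel hη₀ hη, one_mul, one_mul]
      _ = C' * C'⁻¹ * (η / (ε₁ + 1) * (ε₁ + 1) * η⁻¹) * M := by
          rw [ENNReal.div_mul_cancel hε₁₀ (by finiteness)]
      _ ≤ _ := by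
          rw [hsη]
          exact (by ring : _ = C' * (η / (ε₁ + 1)) * (M * C'⁻¹ * η⁻¹ * (ε₁ + 1))).le

end Placement

section Gluing

/-- The map equal to `φ k` where `φ k` differs from `b`, intended for maps `φ k` that differ from
`b` on pairwise disjoint sets only. -/
def glue {ι X F : Type*} [AddCommGroup F] (b : F) (φ : ι → X → F) (x : X) : F :=
  b + ∑ᶠ k, (φ k x - b)

theorem glue_eq_of_forall_ne {ι X F : Type*} [AddCommGroup F] {b : F} {φ : ι → X → F} {x : X}
    {k : ι} (hk : ∀ i, i ≠ k → φ i x = b) : glue b φ x = φ k x := by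
  rw [glue, finsum_eq_single _ k fun i hi => sub_eq_zero.2 (hk i hi), add_sub_cancel]

theorem exists_forall_ne_eq {ι X F : Type*} [Nonempty ι] {b : F} {φ : ι → X → F} {B : ι → Set X}
    (hB : Pairwise (Function.onFun Disjoint B)) (hφ : ∀ k, ∀ x ∉ B k, φ k x = b) (x : X) :
    ∃ k, ∀ i, i ≠ k → φ i x = b := by
  by_cases hx : ∃ k, x ∈ B k
  · obtain ⟨k, hk⟩ := hx
    exact ⟨k, fun i hi => hφ i x fun hi' => (hB hi).notMem_of_mem_left hi' hk⟩
  · exact ⟨Classical.arbitrary ι, fun i _ => hφ i x fun hi => hx ⟨i, hi⟩⟩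

theorem norm_glue_sub_glue_le {ι X F : Type*} [NormedAddCommGroup F] {b : F} {φ : ι → X → F}
    (hφ : ∀ x, ∃ k, ∀ i, i ≠ k → φ i x = b) (x y : X) :
    ∃ k, ‖glue b φ y - glue b φ x‖ ≤ 2 * ‖φ k y - φ k x‖ := by
  obtain ⟨j, hj⟩ := hφ x
  obtain ⟨k, hk⟩ := hφ y
  rw [glue_eq_of_forall_ne hj, glue_eq_of_forall_ne hk]
  rcases eq_or_ne j k with rfl | hjk
  · exact ⟨j, le_mul_of_one_le_left (norm_nonneg _) one_le_two⟩
  have htriangle : ‖φ k y - φ j x‖ ≤ ‖φ k y - φ k x‖ + ‖φ j y - φ j x‖ := by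
    rw [hj k hjk.symm, hk j hjk]
    exact norm_sub_le_norm_sub_add_norm_sub _ _ _
  rcases le_total ‖φ k y - φ k x‖ ‖φ j y - φ j x‖ with hle | hle
  · exact ⟨j, by linarith⟩
  · exact ⟨k, by linarith⟩

variable {ι E F : Type*} [NormedAddCommGroup E] [NormedSpace ℝ E] [NormedAddCommGroup F] {b : F}
  {φ : ι → E → F}

theorem gagliardoEnergy_glue_le [SecondCountableTopology E] [MeasureSpace E] [BorelSpace E]
    [SFinite (volume : Measure E)] [Countable ι] {p : ℝ} (hp : 0 ≤ p)
    (hφ : ∀ x, ∃ k, ∀ i, i ≠ k → φ i x = b) (hcont : ∀ k, Continuous (φ k)) :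
    gagliardoEnergy p (glue b φ) ≤ ENNReal.ofReal (2 ^ p) * ∑' k, gagliardoEnergy p (φ k) := by
  set w : ι → E → E → ℝ≥0∞ := fun k x y =>
    ENNReal.ofReal (‖φ k y - φ k x‖ ^ p / ‖y - x‖ ^ ((Module.finrank ℝ E : ℝ) + p - 1))
  have hw (k : ι) : Measurable (Function.uncurry (w k)) := by
    have hnum : Measurable fun z : E × E => ‖φ k z.2 - φ k z.1‖ :=
      (((hcont k).comp continuous_snd).sub ((hcont k).comp continuous_fst)).norm.measurable
    have hden : Measurable fun z : E × E => ‖z.2 - z.1‖ := by fun_prop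
    exact ((hnum.pow_const p).div (hden.pow_const _)).ennreal_ofReal
  calc gagliardoEnergy p (glue b φ)
      ≤ ∫⁻ x, ∫⁻ y, ENNReal.ofReal (2 ^ p) * ∑' k, w k x y := by
        refine lintegral_mono fun x => lintegral_mono fun y => ?_
        obtain ⟨k, hk⟩ := norm_glue_sub_glue_le hφ x y
        refine le_trans ?_ (mul_le_mul_right (ENNReal.le_tsum k) _)
        rw [← ENNReal.ofReal_mul (by positivity), ← mul_div_assoc,
          ← Real.mul_rpow zero_le_two (norm_nonneg _)]
        gcongr
    _ = ENNReal.ofReal (2 ^ p) * ∑' k, ∫⁻ x, ∫⁻ y, w k x y := by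
        simp only [lintegral_const_mul' _ _ ENNReal.ofReal_ne_top]
        simp only [lintegral_tsum fun k => (hw k).of_uncurry_left.aemeasurable]
        rw [lintegral_tsum fun k => (hw k).lintegral_prod_right.aemeasurable]

theorem contDiffAt_glue [NormedSpace ℝ F] {n : WithTop ℕ∞} {x : E} {B : ι → Set E} {W : Set E}
    (hW : W ∈ 𝓝 x)
    (hfin : {k | (B k ∩ W).Nonempty}.Finite) (hφ : ∀ k, ∀ x ∉ B k, φ k x = b)
    (hsmooth : ∀ k, ContDiff ℝ n (φ k)) : ContDiffAt ℝ n (glue b φ) x := by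
  have hsum : ContDiff ℝ n fun y => b + ∑ k ∈ hfin.toFinset, (φ k y - b) :=
    contDiff_const.add (ContDiff.sum fun k _ => (hsmooth k).sub contDiff_const)
  refine hsum.contDiffAt.congr_of_eventuallyEq ?_
  filter_upwards [hW] with y hy
  refine congrArg (b + ·) (finsum_eq_sum_of_support_subset _ fun k hk => ?_)
  exact hfin.mem_toFinset.2 ⟨y, not_not.1 fun hyk => hk (sub_eq_zero.2 (hφ k y hyk)), hy⟩

end Gluing

section DyadicBalls

variable {E : Type*} [NormedAddCommGroup E] [NormedSpace ℝ E] {e : E} {k : ℕ} {x : E}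

/-- Disjoint balls in `ball 0 1`, for a unit vector `e`, that accumulate at `e` only. -/
def dyadicBall (e : E) (k : ℕ) : Set E :=
  ball ((1 - (1 / 2 : ℝ) ^ (k + 1)) • e) ((1 / 2) ^ (k + 1) / 8)

theorem abs_norm_sub_lt_of_mem_dyadicBall (he : ‖e‖ = 1) (hx : x ∈ dyadicBall e k) :
    |‖x‖ - (1 - (1 / 2 : ℝ) ^ (k + 1))| < (1 / 2) ^ (k + 1) / 8 := by
  have hle : (1 / 2 : ℝ) ^ (k + 1) ≤ 1 := pow_le_one₀ (by norm_num) (by norm_num)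
  have hcenter : ‖(1 - (1 / 2 : ℝ) ^ (k + 1)) • e‖ = 1 - (1 / 2) ^ (k + 1) := by
    rw [norm_smul, he, mul_one, Real.norm_of_nonneg (sub_nonneg.2 hle)]
  rw [← hcenter]
  exact (abs_norm_sub_norm_le _ _).trans_lt (mem_ball_iff_norm.1 hx)

theorem dyadicBall_subset_ball (he : ‖e‖ = 1) (k : ℕ) : dyadicBall e k ⊆ ball 0 1 := fun x hx => by
  have hpos : (0 : ℝ) < (1 / 2) ^ (k + 1) := by positivity
  have hnorm := abs_lt.1 (abs_norm_sub_lt_of_mem_dyadicBall he hx)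
  rw [mem_ball_zero_iff]
  linarith

theorem pairwise_disjoint_dyadicBall (he : ‖e‖ = 1) :
    Pairwise (Function.onFun Disjoint (dyadicBall e)) := by
  refine (pairwise_disjoint_on _).2 fun j k hjk => disjoint_left.2 fun x hj hk => ?_
  have hpow : (1 / 2 : ℝ) ^ (k + 1) ≤ (1 / 2) ^ (j + 1) * (1 / 2) := by
    rw [← pow_succ]
    exact pow_le_pow_of_le_one (by norm_num) (by norm_num) (by lia)
  have hpos : (0 : ℝ) < (1 / 2) ^ (j + 1) := by positivity
  have hnj := abs_lt.1 (abs_norm_sub_lt_of_mem_dyadicBall he hj)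
  have hnk := abs_lt.1 (abs_norm_sub_lt_of_mem_dyadicBall he hk)
  linarith

theorem finite_setOf_dyadicBall_inter_ball_nonempty (he : ‖e‖ = 1) {r : ℝ} (hr : r < 1) :
    {k | (dyadicBall e k ∩ ball 0 r).Nonempty}.Finite := by
  have hsmall : ∀ᶠ k : ℕ in cofinite, (1 / 2 : ℝ) ^ k < 1 - r := by
    rw [Nat.cofinite_eq_atTop]
    exact (tendsto_pow_atTop_nhds_zero_of_lt_one (by norm_num) (by norm_num)).eventually_lt_const
      (sub_pos.2 hr)
  refine hsmall.subset fun k ⟨x, hxk, hxr⟩ (hk : (1 / 2) ^ k < 1 - r) => ?_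
  have _hpos : (0 : ℝ) < (1 / 2) ^ k := by positivity
  have hnorm := abs_lt.1 (abs_norm_sub_lt_of_mem_dyadicBall he hxk)
  rw [pow_succ] at hnorm
  linarith [mem_ball_zero_iff.1 hxr, hk]

end DyadicBalls

section Obstruction

variable {E F : Type*} [NormedAddCommGroup E] [NormedSpace ℝ E] [NormedAddCommGroup F]
  [NormedSpace ℝ F] {N : Set F} {b : N} {p : ℝ}

theorem IsExtension.mono {Ω Ω' : Set E} {h : ℝ} {v : E → F} {U : E × ℝ → F}
    (hU : IsExtension N Ω h v U) (hΩ : Ω' ⊆ Ω) : IsExtension N Ω' h v U where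
  continuousOn := hU.continuousOn.mono (prod_mono_left hΩ)
  contDiffOn := hU.contDiffOn.mono (prod_mono_left hΩ)
  mapsTo := hU.mapsTo.mono_left (prod_mono_left hΩ)
  trace := fun x hx => hU.trace x (hΩ hx)

variable [FiniteDimensional ℝ E] [MeasureSpace E] [BorelSpace E]
  [(volume : Measure E).IsAddHaarMeasure]

theorem exists_contDiffOn_ball_of_forall_exists_isCell [Nontrivial E] (hp : 0 ≤ p)
    (hcell : ∀ (a : E) {ρ : ℝ}, 0 < ρ → ∀ {ε M : ℝ≥0∞}, ε ≠ 0 → M ≠ ⊤ →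
      ∃ φ : E → F, IsCell b p a ρ ε M φ) :
    ∃ u : E → F, ContDiffOn ℝ (⊤ : ℕ∞) u (ball 0 1) ∧ (∀ x, u x ∈ N) ∧ gagliardoEnergy p u < ⊤ ∧
      ∀ U, IsExtension N (ball 0 1) 1 u U → dirichletEnergy p (ball 0 1 ×ˢ Ioo 0 1) U = ⊤ := by
  obtain ⟨e, he⟩ := exists_norm_eq E zero_le_one
  obtain ⟨ε, hε₀, hε⟩ := ENNReal.exists_pos_sum_of_countable' one_ne_zero ℕ
  choose φ hφ using fun k : ℕ => hcell ((1 - (1 / 2 : ℝ) ^ (k + 1)) • e)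
    (by positivity : (0 : ℝ) < (1 / 2) ^ (k + 1) / 8) (hε₀ k).ne' (ENNReal.natCast_ne_top k)
  have hbase (k : ℕ) : ∀ x ∉ dyadicBall e k, φ k x = b := (hφ k).eq_base
  have hdisj := pairwise_disjoint_dyadicBall he
  have hne := exists_forall_ne_eq hdisj hbase
  refine ⟨glue (b : F) φ, fun x hx => ?_, fun x => ?_, ?_, fun U hU => ?_⟩
  · obtain ⟨r, hxr, hr⟩ := exists_between (mem_ball_zero_iff.1 hx)
    exact (contDiffAt_glue (isOpen_ball.mem_nhds (mem_ball_zero_iff.2 hxr))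
      (finite_setOf_dyadicBall_inter_ball_nonempty he hr) hbase
      fun k => (hφ k).contDiff).contDiffWithinAt
  · obtain ⟨k, hk⟩ := hne x
    exact glue_eq_of_forall_ne hk ▸ (hφ k).mem x
  · have hsum : ∑' k, gagliardoEnergy p (φ k) ≤ 1 :=
      (ENNReal.tsum_le_tsum fun k => (hφ k).gagliardoEnergy_le).trans hε.le
    exact (gagliardoEnergy_glue_le hp hne fun k => (hφ k).contDiff.continuous).trans_lt
      (ENNReal.mul_lt_top ENNReal.ofReal_lt_top (hsum.trans_lt ENNReal.one_lt_top))
  · refine ENNReal.eq_top_of_forall_nnreal_le fun M => ?_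
    obtain ⟨k, hk⟩ := exists_nat_ge M
    have hU' := (hU.mono (dyadicBall_subset_ball he k)).congr_trace (v' := φ k) fun x hx =>
      glue_eq_of_forall_ne fun i hi => hbase i x fun hxi =>
        (hdisj hi).notMem_of_mem_left hxi hx
    calc (M : ℝ≥0∞) ≤ k := mod_cast hk
      _ ≤ dirichletEnergy p (dyadicBall e k ×ˢ Ioo 0 1) U := (hφ k).le_dirichletEnergy U hU'
      _ ≤ _ := lintegral_mono_set (prod_mono_left (dyadicBall_subset_ball he k))

theorem CollapsingRetraction.exists_contDiffOn_ball [CompleteSpace F] (P : CollapsingRetraction b)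
    (hN : IsCompact N) {l : ℕ} (hpl : (l : ℝ) + 1 < p) (hpE : p < Module.finrank ℝ E + 1)
    (hobstruction : Infinite (HomotopyGroup (Fin (l + 1)) N b) ∨
      p = l + 2 ∧ Nontrivial (HomotopyGroup (Fin (l + 1)) N b)) :
    ∃ u : E → F, ContDiffOn ℝ (⊤ : ℕ∞) u (ball 0 1) ∧ (∀ x, u x ∈ N) ∧ gagliardoEnergy p u < ⊤ ∧
      ∀ U, IsExtension N (ball 0 1) 1 u U → dirichletEnergy p (ball 0 1 ×ˢ Ioo 0 1) U = ⊤ := by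
  have hl : l + 1 ≤ Module.finrank ℝ E := by
    have hlE : (l : ℝ) + 1 < Module.finrank ℝ E + 1 := hpl.trans hpE
    exact Nat.lt_succ_iff.1 (mod_cast hlE)
  obtain ⟨d, hd⟩ := Nat.exists_eq_add_of_le hl
  have hp : 1 < p := by linarith [(l.cast_nonneg : (0 : ℝ) ≤ l)]
  have : Nontrivial E := Module.nontrivial_of_finrank_pos (R := ℝ) (by lia)
  have : (volume : Measure ((Fin l → ℝ) × EuclideanSpace ℝ (Fin (d + 1)))).IsAddHaarMeasure :=
    Measure.prod.instIsAddHaarMeasure _ _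
  let e : ((Fin l → ℝ) × EuclideanSpace ℝ (Fin (d + 1))) ≃L[ℝ] E :=
    ContinuousLinearEquiv.ofFinrankEq (by simp [hd]; ring)
  refine exists_contDiffOn_ball_of_forall_exists_isCell (b := b) (by linarith)
    fun a ρ hρ ε M hε hM => exists_isCell_of_forall_exists_isCell (b := b) (R := 2) e hp.le hpE
      (fun K hK => ?_) a hρ hε hM
  rcases hobstruction with hinf | ⟨hpl', hnon⟩
  · exact P.exists_isCell_of_infinite hN hpl hK
  · exact P.exists_isCell_of_nontrivial hN.isBounded hpl' hK

end Obstruction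

theorem statement2_general {ν : ℕ} {N : Set (EuclideanSpace ℝ (Fin ν))} (hNcpt : IsCompact N)
    (hNsub : IsSmoothSubmanifold N) (b : N) {m : ℕ} {p : ℝ} (hpm : p < m)
    (hobstruction : ∃ l : ℕ, 1 ≤ l ∧ ((l : ℝ) < p ∧ Infinite (HomotopyGroup (Fin l) N b) ∨
      (l : ℝ) + 1 = p ∧ Nontrivial (HomotopyGroup (Fin l) N b))) :
    ∃ u : EuclideanSpace ℝ (Fin (m - 1)) → EuclideanSpace ℝ (Fin ν),
      ContDiffOn ℝ (⊤ : ℕ∞) u (ball 0 1) ∧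
      MapsTo u (ball 0 1) N ∧
      gagliardoE (1 - 1 / p) p (ball 0 1) u < ⊤ ∧
      ∀ U : EuclideanSpace ℝ (Fin (m - 1)) × ℝ → EuclideanSpace ℝ (Fin ν),
        ContinuousOn U (ball 0 1 ×ˢ Ico (0 : ℝ) 1) →
        ContDiffOn ℝ 1 U (ball 0 1 ×ˢ Ioo (0 : ℝ) 1) →
        MapsTo U (ball 0 1 ×ˢ Ico (0 : ℝ) 1) N →
        (∀ x ∈ ball (0 : EuclideanSpace ℝ (Fin (m - 1))) 1, U (x, 0) = u x) →
        (∫⁻ z in ball (0 : EuclideanSpace ℝ (Fin (m - 1))) 1 ×ˢ Ioo (0 : ℝ) 1,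
            ENNReal.ofReal (‖fderiv ℝ U z‖ ^ p)) = ⊤ := by
  obtain ⟨l, hl, hobs⟩ := hobstruction
  obtain ⟨l, rfl⟩ := Nat.exists_eq_add_of_le' hl
  push_cast at hobs
  have hlp : (l : ℝ) + 1 < p := by rcases hobs with ⟨h, -⟩ | ⟨h, -⟩ <;> linarith
  have hp : 0 < p := by linarith [(l.cast_nonneg : (0 : ℝ) ≤ l)]
  have hm : 1 ≤ m := by exact_mod_cast (by linarith [(l.cast_nonneg : (0 : ℝ) ≤ l)] : (1 : ℝ) ≤ m)
  have hpE : p < Module.finrank ℝ (EuclideanSpace ℝ (Fin (m - 1))) + 1 := by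
    rw [finrank_euclideanSpace_fin, Nat.cast_sub hm, Nat.cast_one, sub_add_cancel]
    exact hpm
  obtain ⟨P⟩ := hNsub.nonempty_tubularRetraction hNcpt ⟨b, b.2⟩
  obtain ⟨Q⟩ := P.nonempty_collapsingRetraction hNcpt b
  obtain ⟨u, hu, humem, hgagliardo, hext⟩ := Q.exists_contDiffOn_ball hNcpt hlp hpE
    (hobs.imp And.right fun h => ⟨by linarith [h.1], h.2⟩)
  refine ⟨u, hu, fun x _ => humem x, (gagliardoE_le_gagliardoEnergy hp.ne' _ u).trans_lt hgagliardo,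
    fun U hcont hdiff hmaps htrace => ?_⟩
  simp only [ofReal_norm_rpow hp.le]
  exact hext U ⟨hcont, hdiff, hmaps, htrace⟩

/-- analytical obstruction: if `2 ≤ p < m` and either `π_ℓ(N)` is infinite for
some `1 ≤ ℓ ≤ ⌊p-1⌋`, or `p ∈ ℕ` and `π_{p-1}(N)` is nontrivial, then there is a map
`u : B^{m-1} → N`, smooth on the open ball and with finite `W^{1-1/p,p}` energy, admitting no
finite-energy extension `U : B^{m-1} × [0,1) → N` continuous up to `t = 0` and `C^1` inside. -/
theorem statement2 (ν : ℕ) (hν : 1 ≤ ν) (N : Set (EuclideanSpace ℝ (Fin ν)))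
    (hNcpt : IsCompact N) (hNconn : IsConnected N) (hNsub : IsSmoothSubmanifold N)
    (b : EuclideanSpace ℝ (Fin ν)) (hb : b ∈ N)
    (m : ℕ) (p : ℝ) (hp2 : 2 ≤ p) (hpm : p < m)
    (hobstruction :
      (∃ l : ℕ, 1 ≤ l ∧ (l : ℝ) ≤ p - 1 ∧ Infinite (HomotopyGroup (Fin l) ↥N ⟨b, hb⟩)) ∨
      (∃ k : ℕ, (k : ℝ) = p ∧ Nontrivial (HomotopyGroup (Fin (k - 1)) ↥N ⟨b, hb⟩))) :
    ∃ u : EuclideanSpace ℝ (Fin (m - 1)) → EuclideanSpace ℝ (Fin ν),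
      ContDiffOn ℝ (⊤ : ℕ∞) u (ball 0 1) ∧
      MapsTo u (ball 0 1) N ∧
      gagliardoE (1 - 1 / p) p (ball 0 1) u < ⊤ ∧
      ∀ U : EuclideanSpace ℝ (Fin (m - 1)) × ℝ → EuclideanSpace ℝ (Fin ν),
        ContinuousOn U (ball 0 1 ×ˢ Ico (0 : ℝ) 1) →
        ContDiffOn ℝ 1 U (ball 0 1 ×ˢ Ioo (0 : ℝ) 1) →
        MapsTo U (ball 0 1 ×ˢ Ico (0 : ℝ) 1) N →
        (∀ x ∈ ball (0 : EuclideanSpace ℝ (Fin (m - 1))) 1, U (x, 0) = u x) →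
        (∫⁻ z in ball (0 : EuclideanSpace ℝ (Fin (m - 1))) 1 ×ˢ Ioo (0 : ℝ) 1,
            ENNReal.ofReal (‖fderiv ℝ U z‖ ^ p)) = ⊤ := by
  refine statement2_general hNcpt hNsub ⟨b, hb⟩ hpm ?_
  rcases hobstruction with ⟨l, hl, hlp, hinf⟩ | ⟨k, rfl, hnon⟩
  · exact ⟨l, hl, .inl ⟨by linarith, hinf⟩⟩
  · have hk : 2 ≤ k := mod_cast hp2
    exact ⟨k - 1, by lia, .inr ⟨by rw [← Nat.cast_add_one, Nat.sub_add_cancel (by lia)], hnon⟩⟩
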